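/- arXiv:2001.02470 — 2 statements merged into one kernel-verified Lean document; each statement's English description precedes it below -/
import Mathlib

section
/- Let M be an a-relative generalized Cohen-Macaulay R-module with cd(a,M) > 0. Then for every prime ideal p ∈ Supp_R M with p properly contained in a, the localization M_p is a Cohen-Macaulay R_p-module. -/
/-!
Formalization of a statement from "A theory of relative generalized Cohen-Macaulay modules"
by Divaani-Aazar, Ghanbari Doust, Tousi and Zakeri.

Throughout, `R` is a commutative Noetherian ring and `M` a finitely generated `R`-module.
Conventions used below:
* `locH I i M` is the local cohomology module `H^i_I(M)` (Mathlib's `localCohomology`).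
* Conditions `cd(I,M) = c`, `ara(I,M) = n`, `f_I(M) = f`, `grade(I,M) = r` are expressed by
  the predicates `IsCd`, `IsAra`, `IsFinDim`, `IsGrade`.
* Sequences are given as functions `Fin r → R`; `pSpan M x i = ⟨x_0,…,x_{i-1}⟩M`.
* Koszul (co)homology is defined via the explicit (co)chain complex on the `p`-element
  subsets of `{0,…,n-1}`, and the canonical map `λ^i` into local cohomology is the structure
  map (at exponent 1) into the direct limit of Koszul cohomologies of powers of the sequence,
  which is the realization of `H^i_{⟨x⟩}(M)` used in the paper (2.1(iv)).
-/

open CategoryTheory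

noncomputable section

variable {R : Type} [CommRing R]

/-! ### Local cohomology, cohomological dimension, arithmetic rank -/

/-- The `i`-th local cohomology module `H^i_I(M)`. -/
abbrev locH (I : Ideal R) (i : ℕ) (M : Type) [AddCommGroup M] [Module R M] : ModuleCat R :=
  (localCohomology I i).obj (ModuleCat.of R M)

/-- `cd(I, M) = c`: the cohomological dimension of `I` on `M` equals `c`, i.e.
`H^c_I(M) ≠ 0` and `H^i_I(M) = 0` for all `i > c`. -/
def IsCd (I : Ideal R) (M : Type) [AddCommGroup M] [Module R M] (c : ℕ) : Prop :=
  Nontrivial (locH I c M) ∧ ∀ i : ℕ, c < i → Subsingleton (locH I i M)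

/-- `f_I(M) = f`: the `I`-finiteness dimension of `M` equals `f`, i.e. `f` is the least
integer such that `H^f_I(M)` is not finitely generated. -/
def IsFinDim (I : Ideal R) (M : Type) [AddCommGroup M] [Module R M] (f : ℕ) : Prop :=
  (∀ i : ℕ, i < f → Module.Finite R (locH I i M)) ∧ ¬ Module.Finite R (locH I f M)

/-- `M` is `I`-relative generalized Cohen-Macaulay: `cd(I,M) ≤ 0` or `cd(I,M) = f_I(M)`. -/
def IsRelGCM (I : Ideal R) (M : Type) [AddCommGroup M] [Module R M] : Prop :=
  (∀ i : ℕ, 0 < i → Subsingleton (locH I i M)) ∨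
    ∃ c : ℕ, IsCd I M c ∧ IsFinDim I M c

/-- `ara(I, M) = n`: the arithmetic rank of `I` with respect to `M` equals `n`, i.e. `n` is the
least integer such that there are `x_1, …, x_n ∈ R` with
`Rad(⟨x_1,…,x_n⟩ + Ann M) = Rad(I + Ann M)`. -/
def IsAra (I : Ideal R) (M : Type) [AddCommGroup M] [Module R M] (n : ℕ) : Prop :=
  IsLeast {k : ℕ | ∃ x : Fin k → R,
    (Ideal.span (Set.range x) + Module.annihilator R M).radical
      = (I + Module.annihilator R M).radical} n

/-- `x_1, …, x_c` is an `I`-relative system of parameters of `M` (where `c = cd(I,M)`):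
the `x_i` lie in `I` and `Rad(⟨x_1,…,x_c⟩ + Ann M) = Rad(I + Ann M)`. -/
def IsRsop (I : Ideal R) (M : Type) [AddCommGroup M] [Module R M] {c : ℕ}
    (x : Fin c → R) : Prop :=
  (∀ j, x j ∈ I) ∧
    (Ideal.span (Set.range x) + Module.annihilator R M).radical
      = (I + Module.annihilator R M).radical

/-! ### The natural maps `φ^i_M : Ext^i(R/I, M) → H^i_I(M)` and relative surjective
Buchsbaum modules -/

/-- The `i`-th Ext module `Ext^i_R(R/I, M)`. -/
abbrev extH (I : Ideal R) (i : ℕ) (M : Type) [AddCommGroup M] [Module R M] : ModuleCat R :=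
  ((Ext R (ModuleCat R) i).obj (Opposite.op (ModuleCat.of R (R ⧸ I)))).obj (ModuleCat.of R M)

/-- The natural map `φ^i_M : Ext^i_R(R/I, M) → H^i_I(M)`, i.e. the structure map into the
colimit `H^i_I(M) = colim_n Ext^i_R(R/I^n, M)` at `n = 1`. -/
def phi (I : Ideal R) (i : ℕ) (M : Type) [AddCommGroup M] [Module R M] :
    ((localCohomology.diagram (localCohomology.idealPowersDiagram I) i).obj
        (Opposite.op (Opposite.op (1 : ℕ)))).obj (ModuleCat.of R M) ⟶
      (localCohomology I i).obj (ModuleCat.of R M) :=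
  have := localCohomology.hasColimitDiagram.{0, 0} (localCohomology.idealPowersDiagram I) i
  (Limits.colimit.ι (localCohomology.diagram (localCohomology.idealPowersDiagram I) i)
      (Opposite.op (Opposite.op (1 : ℕ)))).app (ModuleCat.of R M)

/-- `φ^i_M` is surjective. -/
def PhiSurj (I : Ideal R) (i : ℕ) (M : Type) [AddCommGroup M] [Module R M] : Prop :=
  Function.Surjective (phi I i M)

/-- `M` is `I`-relative surjective Buchsbaum: `φ^i_M` is surjective for all `i < cd(I,M)`. -/
def IsRelSurjBuchsbaum (I : Ideal R) (M : Type) [AddCommGroup M] [Module R M] : Prop :=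
  ∀ i : ℕ, (∃ j : ℕ, i < j ∧ Nontrivial (locH I j M)) → PhiSurj I i M

/-- `grade(I, M) = r`: `r` is the least integer with `Ext^r_R(R/I, M) ≠ 0`. -/
def IsGrade (I : Ideal R) (M : Type) [AddCommGroup M] [Module R M] (r : ℕ) : Prop :=
  Nontrivial (extH I r M) ∧ ∀ i : ℕ, i < r → Subsingleton (extH I i M)

/-! ### Height, depth, `λ_I(M)`, the finiteness dimension as an extended natural number,
and Cohen-Macaulay modules over local rings -/

/-- The height of an ideal `I`: the infimum of the heights of the primes containing `I`. -/
noncomputable def idealHeight {S : Type} [CommRing S] (I : Ideal S) : ℕ∞ :=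
  sInf {h : ℕ∞ | ∃ q : PrimeSpectrum S, I ≤ q.asIdeal ∧ h = Order.height q}

/-- The depth of a module `N` over a local ring `A`, characterized à la Rees as the least `k`
with `Ext^k_A(A/m, N) ≠ 0`. -/
noncomputable def depthE (A : Type) [CommRing A] [IsLocalRing A] (N : Type) [AddCommGroup N]
    [Module A N] : ℕ∞ :=
  sInf {d : ℕ∞ | ∃ k : ℕ, d = (k : ℕ∞) ∧
    Nontrivial (extH (IsLocalRing.maximalIdeal A) k N)}

/-- The (Krull) dimension of a module `N` over a ring `A`, as the Krull dimension of
`A / Ann_A N`. -/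
noncomputable def dimE (A : Type) [CommRing A] (N : Type) [AddCommGroup N] [Module A N] :
    WithBot ℕ∞ :=
  ringKrullDim (A ⧸ Module.annihilator A N)

/-- A module `N` over a local ring `A` is Cohen-Macaulay if `depth N = dim N`. -/
def IsCMMod (A : Type) [CommRing A] [IsLocalRing A] (N : Type) [AddCommGroup N]
    [Module A N] : Prop :=
  (depthE A N : WithBot ℕ∞) = dimE A N

/-- The `I`-finiteness dimension `f_I(M)`, as an extended natural number. -/
noncomputable def finDimNE (I : Ideal R) (M : Type) [AddCommGroup M] [Module R M] : ℕ∞ :=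
  sInf {d : ℕ∞ | ∃ k : ℕ, d = (k : ℕ∞) ∧ ¬ Module.Finite R (locH I k M)}

/-- `λ_I(M) := inf { depth M_p + ht((I+p)/p) | p ∈ Spec R \ V(I) }`. -/
noncomputable def lambdaNE (I : Ideal R) (M : Type) [AddCommGroup M] [Module R M] : ℕ∞ :=
  sInf {d : ℕ∞ | ∃ p : PrimeSpectrum R, ¬ I ≤ p.asIdeal ∧
    d = depthE (Localization.AtPrime p.asIdeal) (LocalizedModule p.asIdeal.primeCompl M)
        + idealHeight (Ideal.map (Ideal.Quotient.mk p.asIdeal) I)}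

section helpers

namespace OE

section gen
variable (K : ChainComplex (ModuleCat.{0} R)ᵒᵖ ℕ)

lemma gz_inj (n : ℕ) : Function.Injective (K.pOpcycles n).unop :=
  (ModuleCat.mono_iff_injective _).1 (unop_mono_of_epi _)

lemma gπ_surj (n : ℕ) : Function.Surjective (K.homologyι n).unop :=
  (ModuleCat.epi_iff_surjective _).1 (unop_epi_of_mono _)

lemma g_comp (n : ℕ) : (K.pOpcycles n).unop ≫ (K.d (n+1) n).unop = 0 := by
  rw [← unop_comp, HomologicalComplex.d_pOpcycles]; rfl

lemma g_exists (n : ℕ) (f : (K.X n).unop) (hf : (K.d (n+1) n).unop f = 0) :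
    ∃ z, (K.pOpcycles n).unop z = f := by
  have h := ShortComplex.exact_of_g_is_cokernel (ShortComplex.mk _ _ (K.d_pOpcycles (n+1) n))
    (K.opcyclesIsCokernel (n+1) n (by simp))
  have h2 := h.unop
  rw [ShortComplex.moduleCat_exact_iff] at h2
  exact h2 f hf

lemma g_zero_iff (n : ℕ) (z : (K.opcycles (n+1)).unop) :
    (K.homologyι (n+1)).unop z = 0 ↔ ∃ g, (K.d (n+1) n).unop g = (K.pOpcycles (n+1)).unop z := by
  have h := ShortComplex.exact_of_f_is_kernel
    (ShortComplex.mk _ _ (K.homologyι_comp_fromOpcycles (n+1) n))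
    (K.homologyIsKernel (n+1) n (by simp))
  have h2 := h.unop
  have key2 : ∀ g, (K.pOpcycles (n+1)).unop ((K.fromOpcycles (n+1) n).unop g)
      = (K.d (n+1) n).unop g := by
    intro g
    have : (K.fromOpcycles (n+1) n).unop ≫ (K.pOpcycles (n+1)).unop = (K.d (n+1) n).unop := by
      rw [← unop_comp, HomologicalComplex.p_fromOpcycles]
    exact congrArg (fun f => f.hom g) this
  constructor
  · intro hz
    obtain ⟨g, hg⟩ := (ShortComplex.moduleCat_exact_iff _).1 h2 z hz
    exact ⟨g, (key2 g).symm.trans (congrArg (K.pOpcycles (n+1)).unop hg)⟩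
  · rintro ⟨g, hg⟩
    rw [← key2] at hg
    have := gz_inj K (n+1) hg
    rw [← this]
    have h0 : (K.fromOpcycles (n+1) n).unop ≫ (K.homologyι (n+1)).unop = 0 := by
      rw [← unop_comp, HomologicalComplex.homologyι_comp_fromOpcycles]; rfl
    exact congrArg (fun f => f.hom g) h0

lemma g_inj_zero : Function.Injective (K.homologyι 0).unop := by
  refine (ModuleCat.mono_iff_injective _).1 ?_
  have : IsIso (K.homologyι 0) :=
    inferInstanceAs (IsIso (ChainComplex.isoHomologyι₀ _).hom)
  exact unop_mono_of_epi _

lemma g_nat_p {K' : ChainComplex (ModuleCat.{0} R)ᵒᵖ ℕ} (φ : K' ⟶ K) (n : ℕ)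
    (z : (K.opcycles n).unop) :
    (K'.pOpcycles n).unop ((HomologicalComplex.opcyclesMap φ n).unop z) =
      (φ.f n).unop ((K.pOpcycles n).unop z) := by
  have : (HomologicalComplex.opcyclesMap φ n).unop ≫ (K'.pOpcycles n).unop =
      (K.pOpcycles n).unop ≫ (φ.f n).unop := by
    rw [← unop_comp, HomologicalComplex.p_opcyclesMap]; rfl
  exact congrArg (fun f => f.hom z) this

lemma g_nat_h {K' : ChainComplex (ModuleCat.{0} R)ᵒᵖ ℕ} (φ : K' ⟶ K) (n : ℕ)
    (z : (K.opcycles n).unop) :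
    (K'.homologyι n).unop ((HomologicalComplex.opcyclesMap φ n).unop z) =
      (HomologicalComplex.homologyMap φ n).unop ((K.homologyι n).unop z) := by
  have : (HomologicalComplex.opcyclesMap φ n).unop ≫ (K'.homologyι n).unop =
      (K.homologyι n).unop ≫ (HomologicalComplex.homologyMap φ n).unop := by
    rw [← unop_comp, ← unop_comp, HomologicalComplex.homologyι_naturality]
  exact congrArg (fun f => f.hom z) this

end gen

abbrev OldExt (X Y : ModuleCat.{0} R) (n : ℕ) : ModuleCat.{0} R :=
  ((Ext R (ModuleCat.{0} R) n).obj (Opposite.op X)).obj Y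

abbrev FY (Y : ModuleCat.{0} R) : ModuleCat.{0} R ⥤ (ModuleCat.{0} R)ᵒᵖ :=
  ((linearYoneda R (ModuleCat.{0} R)).obj Y).rightOp

def KC {X : ModuleCat.{0} R} (P : ProjectiveResolution X) (Y : ModuleCat.{0} R) :
    ChainComplex (ModuleCat.{0} R)ᵒᵖ ℕ :=
  ((FY Y).mapHomologicalComplex (ComplexShape.down ℕ)).obj P.complex

variable {X Y : ModuleCat.{0} R} (P : ProjectiveResolution X)

/-- identification of the terms -/
def xEq (Y : ModuleCat.{0} R) (n : ℕ) :
    ((KC P Y).X n).unop ≃ₗ[R] (P.complex.X n ⟶ Y) :=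
  { toFun := fun f => f
    invFun := fun f => f
    map_add' := fun _ _ => rfl
    map_smul' := fun _ _ => rfl
    left_inv := fun _ => rfl
    right_inv := fun _ => rfl }

lemma xEq_d (n : ℕ) (f : ((KC P Y).X n).unop) :
    xEq P Y (n+1) (((KC P Y).d (n+1) n).unop f) = P.complex.d (n+1) n ≫ xEq P Y n f := rfl

abbrev Zc (Y : ModuleCat.{0} R) (n : ℕ) := ((KC P Y).opcycles n).unop

/-- cocycles to Hom -/
def zι (Y : ModuleCat.{0} R) (n : ℕ) : Zc P Y n →ₗ[R] (P.complex.X n ⟶ Y) :=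
  (xEq P Y n).toLinearMap ∘ₗ ((KC P Y).pOpcycles n).unop.hom

/-- the comparison iso -/
def cIso (Y : ModuleCat.{0} R) (n : ℕ) :
    (((KC P Y).homology n).unop : ModuleCat R) ≃ₗ[R] OldExt X Y n :=
  (P.isoLeftDerivedObj (FY Y) n).unop.toLinearEquiv

/-- cocycles to Ext -/
def zπ (Y : ModuleCat.{0} R) (n : ℕ) : Zc P Y n →ₗ[R] OldExt X Y n :=
  (cIso P Y n).toLinearMap ∘ₗ ((KC P Y).homologyι n).unop.hom

lemma zι_inj (n : ℕ) : Function.Injective (zι P Y n) :=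
  (xEq P Y n).injective.comp (gz_inj _ n)

lemma zπ_surj (n : ℕ) : Function.Surjective (zπ P Y n) :=
  (cIso P Y n).surjective.comp (gπ_surj _ n)

lemma zι_d (n : ℕ) (z : Zc P Y n) :
    P.complex.d (n + 1) n ≫ zι P Y n z = 0 := 
  congrArg (fun f => f.hom z) (g_comp (KC P Y) n)

lemma exists_z (n : ℕ) (f : P.complex.X n ⟶ Y) (hf : P.complex.d (n + 1) n ≫ f = 0) :
    ∃ z, zι P Y n z = f :=
  g_exists (KC P Y) n f hf

lemma zπ_eq_zero_iff_succ (n : ℕ) (z : Zc P Y (n+1)) :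
    zπ P Y (n+1) z = 0 ↔ ∃ g : P.complex.X n ⟶ Y, P.complex.d (n+1) n ≫ g = zι P Y (n+1) z := by
  have : zπ P Y (n+1) z = 0 ↔ ((KC P Y).homologyι (n+1)).unop z = 0 :=
    (cIso P Y (n+1)).map_eq_zero_iff
  rw [this]
  exact g_zero_iff (KC P Y) n z

lemma zπ_inj_zero : Function.Injective (zπ P Y 0) :=
  (cIso P Y 0).injective.comp (g_inj_zero _)

lemma natY {Y' : ModuleCat.{0} R} (g : Y ⟶ Y') (n : ℕ) (z) (z')
    (h : zι P Y' n z' = zι P Y n z ≫ g) :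
    ((Ext R (ModuleCat.{0} R) n).obj (Opposite.op X)).map g (zπ P Y n z) = zπ P Y' n z' := by
  let α : FY Y' ⟶ FY Y := NatTrans.rightOp ((linearYoneda R (ModuleCat.{0} R)).map g)
  let φ : KC P Y' ⟶ KC P Y := ((NatTrans.mapHomologicalComplex α (ComplexShape.down ℕ)).app P.complex)
  have e1 : ((Ext R (ModuleCat.{0} R) n).obj (Opposite.op X)).map g =
      ((NatTrans.leftDerived α n).app X).unop := rfl
  have e2 : (P.isoLeftDerivedObj (FY Y) n).hom.unop ≫ ((NatTrans.leftDerived α n).app X).unop =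
      (HomologicalComplex.homologyMap φ n).unop ≫ (P.isoLeftDerivedObj (FY Y') n).hom.unop := by
    have : (NatTrans.leftDerived α n).app X ≫ (P.isoLeftDerivedObj (FY Y) n).hom =
        (P.isoLeftDerivedObj (FY Y') n).hom ≫ (HomologicalComplex.homologyFunctor _ _ n).map
          ((NatTrans.mapHomologicalComplex α (ComplexShape.down ℕ)).app P.complex) := by
      rw [P.leftDerived_app_eq]
      simp only [Category.assoc, Iso.inv_hom_id, Category.comp_id]
    exact congrArg Quiver.Hom.unop this
  have e3 : (HomologicalComplex.opcyclesMap φ n).unop z = z' := by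
    apply zι_inj
    rw [h]
    exact g_nat_p (KC P Y) φ n z
  rw [e1, ← e3]
  have e4 := g_nat_h (KC P Y) φ n z
  have e5 := congrArg (fun f => f.hom (((KC P Y).homologyι n).unop z)) e2
  refine Eq.trans e5 ?_
  exact congrArg (P.isoLeftDerivedObj (FY Y') n).hom.unop e4.symm

lemma natX {X' : ModuleCat.{0} R} (P' : ProjectiveResolution X') (f : X' ⟶ X)
    (φ : P'.complex ⟶ P.complex) (comm : φ.f 0 ≫ P.π.f 0 = P'.π.f 0 ≫ f) (n : ℕ) (z) (z')
    (h : zι P' Y n z' = φ.f n ≫ zι P Y n z) :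
    ((Ext R (ModuleCat.{0} R) n).map f.op).app Y (zπ P Y n z) = zπ P' Y n z' := by
  have e1 : ((Ext R (ModuleCat.{0} R) n).map f.op).app Y = (((FY Y).leftDerived n).map f).unop := rfl
  let ψ : KC P' Y ⟶ KC P Y := ((FY Y).mapHomologicalComplex (ComplexShape.down ℕ)).map φ
  have e2 : (P.isoLeftDerivedObj (FY Y) n).hom.unop ≫ (((FY Y).leftDerived n).map f).unop =
      (HomologicalComplex.homologyMap ψ n).unop ≫ (P'.isoLeftDerivedObj (FY Y) n).hom.unop := by
    exact congrArg Quiver.Hom.unop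
      (ProjectiveResolution.isoLeftDerivedObj_hom_naturality f P' P φ comm (FY Y) n)
  have e3 : (HomologicalComplex.opcyclesMap ψ n).unop z = z' := by
    apply zι_inj
    rw [h]
    exact g_nat_p (KC P Y) ψ n z
  rw [e1, ← e3]
  have e4 := g_nat_h (KC P Y) ψ n z
  have e5 := congrArg (fun f => f.hom (((KC P Y).homologyι n).unop z)) e2
  refine Eq.trans e5 ?_
  exact congrArg (P'.isoLeftDerivedObj (FY Y) n).hom.unop e4.symm

end OE


namespace OE
open Abelian

section
variable {X Y : ModuleCat.{0} R} (P : ProjectiveResolution X)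

lemma extMk_zero_iff₀ (f : P.complex.X 0 ⟶ Y) (hf : P.complex.d 1 0 ≫ f = 0) :
    P.extMk f 1 rfl hf = 0 ↔ f = 0 := by
  have hz : Limits.IsZero (P.cochainComplex.X (1 : ℤ)) :=
    CochainComplex.isZero_of_isStrictlyLE _ 0 _ (by lia)
  simp only [← P.extEquivCohomologyClass.apply_eq_iff_eq,
    ProjectiveResolution.extEquivCohomologyClass_extMk,
    ProjectiveResolution.extEquivCohomologyClass_zero,
    CochainComplex.HomComplex.CohomologyClass.mk_eq_zero_iff]
  rw [CochainComplex.HomComplex.Cocycle.toSingleMk_mem_coboundaries_iff _ _ _ _ _ 1 (by simp)]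
  constructor
  · rintro ⟨g, hg⟩
    rw [hz.eq_of_src g 0, Limits.comp_zero] at hg
    rw [← cancel_epi (P.cochainComplexXIso (-(0:ℕ)) 0 rfl).hom]
    rw [← hg, Limits.comp_zero]
  · rintro rfl
    exact ⟨0, by simp⟩

/-- cocycles to new Ext -/
def zMk (Y : ModuleCat.{0} R) (n : ℕ) : Zc P Y n →+ Abelian.Ext X Y n where
  toFun z := P.extMk (zι P Y n z) (n+1) rfl (zι_d P n z)
  map_zero' := by
    have : ∀ (f : P.complex.X n ⟶ Y) (hf), f = 0 → P.extMk f (n+1) rfl hf = 0 := by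
      rintro f hf rfl
      exact P.extMk_zero _ _
    exact this _ _ (map_zero _)
  map_add' z z' := by
    have : ∀ (f g h : P.complex.X n ⟶ Y) (hf) (hg) (hh), h = f + g → P.extMk h (n+1) rfl hh = 
      P.extMk f (n+1) rfl hf + P.extMk g (n+1) rfl hg := by
      rintro f g h hf hg hh rfl
      rw [P.add_extMk]
    exact this _ _ _ _ _ _ (map_add _ _ _)

lemma zMk_apply (n : ℕ) (z) : zMk P Y n z = P.extMk (zι P Y n z) (n+1) rfl (zι_d P n z) := rfl

lemma zMk_surj (n : ℕ) : Function.Surjective (zMk P Y n) := by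
  intro α
  obtain ⟨f, hf, rfl⟩ := P.extMk_surjective α (n+1) rfl
  obtain ⟨z, rfl⟩ := exists_z P n f hf
  exact ⟨z, rfl⟩

lemma zMk_eq_zero_iff (n : ℕ) (z) : zMk P Y n z = 0 ↔ zπ P Y n z = 0 := by
  cases n with
  | zero =>
    rw [map_eq_zero_iff _ (zπ_inj_zero P)]
    refine (extMk_zero_iff₀ P _ (zι_d P 0 z)).trans ?_
    exact map_eq_zero_iff _ (zι_inj P 0)
  | succ n =>
    rw [zπ_eq_zero_iff_succ]
    exact P.extMk_eq_zero_iff _ _ rfl (zι_d P (n+1) z) n rfl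

end

/-- comparison -/
def oldnew (X Y : ModuleCat.{0} R) (n : ℕ) : OldExt X Y n ≃+ Abelian.Ext X Y n :=
  ((QuotientAddGroup.quotientKerEquivOfSurjective (zπ (projectiveResolution X) Y n).toAddMonoidHom
    (zπ_surj _ n)).symm.trans (QuotientAddGroup.quotientAddEquivOfEq (by
      ext z; exact (zMk_eq_zero_iff _ n z).symm))).trans
    (QuotientAddGroup.quotientKerEquivOfSurjective (zMk (projectiveResolution X) Y n)
      (zMk_surj _ n))

lemma oldnew_apply (X Y : ModuleCat.{0} R) (n : ℕ) (z) :
    oldnew X Y n (zπ (projectiveResolution X) Y n z) = zMk (projectiveResolution X) Y n z := by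
  have : (QuotientAddGroup.quotientKerEquivOfSurjective
      (zπ (projectiveResolution X) Y n).toAddMonoidHom (zπ_surj _ n)).symm
        (zπ (projectiveResolution X) Y n z) = QuotientAddGroup.mk z := by
    rw [AddEquiv.symm_apply_eq]; rfl
  unfold oldnew
  rw [AddEquiv.trans_apply, AddEquiv.trans_apply, this]
  rfl

lemma oldnew_natY (X : ModuleCat.{0} R) {Y Y' : ModuleCat.{0} R} (g : Y ⟶ Y') (n : ℕ)
    (e : OldExt X Y n) :
    oldnew X Y' n (((Ext R (ModuleCat.{0} R) n).obj (Opposite.op X)).map g e) =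
      (oldnew X Y n e).comp (Abelian.Ext.mk₀ g) (add_zero n) := by
  obtain ⟨z, rfl⟩ := zπ_surj (projectiveResolution X) n e
  obtain ⟨z', hz'⟩ := exists_z (projectiveResolution X) n (zι (projectiveResolution X) Y n z ≫ g)
    (by rw [← Category.assoc, zι_d, Limits.zero_comp])
  rw [natY _ g n z z' hz', oldnew_apply, oldnew_apply]
  rw [zMk_apply, zMk_apply, ProjectiveResolution.extMk_comp_mk₀]
  congr 1

lemma oldnew_natX {X X' : ModuleCat.{0} R} (Y : ModuleCat.{0} R) (f : X' ⟶ X) (n : ℕ)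
    (e : OldExt X Y n) :
    oldnew X' Y n (((Ext R (ModuleCat.{0} R) n).map f.op).app Y e) =
      (Abelian.Ext.mk₀ f).comp (oldnew X Y n e) (zero_add n) := by
  obtain ⟨z, rfl⟩ := zπ_surj (projectiveResolution X) n e
  let φ := ProjectiveResolution.lift f (projectiveResolution X') (projectiveResolution X)
  have comm := ProjectiveResolution.lift_commutes_zero f
    (projectiveResolution X') (projectiveResolution X)
  obtain ⟨z', hz'⟩ := exists_z (projectiveResolution X') n
    (φ.f n ≫ zι (projectiveResolution X) Y n z)
    (by rw [← Category.assoc, ← φ.comm, Category.assoc, zι_d, Limits.comp_zero])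
  rw [natX _ _ f φ comm n z z' hz', oldnew_apply, oldnew_apply]
  rw [zMk_apply, zMk_apply, ProjectiveResolution.mk₀_comp_extMk (φ := ⟨φ, by simpa using comm⟩)]
  congr 1

lemma oldnew_smul (X Y : ModuleCat.{0} R) (n : ℕ) (r : R) (e : OldExt X Y n) :
    oldnew X Y n (r • e) = r • oldnew X Y n e := by
  obtain ⟨z, rfl⟩ := zπ_surj (projectiveResolution X) n e
  rw [← map_smul, oldnew_apply, oldnew_apply, Abelian.Ext.smul_eq_comp_mk₀]
  rw [zMk_apply, zMk_apply, ProjectiveResolution.extMk_comp_mk₀]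
  congr 1
  rw [map_smul, Linear.comp_smul, Category.comp_id]

end OE


namespace OE
open Abelian

/-- R/I^n -/
abbrev Qn (I : Ideal R) (n : ℕ) : ModuleCat.{0} R := ModuleCat.of R (R ⧸ I ^ n)

/-- transition -/
abbrev tr (I : Ideal R) {n n' : ℕ} (h : n ≤ n') : Qn I n' ⟶ Qn I n :=
  ModuleCat.ofHom (Submodule.mapQ _ _ LinearMap.id (Ideal.pow_le_pow_right h))

abbrev LC (I : Ideal R) (i : ℕ) (Y : ModuleCat.{0} R) : ModuleCat.{0} R :=
  (localCohomology I i).obj Y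

/-- the diagram -/
abbrev dg (I : Ideal R) (i : ℕ) : ℕᵒᵖᵒᵖ ⥤ ModuleCat.{0} R ⥤ ModuleCat.{0} R :=
  localCohomology.diagram (localCohomology.idealPowersDiagram I) i

lemma hcd (I : Ideal R) (i : ℕ) : Limits.HasColimit (dg I i) :=
  localCohomology.hasColimitDiagram.{0, 0} (localCohomology.idealPowersDiagram I) i

def lcι (I : Ideal R) (i n : ℕ) (Y : ModuleCat.{0} R) : OldExt (Qn I n) Y i ⟶ LC I i Y :=
  have := hcd I i
  (Limits.colimit.ι (dg I i) (Opposite.op (Opposite.op n))).app Y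

lemma lcι_natY (I : Ideal R) (i n : ℕ) {Y Y' : ModuleCat.{0} R} (g : Y ⟶ Y') :
    lcι I i n Y ≫ (localCohomology I i).map g =
      ((Ext R (ModuleCat.{0} R) i).obj (Opposite.op (Qn I n))).map g ≫ lcι I i n Y' := by
  have := hcd I i
  exact ((Limits.colimit.ι (dg I i) (Opposite.op (Opposite.op n))).naturality g).symm

lemma lcι_tr (I : Ideal R) (i : ℕ) {n n' : ℕ} (h : n ≤ n') (Y : ModuleCat.{0} R) :
    ((Ext R (ModuleCat.{0} R) i).map (tr I h).op).app Y ≫ lcι I i n' Y = lcι I i n Y := by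
  have := hcd I i
  exact congrArg (fun a => a.app Y) (Limits.colimit.w (dg I i) (homOfLE h).op.op)

/-- evaluated colimit -/
def evCol (I : Ideal R) (i : ℕ) (Y : ModuleCat.{0} R) :
    have := hcd I i
    Limits.IsColimit (((evaluation _ _).obj Y).mapCocone (Limits.colimit.cocone (dg I i))) :=
  have := hcd I i
  Limits.isColimitOfPreserves ((evaluation _ _).obj Y) (Limits.colimit.isColimit (dg I i))

lemma lcι_rep (I : Ideal R) (i : ℕ) (Y : ModuleCat.{0} R) (x : LC I i Y) :
    ∃ n e, lcι I i n Y e = x := by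
  have := hcd I i
  obtain ⟨j, y, hy⟩ := Limits.Concrete.isColimit_exists_rep _ (evCol I i Y) x
  exact ⟨j.unop.unop, y, hy⟩

lemma lcι_zero (I : Ideal R) (i n : ℕ) (Y : ModuleCat.{0} R) (e : OldExt (Qn I n) Y i)
    (h : lcι I i n Y e = 0) :
    ∃ (n' : ℕ) (hn : n ≤ n'), ((Ext R (ModuleCat.{0} R) i).map (tr I hn).op).app Y e = 0 := by
  have := hcd I i
  have h2 : lcι I i n Y e = lcι I i n Y 0 := by rw [h, map_zero]
  obtain ⟨k, f, g, hfg⟩ := Limits.Concrete.isColimit_exists_of_rep_eq.{0} _ (evCol I i Y)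
    (i := Opposite.op (Opposite.op n)) (j := Opposite.op (Opposite.op n)) e 0 h2
  refine ⟨k.unop.unop, leOfHom f.unop.unop, ?_⟩
  refine Eq.trans hfg (map_zero _)

/-- the map from new Ext to local cohomology -/
def hι (I : Ideal R) (i n : ℕ) (Y : ModuleCat.{0} R) : Abelian.Ext (Qn I n) Y i →+ LC I i Y :=
  (lcι I i n Y).hom.toAddMonoidHom.comp (oldnew (Qn I n) Y i).symm.toAddMonoidHom

lemma hι_oldnew (I : Ideal R) (i n : ℕ) (Y : ModuleCat.{0} R) (e) :
    hι I i n Y (oldnew (Qn I n) Y i e) = lcι I i n Y e := by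
  simp [hι]

lemma hι_rep (I : Ideal R) (i : ℕ) (Y : ModuleCat.{0} R) (x : LC I i Y) :
    ∃ n e, hι I i n Y e = x := by
  obtain ⟨n, e, rfl⟩ := lcι_rep I i Y x
  exact ⟨n, _, hι_oldnew I i n Y e⟩

lemma hι_natY (I : Ideal R) (i n : ℕ) {Y Y' : ModuleCat.{0} R} (g : Y ⟶ Y') (e) :
    (localCohomology I i).map g (hι I i n Y e) =
      hι I i n Y' (e.comp (Ext.mk₀ g) (add_zero i)) := by
  obtain ⟨e, rfl⟩ := (oldnew (Qn I n) Y i).surjective e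
  rw [← oldnew_natY, hι_oldnew, hι_oldnew]
  exact congrArg (fun f => f.hom e) (lcι_natY I i n g)

lemma hι_tr (I : Ideal R) (i : ℕ) {n n' : ℕ} (h : n ≤ n') (Y : ModuleCat.{0} R) (e) :
    hι I i n' Y ((Ext.mk₀ (tr I h)).comp e (zero_add i)) = hι I i n Y e := by
  obtain ⟨e, rfl⟩ := (oldnew (Qn I n) Y i).surjective e
  rw [← oldnew_natX, hι_oldnew, hι_oldnew]
  exact congrArg (fun f => f.hom e) (lcι_tr I i h Y)

lemma hι_zero (I : Ideal R) (i n : ℕ) (Y : ModuleCat.{0} R) (e) (h : hι I i n Y e = 0) :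
    ∃ (n' : ℕ) (hn : n ≤ n'), (Ext.mk₀ (tr I hn)).comp e (zero_add i) = 0 := by
  obtain ⟨e, rfl⟩ := (oldnew (Qn I n) Y i).surjective e
  rw [hι_oldnew] at h
  obtain ⟨n', hn, h⟩ := lcι_zero I i n Y e h
  refine ⟨n', hn, ?_⟩
  rw [← oldnew_natX, h, map_zero]

lemma hι_smul (I : Ideal R) (i n : ℕ) (Y : ModuleCat.{0} R) (r : R) (e) :
    hι I i n Y (r • e) = r • hι I i n Y e := by
  obtain ⟨e, rfl⟩ := (oldnew (Qn I n) Y i).surjective e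
  rw [← oldnew_smul, hι_oldnew, hι_oldnew, map_smul]

end OE


namespace OE
open Abelian

section
variable (I : Ideal R) (i : ℕ)

/-- descent -/
lemma lc_desc (Y : ModuleCat.{0} R) {Z : Type} [AddCommGroup Z] [Module R Z]
    (φ : ∀ n, Abelian.Ext (Qn I n) Y i →+ Z)
    (htr : ∀ n n' (h : n ≤ n') e, φ n' ((Ext.mk₀ (tr I h)).comp e (zero_add i)) = φ n e)
    (hs : ∀ n (r : R) e, φ n (r • e) = r • φ n e) :
    ∃ D : LC I i Y →ₗ[R] Z, ∀ n e, D (hι I i n Y e) = φ n e := by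
  have wd : ∀ n n' e e', hι I i n Y e = hι I i n' Y e' → φ n e = φ n' e' := by
    intro n n' e e' h
    rw [← hι_tr I i (le_max_left n n'), ← hι_tr I i (le_max_right n n'), ← sub_eq_zero,
      ← map_sub] at h
    obtain ⟨m, hm, h0⟩ := hι_zero I i _ Y _ h
    rw [← htr _ _ (le_max_left n n'), ← htr _ _ (le_max_right n n') e', ← sub_eq_zero, ← map_sub,
      ← htr _ _ hm, h0, map_zero]
  choose N E hE using hι_rep I i Y
  have key : ∀ n e, φ (N (hι I i n Y e)) (E (hι I i n Y e)) = φ n e :=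
    fun n e => wd _ _ _ _ (hE _)
  refine ⟨{ toFun := fun x => φ (N x) (E x), map_add' := ?_, map_smul' := ?_ }, key⟩
  · intro x y
    conv_lhs => rw [← hE x, ← hE y]
    rw [← hι_tr I i (le_max_left (N x) (N y)), ← hι_tr I i (le_max_right (N x) (N y)) _ (E y),
      ← map_add, key, map_add, htr, htr]
  · intro r x
    conv_lhs => rw [← hE x]
    rw [← hι_smul, key, hs]; rfl

/-- functoriality on plain modules -/
def Hm {X Y : Type} [AddCommGroup X] [Module R X] [AddCommGroup Y] [Module R Y]
    (f : X →ₗ[R] Y) : locH I i X →ₗ[R] locH I i Y :=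
  ((localCohomology I i).map (ModuleCat.ofHom f)).hom

variable {X Y Z : Type} [AddCommGroup X] [Module R X] [AddCommGroup Y] [Module R Y]
  [AddCommGroup Z] [Module R Z]

lemma Hm_ι (f : X →ₗ[R] Y) (n : ℕ) (e) : Hm I i f (hι I i n (ModuleCat.of R X) e) =
    hι I i n (ModuleCat.of R Y) (e.comp (Ext.mk₀ (ModuleCat.ofHom f)) (add_zero i)) :=
  hι_natY I i n _ e

lemma Hm_id : Hm I i (LinearMap.id : X →ₗ[R] X) = LinearMap.id := by
  unfold Hm
  rw [ModuleCat.ofHom_id, CategoryTheory.Functor.map_id]; rfl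

lemma Hm_comp (g : Y →ₗ[R] Z) (f : X →ₗ[R] Y) : Hm I i (g ∘ₗ f) = Hm I i g ∘ₗ Hm I i f := by
  unfold Hm
  rw [ModuleCat.ofHom_comp, CategoryTheory.Functor.map_comp]; rfl

lemma Hm_smul_id (r : R) : Hm I i (r • (LinearMap.id : X →ₗ[R] X)) = r • LinearMap.id := by
  ext x
  obtain ⟨n, e, rfl⟩ := hι_rep I i _ x
  rw [Hm_ι]
  have : ModuleCat.ofHom (r • (LinearMap.id : X →ₗ[R] X)) = r • 𝟙 (ModuleCat.of R X) := rfl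
  rw [this, ← Ext.smul_eq_comp_mk₀, hι_smul]
  rfl

lemma lc_torsion (x : locH I i X) : ∃ n, ∀ a ∈ I ^ n, a • x = 0 := by
  obtain ⟨n, e, rfl⟩ := hι_rep I i _ x
  refine ⟨n, fun a ha => ?_⟩
  have h0 : a • 𝟙 (Qn I n) = 0 := by
    ext
    change a • (1 : R ⧸ I ^ n) = 0
    rw [Algebra.smul_def, mul_one]
    exact Ideal.Quotient.eq_zero_iff_mem.2 ha
  rw [← hι_smul, ← Ext.mk₀_id_comp e, ← Ext.smul_comp, ← Ext.mk₀_smul, h0, Ext.mk₀_zero,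
    Ext.zero_comp, map_zero]

set_option maxHeartbeats 1000000 in
/-- long exact sequence -/
lemma lc_les (f : X →ₗ[R] Y) (g : Y →ₗ[R] Z) (hf : Function.Injective f)
    (hg : Function.Surjective g) (hfg : Function.Exact f g) :
    Function.Exact (Hm I i f) (Hm I i g) ∧
    ∃ δ : locH I i Z →ₗ[R] locH I (i+1) X,
      Function.Exact (Hm I i g) δ ∧ Function.Exact δ (Hm I (i+1) f) := by
  let S : ShortComplex (ModuleCat.{0} R) := ShortComplex.mk (ModuleCat.ofHom f) (ModuleCat.ofHom g)
    (by ext x; exact hfg.apply_apply_eq_zero x)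
  have hS : S.ShortExact :=
    { exact := (ShortComplex.ShortExact.moduleCat_exact_iff_function_exact _).2 hfg
      mono_f := (ModuleCat.mono_iff_injective _).2 hf
      epi_g := (ModuleCat.epi_iff_surjective _).2 hg }
  have hcomp : ∀ x, Hm I i g (Hm I i f x) = 0 := by
    intro x
    rw [← LinearMap.comp_apply, ← Hm_comp, hfg.linearMap_comp_eq_zero]
    have : (0 : X →ₗ[R] Z) = 0 ∘ₗ ((0 : R) • LinearMap.id) := by simp
    rw [this, Hm_comp, Hm_smul_id]; simp
  refine ⟨?_, ?_⟩
  · intro y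
    refine ⟨fun h => ?_, ?_⟩
    · obtain ⟨n, e, rfl⟩ := hι_rep I i _ y
      rw [Hm_ι] at h
      obtain ⟨n', hn, h0⟩ := hι_zero _ _ _ _ _ h
      rw [← Ext.comp_assoc_of_third_deg_zero] at h0
      obtain ⟨e', he'⟩ := Ext.covariant_sequence_exact₂ (Qn I n') hS _ h0
      refine ⟨hι I i n' (ModuleCat.of R X) e', ?_⟩
      rw [Hm_ι, ← hι_tr I i hn, ← he']
    · rintro ⟨x, rfl⟩
      exact hcomp x
  · obtain ⟨δ, hδ⟩ := lc_desc I i (ModuleCat.of R Z) (Z := locH I (i+1) X)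
      (fun n => (hι I (i+1) n (ModuleCat.of R X)).comp (hS.extClass.postcomp _ rfl)) (by
        intro n n' h e
        change hι I (i+1) n' (ModuleCat.of R X) (((Ext.mk₀ (tr I h)).comp e (zero_add i)).comp
          hS.extClass rfl) = hι I (i+1) n (ModuleCat.of R X) (e.comp hS.extClass rfl)
        rw [← hι_tr I (i+1) h, Ext.comp_assoc]
        lia) (by
        intro n r e
        change hι I (i+1) n (ModuleCat.of R X) ((r • e).comp hS.extClass rfl) = 
          r • hι I (i+1) n (ModuleCat.of R X) (e.comp hS.extClass rfl)
        rw [Ext.smul_comp, hι_smul])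
    have hδ' : ∀ n e, δ (hι I i n (ModuleCat.of R Z) e) =
        hι I (i+1) n (ModuleCat.of R X) (e.comp hS.extClass rfl) := hδ
    refine ⟨δ, ?_, ?_⟩
    · intro z
      refine ⟨fun h => ?_, ?_⟩
      · obtain ⟨n, e, rfl⟩ := hι_rep I i _ z
        rw [hδ'] at h
        obtain ⟨n', hn, h0⟩ := hι_zero _ _ _ _ _ h
        rw [← Ext.comp_assoc (h₁₂ := zero_add i) (h := by lia)] at h0
        obtain ⟨e', he'⟩ := Ext.covariant_sequence_exact₃ (Qn I n') hS _ rfl h0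
        refine ⟨hι I i n' (ModuleCat.of R Y) e', ?_⟩
        rw [Hm_ι, ← hι_tr I i hn, ← he']
      · rintro ⟨y, rfl⟩
        obtain ⟨n, e, rfl⟩ := hι_rep I i _ y
        rw [Hm_ι, hδ', Ext.comp_assoc_of_second_deg_zero]
        have : (Ext.mk₀ (ModuleCat.ofHom g)).comp hS.extClass (zero_add 1) = 0 := hS.comp_extClass
        rw [this, Ext.comp_zero, map_zero]
    · intro x
      refine ⟨fun h => ?_, ?_⟩
      · obtain ⟨n, e, rfl⟩ := hι_rep I (i+1) _ x
        rw [Hm_ι] at h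
        obtain ⟨n', hn, h0⟩ := hι_zero _ _ _ _ _ h
        rw [← Ext.comp_assoc_of_third_deg_zero] at h0
        obtain ⟨e', he'⟩ := Ext.covariant_sequence_exact₁ (Qn I n') hS _ h0 rfl
        refine ⟨hι I i n' (ModuleCat.of R Z) e', ?_⟩
        rw [hδ', ← hι_tr I (i+1) hn, ← he']
      · rintro ⟨y, rfl⟩
        obtain ⟨n, e, rfl⟩ := hι_rep I i _ y
        rw [hδ', Hm_ι, Ext.comp_assoc_of_third_deg_zero]
        have : hS.extClass.comp (Ext.mk₀ (ModuleCat.ofHom f)) (add_zero 1) = 0 := hS.extClass_comp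
        rw [this, Ext.comp_zero, map_zero]

lemma lc_inj₀ (f : X →ₗ[R] Y) (hf : Function.Injective f) : Function.Injective (Hm I 0 f) := by
  rw [injective_iff_map_eq_zero]
  intro x h
  obtain ⟨n, e, rfl⟩ := hι_rep I 0 _ x
  rw [Hm_ι] at h
  obtain ⟨n', hn, h0⟩ := hι_zero _ _ _ _ _ h
  rw [← Ext.comp_assoc_of_third_deg_zero] at h0
  have : Mono (ModuleCat.ofHom f) := (ModuleCat.mono_iff_injective _).2 hf
  have := Ext.postcomp_mk₀_injective_of_mono (Qn I n') (ModuleCat.ofHom f)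
    (a₁ := (Ext.mk₀ (tr I hn)).comp e (zero_add 0)) (a₂ := 0) (by rw [map_zero]; exact h0)
  rw [← hι_tr I 0 hn, this, map_zero]

lemma lc_injective (E : ModuleCat.{0} R) [Injective E] : Subsingleton (LC I (i+1) E) := by
  refine ⟨fun x y => ?_⟩
  obtain ⟨n, e, rfl⟩ := hι_rep I (i+1) _ x
  obtain ⟨n', e', rfl⟩ := hι_rep I (i+1) _ y
  rw [Ext.eq_zero_of_injective e, Ext.eq_zero_of_injective e', map_zero, map_zero]

lemma lc_theta_exists (X : Type) [AddCommGroup X] [Module R X] : ∃ θ : locH I 0 X →ₗ[R] X,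
    ∀ n (f : Qn I n ⟶ ModuleCat.of R X), θ (hι I 0 n _ (Ext.mk₀ f)) = f.hom (1 : R ⧸ I ^ n) := by
  obtain ⟨D, hD⟩ := lc_desc I 0 (ModuleCat.of R X) (Z := X)
    (fun n => { toFun := fun e => (Ext.addEquiv₀ e).hom (1 : R ⧸ I ^ n)
                map_zero' := by rw [map_zero]; rfl
                map_add' := fun a b => by rw [map_add]; rfl }) (by
      intro n n' h e
      obtain ⟨f, rfl⟩ := (Ext.mk₀_bijective _ _).2 e
      have h1 : ∀ n (f : Qn I n ⟶ ModuleCat.of R X), Ext.addEquiv₀ (Ext.mk₀ f) = f :=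
        fun n f => Ext.addEquiv₀.right_inv f
      rw [Ext.mk₀_comp_mk₀]
      change (Ext.addEquiv₀ (Ext.mk₀ (tr I h ≫ f))).hom _ = (Ext.addEquiv₀ (Ext.mk₀ f)).hom _
      rw [h1, h1]; rfl) (by
      intro n r e
      obtain ⟨f, rfl⟩ := (Ext.mk₀_bijective _ _).2 e
      have h1 : ∀ n (f : Qn I n ⟶ ModuleCat.of R X), Ext.addEquiv₀ (Ext.mk₀ f) = f :=
        fun n f => Ext.addEquiv₀.right_inv f
      rw [← Ext.mk₀_smul]
      change (Ext.addEquiv₀ (Ext.mk₀ (r • f))).hom _ = r • (Ext.addEquiv₀ (Ext.mk₀ f)).hom _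
      rw [h1, h1]; rfl)
  refine ⟨D, fun n f => ?_⟩
  rw [hD]
  exact congrArg (fun f => f.hom (1 : R ⧸ I ^ n)) (Ext.addEquiv₀.right_inv f)

/-- `H^0_I(X) → X` -/
def theta (X : Type) [AddCommGroup X] [Module R X] : locH I 0 X →ₗ[R] X :=
  (lc_theta_exists I X).choose

lemma theta_ι (n) (f : Qn I n ⟶ ModuleCat.of R X) :
    theta I X (hι I 0 n _ (Ext.mk₀ f)) = f.hom (1 : R ⧸ I ^ n) :=
  (lc_theta_exists I X).choose_spec n f

lemma theta_nat (f : X →ₗ[R] Y) (x) : theta I Y (Hm I 0 f x) = f (theta I X x) := by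
  obtain ⟨n, e, rfl⟩ := hι_rep I 0 _ x
  obtain ⟨g, rfl⟩ := (Ext.mk₀_bijective _ _).2 e
  rw [Hm_ι, Ext.mk₀_comp_mk₀, theta_ι, theta_ι]; rfl

lemma theta_inj : Function.Injective (theta I X) := by
  rw [injective_iff_map_eq_zero]
  intro x h
  obtain ⟨n, e, rfl⟩ := hι_rep I 0 _ x
  obtain ⟨g, rfl⟩ := (Ext.mk₀_bijective _ _).2 e
  rw [theta_ι] at h
  have : g = 0 := by
    ext
    exact h
  rw [this, Ext.mk₀_zero, map_zero]

lemma theta_range (y : X) (n : ℕ) (h : ∀ a ∈ I ^ n, a • y = 0) : ∃ x, theta I X x = y := by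
  refine ⟨hι I 0 n _ (Ext.mk₀ (ModuleCat.ofHom
    (Submodule.liftQ (I ^ n) (LinearMap.toSpanSingleton R X y) (fun a ha => ?_)))), ?_⟩
  · simpa using h a ha
  · rw [theta_ι]
    change LinearMap.toSpanSingleton R X y 1 = y
    simp

end
end OE


namespace OE
open Abelian

/-- I-torsion -/
def IsTors (I : Ideal R) (X : Type) [AddCommGroup X] [Module R X] : Prop :=
  ∀ x : X, ∃ n : ℕ, ∀ a ∈ I ^ n, a • x = 0

/-- torsion submodule -/
def Gam (I : Ideal R) (X : Type) [AddCommGroup X] [Module R X] : Submodule R X where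
  carrier := {x | ∃ n : ℕ, ∀ a ∈ I ^ n, a • x = 0}
  zero_mem' := ⟨0, by simp⟩
  add_mem' := by
    rintro x y ⟨n, hn⟩ ⟨m, hm⟩
    refine ⟨max n m, fun a ha => ?_⟩
    rw [smul_add, hn a (Ideal.pow_le_pow_right (le_max_left _ _) ha),
      hm a (Ideal.pow_le_pow_right (le_max_right _ _) ha), add_zero]
  smul_mem' := by
    rintro r x ⟨n, hn⟩
    refine ⟨n, fun a ha => ?_⟩
    rw [smul_comm, hn a ha, smul_zero]

lemma inj_ext {E A B : Type} [AddCommGroup E] [Module R E] [AddCommGroup A] [Module R A]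
    [AddCommGroup B] [Module R B] [Module.Injective R E] (φ : A →ₗ[R] B) (g : A →ₗ[R] E)
    (h : LinearMap.ker φ ≤ LinearMap.ker g) : ∃ k : B →ₗ[R] E, ∀ a, k (φ a) = g a := by
  obtain ⟨k, hk⟩ := Module.Injective.out (R := R) ((LinearMap.ker φ).liftQ φ le_rfl)
    (LinearMap.ker_eq_bot.1 (Submodule.ker_liftQ_eq_bot _ _ _ le_rfl))
    ((LinearMap.ker φ).liftQ g h)
  exact ⟨k, fun a => hk (Submodule.Quotient.mk a)⟩

lemma tors_unif [IsNoetherianRing R] (I : Ideal R) {X : Type} [AddCommGroup X] [Module R X]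
    (hX : IsTors I X) [Module.Finite R X] : ∃ n : ℕ, ∀ a ∈ I ^ n, ∀ x : X, a • x = 0 := by
  obtain ⟨s, hs⟩ := (Module.Finite.fg_top (R := R) (M := X))
  choose N hN using hX
  refine ⟨s.sup N, fun a ha x => ?_⟩
  have : (⊤ : Submodule R X) ≤ LinearMap.ker (a • (LinearMap.id : X →ₗ[R] X)) := by
    rw [← hs, Submodule.span_le]
    intro y hy
    simp only [SetLike.mem_coe, LinearMap.mem_ker, LinearMap.smul_apply, LinearMap.id_apply]
    exact hN y a (Ideal.pow_le_pow_right (Finset.le_sup (f := N) hy) ha)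
  exact this (Submodule.mem_top (x := x))

lemma tors_of_surj (I : Ideal R) {X Y : Type} [AddCommGroup X] [Module R X]
    [AddCommGroup Y] [Module R Y] (f : X →ₗ[R] Y) (hf : Function.Surjective f) (hX : IsTors I X) :
    IsTors I Y := by
  intro y
  obtain ⟨x, rfl⟩ := hf y
  obtain ⟨n, hn⟩ := hX x
  exact ⟨n, fun a ha => by rw [← map_smul, hn a ha, map_zero]⟩

lemma gam_injective [IsNoetherianRing R] (I : Ideal R) (E : Type) [AddCommGroup E] [Module R E]
    [Module.Injective R E] : Module.Injective R (Gam I E) := by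
  apply Module.Baer.injective
  intro J g
  have hr : IsTors I (LinearMap.range g) := by
    rintro ⟨⟨x, n, hn⟩, hx⟩
    exact ⟨n, fun a ha => Subtype.ext (Subtype.ext (hn a ha))⟩
  obtain ⟨n, hn⟩ := tors_unif I hr
  obtain ⟨k, hk⟩ := Ideal.exists_pow_inf_eq_pow_smul I J
  let φ : J →ₗ[R] (R ⧸ I ^ (n + k)) := (Submodule.mkQ (I ^ (n+k))) ∘ₗ J.subtype
  have hker : LinearMap.ker φ ≤ LinearMap.ker ((Gam I E).subtype ∘ₗ g) := by
    rintro ⟨j, hj⟩ hj2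
    have hj3 : j ∈ I ^ (n + k) :=
      (Submodule.Quotient.mk_eq_zero _).1 (LinearMap.mem_ker.1 hj2)
    have h1 : j ∈ I ^ (n+k) • (⊤ : Submodule R R) ⊓ J := ⟨by simpa using hj3, hj⟩
    rw [hk (n+k) (by lia)] at h1
    have h2 : j ∈ (I ^ n • (⊤ : Submodule R J)).map J.subtype := by
      have h3 : I ^ n • J = (I ^ n • (⊤ : Submodule R J)).map J.subtype := by
        rw [Submodule.map_smul'']; simp
      rw [← h3]
      refine Submodule.smul_mono ?_ inf_le_right h1
      rw [Nat.add_sub_cancel]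
    obtain ⟨y, hy, hyj⟩ := h2
    have : y = ⟨j, hj⟩ := Subtype.ext hyj
    rw [← this]
    have h4 : I ^ n • (⊤ : Submodule R J) ≤ LinearMap.ker g := by
      rw [Submodule.smul_le]
      intro a ha y _
      rw [LinearMap.mem_ker, map_smul]
      exact congrArg Subtype.val (hn a ha ⟨g y, y, rfl⟩)
    have h5 : g y = 0 := h4 hy
    simp [h5]
  obtain ⟨h, hh⟩ := inj_ext φ ((Gam I E).subtype ∘ₗ g) hker
  have hy : h (Submodule.Quotient.mk 1) ∈ Gam I E := by
    refine ⟨n + k, fun a ha => ?_⟩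
    rw [← map_smul, ← Submodule.Quotient.mk_smul, smul_eq_mul, mul_one,
      (Submodule.Quotient.mk_eq_zero _).2 ha, map_zero]
  refine ⟨LinearMap.toSpanSingleton R _ ⟨_, hy⟩, fun x hx => ?_⟩
  apply Subtype.ext
  have := hh ⟨x, hx⟩
  simp only [LinearMap.comp_apply, Submodule.subtype_apply] at this
  rw [← this]
  simp only [LinearMap.toSpanSingleton_apply, Submodule.coe_smul, φ, LinearMap.comp_apply,
    Submodule.subtype_apply, Submodule.mkQ_apply]
  rw [← map_smul, ← Submodule.Quotient.mk_smul, smul_eq_mul, mul_one]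

lemma exists_injective_emb (X : Type) [AddCommGroup X] [Module R X] :
    ∃ (E : ModuleCat.{0} R) (f : X →ₗ[R] E), Module.Injective R E ∧ Function.Injective f := by
  refine ⟨Injective.under (ModuleCat.of R X), (Injective.ι (ModuleCat.of R X)).hom, ?_, ?_⟩
  · rw [Module.injective_iff_injective_object]
    exact inferInstanceAs (Injective (Injective.under (ModuleCat.of R X)))
  · exact (ModuleCat.mono_iff_injective (Injective.ι (ModuleCat.of R X))).1 inferInstance

lemma lc_tors_zero [IsNoetherianRing R] (I : Ideal R) (i : ℕ) : ∀ (X : Type) [AddCommGroup X]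
    [Module R X], IsTors I X → Subsingleton (locH I (i+1) X) := by
  induction i with
  | zero =>
    intro X _ _ hX
    obtain ⟨E, f, hE, hf⟩ := exists_injective_emb (R := R) X
    have := gam_injective I E
    have hG : Injective (ModuleCat.of R (Gam I E)) := by
      rwa [← Module.injective_iff_injective_object]
    let f' : X →ₗ[R] Gam I E := f.codRestrict _ (fun x => by
      obtain ⟨n, hn⟩ := hX x
      exact ⟨n, fun a ha => by rw [← map_smul, hn a ha, map_zero]⟩)
    have hf' : Function.Injective f' := fun x y h => hf (congrArg Subtype.val h)
    have hGt : IsTors I (Gam I E) := by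
      rintro ⟨x, n, hn⟩
      exact ⟨n, fun a ha => Subtype.ext (hn a ha)⟩
    have hC := tors_of_surj I (LinearMap.range f').mkQ (Submodule.mkQ_surjective _) hGt
    obtain ⟨-, δ, h1, h2⟩ := lc_les I 0 f' (LinearMap.range f').mkQ hf'
      (Submodule.mkQ_surjective _) (LinearMap.exact_map_mkQ_range f')
    have h0 : Subsingleton (locH I 1 (Gam I E)) := lc_injective I 0 _
    have hs : ∀ z, δ z = 0 := by
      intro z
      rw [h1 z]
      obtain ⟨y, hy⟩ := Submodule.mkQ_surjective _ (theta I _ z)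
      obtain ⟨n, hn⟩ := hGt y
      obtain ⟨w, hw⟩ := theta_range I y n hn
      refine ⟨w, theta_inj I ?_⟩
      rw [theta_nat, hw, hy]
    refine subsingleton_of_forall_eq 0 fun x => ?_
    obtain ⟨z, rfl⟩ := (h2 x).1 (Subsingleton.elim _ _)
    exact hs z
  | succ i ih =>
    intro X _ _ hX
    obtain ⟨E, f, hE, hf⟩ := exists_injective_emb (R := R) X
    have := gam_injective I E
    have hG : Injective (ModuleCat.of R (Gam I E)) := by
      rwa [← Module.injective_iff_injective_object]
    let f' : X →ₗ[R] Gam I E := f.codRestrict _ (fun x => by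
      obtain ⟨n, hn⟩ := hX x
      exact ⟨n, fun a ha => by rw [← map_smul, hn a ha, map_zero]⟩)
    have hf' : Function.Injective f' := fun x y h => hf (congrArg Subtype.val h)
    have hGt : IsTors I (Gam I E) := by
      rintro ⟨x, n, hn⟩
      exact ⟨n, fun a ha => Subtype.ext (hn a ha)⟩
    have hC := tors_of_surj I (LinearMap.range f').mkQ (Submodule.mkQ_surjective _) hGt
    obtain ⟨-, δ, h1, h2⟩ := lc_les I (i+1) f' (LinearMap.range f').mkQ hf'
      (Submodule.mkQ_surjective _) (LinearMap.exact_map_mkQ_range f')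
    have h0 : Subsingleton (locH I (i+1+1) (Gam I E)) := lc_injective I (i+1) _
    have h3 := ih _ hC
    refine subsingleton_of_forall_eq 0 fun x => ?_
    obtain ⟨z, rfl⟩ := (h2 x).1 (Subsingleton.elim _ _)
    rw [Subsingleton.elim z 0, map_zero]

end OE


namespace OE
open Function

section FFdef
variable (I : Ideal R) (q : Ideal R) [q.IsPrime] (i : ℕ)
variable {X Y Z : Type} [AddCommGroup X] [Module R X] [AddCommGroup Y] [Module R Y]
  [AddCommGroup Z] [Module R Z]

/-- localized local cohomology -/
abbrev FF (I : Ideal R) (q : Ideal R) [q.IsPrime] (i : ℕ) (X : Type) [AddCommGroup X] [Module R X] :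
    Type := LocalizedModule q.primeCompl (locH I i X)

/-- functoriality -/
def Fm (f : X →ₗ[R] Y) : FF I q i X →ₗ[Localization q.primeCompl] FF I q i Y :=
  LocalizedModule.map q.primeCompl (Hm I i f)

lemma mk_zero_iff {P : Type} [AddCommGroup P] [Module R P] (S : Submonoid R) (x : P) (s : S) :
    LocalizedModule.mk x s = 0 ↔ ∃ c : S, c • x = 0 := by
  rw [← LocalizedModule.zero_mk 1, LocalizedModule.mk_eq]; simp

lemma Fm_mk (f : X →ₗ[R] Y) (x s) : Fm I q i f (LocalizedModule.mk x s) =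
    LocalizedModule.mk (Hm I i f x) s := LocalizedModule.map_mk _ _ _ _

lemma Fm_id (t : FF I q i X) : Fm I q i (LinearMap.id : X →ₗ[R] X) t = t := by
  induction t using LocalizedModule.induction_on with
  | _ x s => rw [Fm_mk, Hm_id]; rfl

lemma Fm_comp (g : Y →ₗ[R] Z) (f : X →ₗ[R] Y) (t) :
    Fm I q i (g ∘ₗ f) t = Fm I q i g (Fm I q i f t) := by
  induction t using LocalizedModule.induction_on with
  | _ x s => rw [Fm_mk, Hm_comp, Fm_mk, Fm_mk]; rfl

lemma Fm_smul_id (r : R) (t : FF I q i X) :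
    Fm I q i (r • (LinearMap.id : X →ₗ[R] X)) t = r • t := by
  induction t using LocalizedModule.induction_on with
  | _ x s => rw [Fm_mk, Hm_smul_id, LocalizedModule.smul'_mk]; rfl

lemma Fm_Rsmul (f : X →ₗ[R] Y) (r : R) (t : FF I q i X) :
    Fm I q i f (r • t) = r • Fm I q i f t := 
  LinearMap.map_smul_of_tower _ _ _

lemma loc_exact {P Q T : Type} [AddCommGroup P] [Module R P] [AddCommGroup Q] [Module R Q]
    [AddCommGroup T] [Module R T] (f : P →ₗ[R] Q) (g : Q →ₗ[R] T) (h : Exact f g) :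
    Exact (LocalizedModule.map q.primeCompl f) (LocalizedModule.map q.primeCompl g) :=
  LocalizedModule.map_exact q.primeCompl f g h

lemma F_les (f : X →ₗ[R] Y) (g : Y →ₗ[R] Z) (hf : Injective f) (hg : Surjective g)
    (hfg : Exact f g) : Exact (Fm I q i f) (Fm I q i g) ∧
    ∃ δ : FF I q i Z →ₗ[Localization q.primeCompl] FF I q (i+1) X,
      Exact (Fm I q i g) δ ∧ Exact δ (Fm I q (i+1) f) := by
  obtain ⟨h1, δ, h2, h3⟩ := lc_les I i f g hf hg hfg
  exact ⟨loc_exact q _ _ h1, LocalizedModule.map q.primeCompl δ, loc_exact q _ _ h2,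
    loc_exact q _ _ h3⟩

lemma F_inj₀ (f : X →ₗ[R] Y) (hf : Injective f) : Injective (Fm I q 0 f) :=
  LocalizedModule.map_injective _ _ (lc_inj₀ I f hf)

lemma F_tors (t : FF I q i X) : ∃ n, ∀ a ∈ I ^ n, a • t = 0 := by
  induction t using LocalizedModule.induction_on with
  | _ x s =>
    obtain ⟨n, hn⟩ := lc_torsion I i x
    exact ⟨n, fun a ha => by rw [LocalizedModule.smul'_mk, hn a ha, LocalizedModule.zero_mk]⟩

lemma F_bij_smul (s : R) (hs : s ∉ q) (t : FF I q i X) (h : s • t = 0) : t = 0 := by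
  induction t using LocalizedModule.induction_on with
  | _ x u =>
    rw [LocalizedModule.smul'_mk, mk_zero_iff] at h
    obtain ⟨c, hc⟩ := h
    rw [mk_zero_iff]
    exact ⟨c * ⟨s, hs⟩, by rw [mul_smul]; exact hc⟩

lemma F_kill (s a : R) (hs : s ∉ q) (h : ∀ x : X, (s * a) • x = 0) (t : FF I q i X) :
    a • t = 0 := by
  apply F_bij_smul I q i s hs
  rw [← mul_smul, ← Fm_smul_id]
  have : ((s * a) • (LinearMap.id : X →ₗ[R] X)) = (0 : R) • LinearMap.id := by
    ext x; simpa using h x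
  rw [this, Fm_smul_id, zero_smul]

lemma F_zero_of (s : R) (hs : s ∉ q) (h : ∀ x : X, s • x = 0) : Subsingleton (FF I q i X) :=
  subsingleton_of_forall_eq 0 fun t => by
    rw [← one_smul R t]; exact F_kill I q i s 1 hs (by simpa using h) t

lemma F_tors_zero [IsNoetherianRing R] (hX : IsTors I X) : Subsingleton (FF I q (i+1) X) := by
  have := lc_tors_zero I i X hX
  refine subsingleton_of_forall_eq 0 fun t => ?_
  induction t using LocalizedModule.induction_on with
  | _ x s => rw [Subsingleton.elim x 0, LocalizedModule.zero_mk]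

lemma F_iso (e : X ≃ₗ[R] Y) : Bijective (Fm I q i e.toLinearMap) := by
  constructor
  · apply LeftInverse.injective (g := Fm I q i e.symm.toLinearMap)
    intro t; rw [← Fm_comp]; simp [Fm_id]
  · apply RightInverse.surjective (g := Fm I q i e.symm.toLinearMap)
    intro t; rw [← Fm_comp]; simp [Fm_id]

lemma F_iso_sub (e : X ≃ₗ[R] Y) (h : Subsingleton (FF I q i Y)) : Subsingleton (FF I q i X) :=
  (F_iso I q i e).injective.subsingleton

/-- an element of I acting injectively on FF forces it to vanish -/
lemma F_zero_of_inj (x : R) (hx : x ∈ I) (h : ∀ t : FF I q i X, x • t = 0 → t = 0) :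
    Subsingleton (FF I q i X) := by
  refine subsingleton_of_forall_eq 0 fun t => ?_
  obtain ⟨n, hn⟩ := F_tors I q i t
  have := hn (x ^ n) (Ideal.pow_mem_pow hx n)
  clear hn
  induction n with
  | zero => simpa using this
  | succ n ih => exact ih (h _ (by rwa [← mul_smul, ← pow_succ']))

variable (X) in
/-- multiplication -/
abbrev mulL (x : R) : X →ₗ[R] X := x • LinearMap.id

lemma F_mid (f : X →ₗ[R] Y) (g : Y →ₗ[R] Z) (hf : Injective f) (hg : Surjective g)
    (hfg : Exact f g) (h1 : Subsingleton (FF I q i X)) (h2 : Subsingleton (FF I q i Z)) :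
    Subsingleton (FF I q i Y) := by
  refine subsingleton_of_forall_eq 0 fun t => ?_
  obtain ⟨s, rfl⟩ := ((F_les I q i f g hf hg hfg).1 t).1 (Subsingleton.elim _ _)
  rw [Subsingleton.elim s 0, map_zero]

lemma F_surj_of (f : X →ₗ[R] Y) (g : Y →ₗ[R] Z) (hf : Injective f) (hg : Surjective g)
    (hfg : Exact f g) (h1 : Subsingleton (FF I q (i+1) X)) : Surjective (Fm I q i g) := by
  obtain ⟨-, δ, h2, h3⟩ := F_les I q i f g hf hg hfg
  exact fun t => (h2 t).1 (Subsingleton.elim _ _)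

lemma F_surj_of' (f : X →ₗ[R] Y) (g : Y →ₗ[R] Z) (hf : Injective f) (hg : Surjective g)
    (hfg : Exact f g) (h1 : Subsingleton (FF I q i Z)) : Surjective (Fm I q i f) := by
  exact fun t => ((F_les I q i f g hf hg hfg).1 t).1 (Subsingleton.elim _ _)

lemma F_inj_of (f : X →ₗ[R] Y) (g : Y →ₗ[R] Z) (hf : Injective f) (hg : Surjective g)
    (hfg : Exact f g) (h1 : Subsingleton (FF I q i Z)) : Injective (Fm I q (i+1) f) := by
  obtain ⟨-, δ, h2, h3⟩ := F_les I q i f g hf hg hfg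
  rw [injective_iff_map_eq_zero]
  intro t ht
  obtain ⟨s, rfl⟩ := (h3 t).1 ht
  rw [Subsingleton.elim s 0, map_zero]

lemma exact_sub (N : Submodule R X) : Injective N.subtype ∧ Surjective N.mkQ ∧
    Exact N.subtype N.mkQ :=
  ⟨N.injective_subtype, N.mkQ_surjective, LinearMap.exact_subtype_mkQ N⟩

/-- quotient by x -/
abbrev QX (x : R) (X : Type) [AddCommGroup X] [Module R X] : Type :=
  X ⧸ (LinearMap.range (mulL X x))

lemma exact_mul (x : R) : Surjective (LinearMap.range (mulL X x)).mkQ ∧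
    Exact (mulL X x) (LinearMap.range (mulL X x)).mkQ :=
  ⟨Submodule.mkQ_surjective _, LinearMap.exact_map_mkQ_range _⟩

lemma mul_inj (x : R) (h : ∀ y : X, x • y = 0 → y = 0) : Injective (mulL X x) := by
  rw [injective_iff_map_eq_zero]; simpa using h

/-- `F^{i+1}(X) = 0` if `F^i(X/xX) = 0` -/
lemma F_zero_step (x : R) (hx : x ∈ I) (h : ∀ y : X, x • y = 0 → y = 0)
    (h0 : Subsingleton (FF I q i (QX x X))) : Subsingleton (FF I q (i+1) X) := by
  refine F_zero_of_inj I q (i+1) x hx fun t ht => ?_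
  have := F_inj_of I q i (mulL X x) _ (mul_inj x h) (exact_mul x).1 (exact_mul x).2 h0
  rw [← Fm_smul_id] at ht
  exact (injective_iff_map_eq_zero _).1 this t ht

lemma F_zero_zero (x : R) (hx : x ∈ I) (h : ∀ y : X, x • y = 0 → y = 0) :
    Subsingleton (FF I q 0 X) := by
  refine F_zero_of_inj I q 0 x hx fun t ht => ?_
  rw [← Fm_smul_id] at ht
  exact (injective_iff_map_eq_zero _).1 (F_inj₀ I q (mulL X x) (mul_inj x h)) t ht

lemma F_zero_surj (x : R) (h : ∀ y : X, x • y = 0 → y = 0)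
    (h0 : Subsingleton (FF I q i (QX x X))) (t : FF I q i X) : ∃ s, x • s = t := by
  obtain ⟨s, hs⟩ := F_surj_of' I q i (mulL X x) _ (mul_inj x h) (exact_mul x).1 (exact_mul x).2 h0 t
  exact ⟨s, by rw [← hs, Fm_smul_id]⟩

end FFdef
end OE


namespace OE
open Function

section dlsec
variable [IsNoetherianRing R]

lemma coh_lt_top (q : PrimeSpectrum R) (P : Set.Iic q) : Order.coheight P < ⊤ := by
  have h1 : Order.height q < ⊤ := by
    have := Ideal.height_ne_top q.isPrime.ne_top
    rw [PrimeSpectrum.height_eq_orderHeight] at this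
    exact lt_top_iff_ne_top.2 this
  have h2 := Order.coheight_le_krullDim P
  rw [← Order.height_eq_krullDim_Iic] at h2
  exact lt_of_le_of_lt (by exact_mod_cast h2) h1

open Classical in
/-- codimension in q -/
def dl (q P : PrimeSpectrum R) : ℕ :=
  if h : P ≤ q then (Order.coheight (⟨P, h⟩ : Set.Iic q)).toNat else 0

lemma dl_coe (q P : PrimeSpectrum R) (h : P ≤ q) :
    Order.coheight (⟨P, h⟩ : Set.Iic q) = (dl q P : ℕ∞) := by
  rw [dl, dif_pos h, ENat.natCast_toNat (coh_lt_top q _).ne]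

lemma dl_lt {q P Q : PrimeSpectrum R} (h : P < Q) (h' : Q ≤ q) : dl q Q < dl q P := by
  have : (⟨P, h.le.trans h'⟩ : Set.Iic q) < ⟨Q, h'⟩ := h
  have := Order.coheight_strictAnti this (coh_lt_top q _)
  rw [dl_coe, dl_coe] at this
  exact_mod_cast this

lemma dl_le {q P Q : PrimeSpectrum R} (h : P ≤ Q) (h' : Q ≤ q) : dl q Q ≤ dl q P := by
  rcases h.eq_or_lt with h | h
  · rw [h]
  · exact (dl_lt h h').le

lemma dl_self (q : PrimeSpectrum R) : dl q q = 0 := by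
  have : Order.coheight (⟨q, le_refl q⟩ : Set.Iic q) = 0 := by
    rw [Order.coheight_eq_zero]
    intro b _; exact b.2
  rw [dl_coe] at this
  exact_mod_cast this

lemma dl_succ {q P : PrimeSpectrum R} (h : P ≤ q) {d : ℕ} (hd : dl q P = d + 1) :
    ∃ Q, P < Q ∧ Q ≤ q ∧ dl q Q = d := by
  have := dl_coe q P h
  rw [hd, Nat.cast_add, Nat.cast_one, Order.coheight_eq_coe_add_one_iff] at this
  obtain ⟨-, ⟨⟨Q, hQ⟩, h1, h2⟩, -⟩ := this
  rw [dl_coe q Q hQ] at h2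
  exact ⟨Q, h1, hQ, by exact_mod_cast h2⟩

lemma dl_zero {q P : PrimeSpectrum R} (h : P ≤ q) (hd : dl q P = 0) : P = q := by
  by_contra hne
  have := dl_lt (lt_of_le_of_ne h hne) le_rfl
  omega

end dlsec

section van
variable [IsNoetherianRing R] (I : Ideal R) (q : PrimeSpectrum R)

lemma supp_quot (J : Ideal R) (Q : PrimeSpectrum R) :
    Q ∈ Module.support R (R ⧸ J) ↔ J ≤ Q.asIdeal := by
  rw [Module.mem_support_iff_of_finite, Ideal.annihilator_quotient]

/-- elements outside a prime are regular on R/P -/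
lemma reg_quot (P : PrimeSpectrum R) (x : R) (hx : x ∉ P.asIdeal) (y : R ⧸ P.asIdeal)
    (h : x • y = 0) : y = 0 := by
  obtain ⟨y, rfl⟩ := Ideal.Quotient.mk_surjective y
  rw [Ideal.Quotient.eq_zero_iff_mem]
  have : Ideal.Quotient.mk P.asIdeal (x * y) = 0 := by
    rw [map_mul]; exact h
  rw [Ideal.Quotient.eq_zero_iff_mem] at this
  exact (P.isPrime.mem_or_mem this).resolve_left hx

lemma supp_QX (x : R) (X : Type) [AddCommGroup X] [Module R X] [Module.Finite R X]
    (Q : PrimeSpectrum R) (h : Q ∈ Module.support R (QX x X)) :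
    Q ∈ Module.support R X ∧ x ∈ Q.asIdeal := by
  refine ⟨Module.support_subset_of_surjective _ (Submodule.mkQ_surjective _) h, ?_⟩
  rw [Module.mem_support_iff_of_finite] at h
  apply h
  rw [Module.mem_annihilator]
  intro y
  obtain ⟨y, rfl⟩ := Submodule.mkQ_surjective _ y
  rw [← map_smul, Submodule.mkQ_apply, Submodule.Quotient.mk_eq_zero]
  exact ⟨y, by simp⟩

lemma F_quot_not_le (i : ℕ) (P : PrimeSpectrum R) (h : ¬ P ≤ q) :
    Subsingleton (FF I q.asIdeal i (R ⧸ P.asIdeal)) := by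
  obtain ⟨s, hs, hs'⟩ := SetLike.not_le_iff_exists.1 (show ¬ P.asIdeal ≤ q.asIdeal from h)
  apply F_zero_of I q.asIdeal i s hs'
  intro x
  obtain ⟨x, rfl⟩ := Ideal.Quotient.mk_surjective x
  change Ideal.Quotient.mk _ (s * x) = 0
  rw [Ideal.Quotient.eq_zero_iff_mem]
  exact Ideal.mul_mem_right _ _ hs

lemma F_q_succ (hI : I ≤ q.asIdeal) (i : ℕ) :
    Subsingleton (FF I q.asIdeal (i+1) (R ⧸ q.asIdeal)) := by
  apply F_tors_zero
  intro x
  refine ⟨1, fun a ha => ?_⟩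
  obtain ⟨x, rfl⟩ := Ideal.Quotient.mk_surjective x
  change Ideal.Quotient.mk _ (a * x) = 0
  rw [Ideal.Quotient.eq_zero_iff_mem]
  exact Ideal.mul_mem_right _ _ (hI (by simpa using ha))

variable (hq : q.asIdeal ∈ I.minimalPrimes)
include hq

lemma exists_notMem {P : PrimeSpectrum R} (h : P < q) : ∃ x ∈ I, x ∉ P.asIdeal := by
  by_contra hc
  push Not at hc
  exact (not_le_of_gt h) (hq.2 ⟨P.isPrime, hc⟩ h.le)

/-- vanishing -/
lemma F_vanish (i : ℕ) : ∀ (X : Type) [AddCommGroup X] [Module R X] [Module.Finite R X],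
    (∀ Q ∈ Module.support R X, Q ≤ q → dl q Q < i) → Subsingleton (FF I q.asIdeal i X) := by
  induction i with
  | zero =>
    intro X _ _ _ h
    have : q ∉ Module.support R X := fun hs => by simpa using h q hs le_rfl
    rw [Module.mem_support_iff_of_finite] at this
    obtain ⟨s, hs, hs'⟩ := SetLike.not_le_iff_exists.1 this
    exact F_zero_of I q.asIdeal 0 s hs' (Module.mem_annihilator.1 hs)
  | succ i ih =>
    intro X _ _ hX
    induction hX using IsNoetherianRing.induction_on_isQuotientEquivQuotientPrime R with
    | subsingleton N =>
      intro _
      exact F_zero_of I q.asIdeal _ 1 q.isPrime.one_notMem fun x => Subsingleton.elim _ _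
    | quotient N P e =>
      intro h
      apply F_iso_sub I q.asIdeal _ e
      rw [LinearEquiv.support_eq e] at h
      by_cases hP : P ≤ q
      · rcases hP.eq_or_lt with rfl | hlt
        · exact F_q_succ I P hq.1.2 i
        · obtain ⟨x, hx, hxP⟩ := exists_notMem I q hq hlt
          apply F_zero_step I q.asIdeal i x hx (reg_quot P x hxP)
          apply ih
          intro Q hQ hQq
          obtain ⟨h1, h2⟩ := supp_QX _ _ _ hQ
          rw [supp_quot] at h1
          have : P < Q := lt_of_le_of_ne h1 (by rintro rfl; exact hxP h2)
          have h3 := dl_lt this hQq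
          have := h P ((supp_quot _ _).2 le_rfl) hP
          omega
      · exact F_quot_not_le I q _ P hP
    | exact N₁ N₂ N₃ f g hf hg hfg h₁ h₃ =>
      intro h
      rw [Module.support_of_exact hfg hf hg] at h
      exact F_mid I q.asIdeal _ f g hf hg hfg (h₁ fun Q hQ => h Q (Or.inl hQ))
        (h₃ fun Q hQ => h Q (Or.inr hQ))

end van
end OE


namespace OE
open Function

section mel
variable {A : Type} [CommRing A] {T : Type} [AddCommGroup T] [Module A T]

lemma melkersson (x : A) (ht : ∀ t : T, ∃ n : ℕ, x ^ n • t = 0)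
    (hA : IsArtinian A (LinearMap.ker (x • (LinearMap.id : T →ₗ[A] T)))) : IsArtinian A T := by
  rw [← monotone_stabilizes_iff_artinian]
  intro f
  let F : ℕ → Submodule A T := fun n => OrderDual.ofDual (f n)
  have hF : ∀ m n, m ≤ n → F n ≤ F m := fun m n h => f.monotone h
  set K := LinearMap.ker (x • (LinearMap.id : T →ₗ[A] T)) with hK
  let L : ℕ → ℕ → Submodule A K := fun n k => ((F n).map (x ^ k • LinearMap.id)).comap K.subtype
  have memL : ∀ n k (t : K), t ∈ L n k ↔ ∃ u ∈ F n, x ^ k • u = (t : T) := by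
    intro n k t
    simp [L, Submodule.mem_map]
  have hL1 : ∀ m n k, m ≤ n → L n k ≤ L m k := by
    intro m n k h t ht
    rw [memL] at ht ⊢
    obtain ⟨u, hu, hu'⟩ := ht
    exact ⟨u, hF _ _ h hu, hu'⟩
  have hL2 : ∀ n k l, k ≤ l → L n l ≤ L n k := by
    intro n k l h t ht
    rw [memL] at ht ⊢
    obtain ⟨u, hu, hu'⟩ := ht
    refine ⟨x ^ (l - k) • u, (F n).smul_mem _ hu, ?_⟩
    rw [← hu', ← mul_smul, ← pow_add, Nat.add_sub_cancel' h]
  obtain ⟨L0, ⟨⟨n0, k0⟩, hnk⟩, hmin⟩ := IsArtinian.set_has_minimal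
    (Set.range (fun p : ℕ × ℕ => L p.1 p.2)) (Set.range_nonempty _)
  simp only at hnk
  have h1 : ∀ n k, n0 ≤ n → k0 ≤ k → L n k = L0 := by
    intro n k hn hk
    have hle : L n k ≤ L0 := hnk ▸ (hL1 _ _ _ hn).trans (hL2 _ _ _ hk)
    by_contra hne
    exact hmin _ ⟨(n, k), rfl⟩ (lt_of_le_of_ne hle hne)
  have h2 : ∀ k, ∃ N, ∀ n, N ≤ n → L N k = L n k := by
    intro k
    obtain ⟨N, hN⟩ := monotone_stabilizes_iff_artinian.2 hA
      ⟨fun n => OrderDual.toDual (L n k), fun m n h => hL1 m n k h⟩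
    exact ⟨N, fun n hn => hN n hn⟩
  choose N hN using h2
  let B := max n0 ((Finset.range k0).sup N)
  have hB : ∀ n, B ≤ n → ∀ k, L B k = L n k := by
    intro n hn k
    by_cases hk : k < k0
    · have : N k ≤ B := (Finset.le_sup (f := N) (Finset.mem_range.2 hk)).trans (le_max_right _ _)
      rw [← hN k B this, ← hN k n (this.trans hn)]
    · rw [h1 B k (le_max_left _ _) (by omega), h1 n k ((le_max_left _ _).trans hn) (by omega)]
  refine ⟨B, fun n hn => ?_⟩
  suffices h : ∀ k, ∀ t ∈ F B, x ^ k • t = 0 → t ∈ F n by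
    apply le_antisymm (f.monotone hn)
    intro t htB
    obtain ⟨k, hk⟩ := ht t
    exact h k t htB hk
  intro k
  induction k with
  | zero => intro t _ h; simp only [pow_zero, one_smul] at h; rw [h]; exact zero_mem _
  | succ k ih =>
    intro t htB h
    have hmem : x ^ k • t ∈ K := by
      rw [hK, LinearMap.mem_ker, LinearMap.smul_apply, LinearMap.id_apply, ← mul_smul, ← pow_succ']; exact h
    have : (⟨_, hmem⟩ : K) ∈ L n k := by
      rw [← hB n hn k, memL]; exact ⟨t, htB, rfl⟩
    rw [memL] at this
    obtain ⟨u, hu, hu'⟩ := this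
    have h3 : t - u ∈ F n := ih _ (sub_mem htB (hF _ _ hn hu)) (by rw [smul_sub, hu', sub_self])
    simpa using add_mem h3 hu

end mel

section art
variable [IsNoetherianRing R] (I : Ideal R) (q : PrimeSpectrum R) (hI : I ≤ q.asIdeal)
include hI

lemma theta_q : ∃ e : locH I 0 (R ⧸ q.asIdeal),
    theta I _ e = Ideal.Quotient.mk q.asIdeal 1 := by
  apply theta_range I _ 1
  intro a ha
  change Ideal.Quotient.mk _ (a * 1) = 0
  rw [Ideal.Quotient.eq_zero_iff_mem]
  exact Ideal.mul_mem_right _ _ (hI (by simpa using ha))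

lemma F_q_nontriv : Nontrivial (FF I q.asIdeal 0 (R ⧸ q.asIdeal)) := by
  obtain ⟨e, he⟩ := theta_q I q hI
  refine nontrivial_of_ne (LocalizedModule.mk e 1) 0 fun h => ?_
  rw [mk_zero_iff] at h
  obtain ⟨c, hc⟩ := h
  apply c.2
  have h2 : theta I _ ((c : R) • e) = 0 := by
    have : (c : R) • e = 0 := hc
    rw [this, map_zero]
  rw [map_smul, he] at h2
  have h3 : Ideal.Quotient.mk q.asIdeal ((c : R) * 1) = 0 := h2
  rwa [Ideal.Quotient.eq_zero_iff_mem, mul_one] at h3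

lemma F_q_art : IsArtinian (Localization q.asIdeal.primeCompl)
    (FF I q.asIdeal 0 (R ⧸ q.asIdeal)) := by
  obtain ⟨e, he⟩ := theta_q I q hI
  set A := Localization q.asIdeal.primeCompl
  let g : FF I q.asIdeal 0 (R ⧸ q.asIdeal) := LocalizedModule.mk e 1
  let φ : A →ₗ[A] FF I q.asIdeal 0 (R ⧸ q.asIdeal) := LinearMap.toSpanSingleton A _ g
  have hm : IsLocalRing.maximalIdeal A ≤ LinearMap.ker φ := by
    rw [← Localization.AtPrime.map_eq_maximalIdeal, Ideal.map_le_iff_le_comap]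
    intro a ha
    rw [Ideal.mem_comap, LinearMap.mem_ker]
    change algebraMap R A a • g = 0
    rw [algebraMap_smul, LocalizedModule.smul'_mk]
    have : a • e = 0 := by
      apply theta_inj I
      rw [map_smul, he, map_zero]
      change Ideal.Quotient.mk _ (a * 1) = 0
      rw [Ideal.Quotient.eq_zero_iff_mem]
      exact Ideal.mul_mem_right _ _ ha
    rw [this, LocalizedModule.zero_mk]
  have hs : IsSimpleModule A (A ⧸ IsLocalRing.maximalIdeal A) :=
    isSimpleModule_iff_quot_maximal.2 ⟨_, IsLocalRing.maximalIdeal.isMaximal A, ⟨LinearEquiv.refl _ _⟩⟩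
  refine isArtinian_of_surjective (A ⧸ IsLocalRing.maximalIdeal A)
    (Submodule.liftQ _ φ hm) ?_
  intro t
  induction t using LocalizedModule.induction_on with
  | _ y s =>
    obtain ⟨r, hr⟩ := Ideal.Quotient.mk_surjective (theta I _ y)
    have hy : y = r • e := by
      apply theta_inj I
      rw [map_smul, he, ← hr]
      change _ = Ideal.Quotient.mk _ (r * 1)
      rw [mul_one]
    refine ⟨Submodule.Quotient.mk (Localization.mk r s), ?_⟩
    rw [Submodule.liftQ_apply]
    change Localization.mk r s • (LocalizedModule.mk e 1 : FF I q.asIdeal 0 (R ⧸ q.asIdeal)) = _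
    rw [LocalizedModule.mk_smul_mk, hy, mul_one]

end art

section art2
variable [IsNoetherianRing R] (I : Ideal R) (q : PrimeSpectrum R) (hq : q.asIdeal ∈ I.minimalPrimes)
include hq

lemma art_of_sub (i : ℕ) (X : Type) [AddCommGroup X] [Module R X]
    (h : Subsingleton (FF I q.asIdeal i X)) : 
    IsArtinian (Localization q.asIdeal.primeCompl) (FF I q.asIdeal i X) := inferInstance

lemma F_art (i : ℕ) : ∀ (X : Type) [AddCommGroup X] [Module R X] [Module.Finite R X],
    IsArtinian (Localization q.asIdeal.primeCompl) (FF I q.asIdeal i X) := by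
  induction i using Nat.strong_induction_on with
  | _ i ih =>
  intro X _ _ hX
  induction hX using IsNoetherianRing.induction_on_isQuotientEquivQuotientPrime R with
  | subsingleton N =>
    exact art_of_sub I q hq i N 
      (F_zero_of I q.asIdeal _ 1 q.isPrime.one_notMem fun x => Subsingleton.elim _ _)
  | exact N₁ N₂ N₃ f g hf hg hfg h₁ h₃ =>
    have := (F_les I q.asIdeal i f g hf hg hfg).1
    exact isArtinian_of_range_eq_ker (Fm I q.asIdeal i f) (Fm I q.asIdeal i g)
      (LinearMap.exact_iff.1 this).symm
  | quotient N P e =>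
    suffices h : IsArtinian (Localization q.asIdeal.primeCompl) (FF I q.asIdeal i (R ⧸ P.asIdeal)) from
      isArtinian_of_injective (Fm I q.asIdeal i e.toLinearMap) (F_iso I q.asIdeal i e).injective
    by_cases hP : P ≤ q
    · rcases hP.eq_or_lt with rfl | hlt
      · cases i with
        | zero => exact F_q_art I P hq.1.2
        | succ i => exact art_of_sub I P hq _ _ (F_q_succ I P hq.1.2 i)
      · obtain ⟨x, hx, hxP⟩ := exists_notMem I q hq hlt
        cases i with
        | zero => exact art_of_sub I q hq _ _ (F_zero_zero I q.asIdeal x hx (reg_quot P x hxP))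
        | succ i =>
          have h1 := ih i (by omega) (QX x (R ⧸ P.asIdeal))
          set A := Localization q.asIdeal.primeCompl
          obtain ⟨-, δ, -, h3⟩ := F_les I q.asIdeal i (mulL (R ⧸ P.asIdeal) x) _
            (mul_inj x (reg_quot P x hxP)) (exact_mul x).1 (exact_mul x).2
          apply melkersson (algebraMap R A x)
          · intro t
            obtain ⟨n, hn⟩ := F_tors I q.asIdeal _ t
            refine ⟨n, ?_⟩
            rw [← map_pow, algebraMap_smul]
            exact hn _ (Ideal.pow_mem_pow hx n)
          · have : LinearMap.ker (algebraMap R A x • (LinearMap.id :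
                FF I q.asIdeal (i+1) (R ⧸ P.asIdeal) →ₗ[A] _)) = LinearMap.range δ := by
              ext t
              rw [LinearMap.mem_ker, LinearMap.smul_apply, LinearMap.id_apply, algebraMap_smul,
                ← Fm_smul_id]
              exact h3 t
            rw [this]
            exact isArtinian_of_surjective _ δ.rangeRestrict δ.surjective_rangeRestrict
    · exact art_of_sub I q hq i _ (F_quot_not_le I q _ P hP)

end art2
end OE


namespace OE
open Function

section nonvan
variable [IsNoetherianRing R] (I : Ideal R) (q : PrimeSpectrum R)

/-- prime avoidance -/
lemma avoid (q : PrimeSpectrum R) (J : Ideal R) (S : Finset (PrimeSpectrum R)) (h : ∀ P ∈ S, ¬ J ≤ P.asIdeal) :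
    ∃ y ∈ J, ∀ P ∈ S, y ∉ P.asIdeal := by
  by_contra hc
  push Not at hc
  obtain ⟨P, hP, hle⟩ := (Ideal.subset_union_prime (s := S) (f := fun P => P.asIdeal) q q
    (fun P _ _ _ => P.isPrime) (I := J)).1 (by
      intro y hy
      obtain ⟨P, hP, hyP⟩ := hc y hy
      simp only [Set.mem_iUnion]
      exact ⟨P, hP, hyP⟩)
  exact h P hP hle

lemma krull_rel {P Q P1 : PrimeSpectrum R} {y : R}
    (hQ : Q.asIdeal ∈ (P.asIdeal ⊔ Ideal.span {y}).minimalPrimes) (h1 : P < P1) (h2 : P1 < Q) :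
    False := by
  have h := Ideal.map_height_le_one_of_mem_minimalPrimes hQ
  set f := Ideal.Quotient.mk P.asIdeal with hf
  have hs : Surjective f := Ideal.Quotient.mk_surjective
  have hk : RingHom.ker f = P.asIdeal := Ideal.mk_ker
  have hk1 : RingHom.ker f ≤ P1.asIdeal := by rw [hk]; exact h1.le
  have hkQ : RingHom.ker f ≤ Q.asIdeal := hk1.trans h2.le
  have hp1 : (P1.asIdeal.map f).IsPrime := Ideal.map_isPrime_of_surjective hs hk1
  have hpQ : (Q.asIdeal.map f).IsPrime :=
    Ideal.map_isPrime_of_surjective hs hkQ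
  have hc1 : (P1.asIdeal.map f).comap f = P1.asIdeal := by
    rw [Ideal.comap_map_of_surjective _ hs, ← RingHom.ker_eq_comap_bot, hk]
    exact sup_eq_left.2 h1.le
  have hcQ : (Q.asIdeal.map f).comap f = Q.asIdeal := by
    rw [Ideal.comap_map_of_surjective _ hs, ← RingHom.ker_eq_comap_bot, hk]
    exact sup_eq_left.2 (h1.le.trans h2.le)
  have hlt : (⟨P1.asIdeal.map f, hp1⟩ : PrimeSpectrum (R ⧸ P.asIdeal)) < ⟨Q.asIdeal.map f, hpQ⟩ := by
    refine lt_of_le_of_ne (Ideal.map_mono h2.le) fun he => ?_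
    have he : P1.asIdeal.map f = Q.asIdeal.map f := congrArg PrimeSpectrum.asIdeal he
    rw [he, hcQ] at hc1
    exact h2.ne (PrimeSpectrum.ext hc1.symm)
  have hbot : (⊥ : Ideal (R ⧸ P.asIdeal)).IsPrime := Ideal.isPrime_bot
  have hlt0 : (⟨⊥, hbot⟩ : PrimeSpectrum (R ⧸ P.asIdeal)) < ⟨P1.asIdeal.map f, hp1⟩ := by
    refine lt_of_le_of_ne bot_le fun he => ?_
    have he : ⊥ = P1.asIdeal.map f := congrArg PrimeSpectrum.asIdeal he
    rw [← he, ← RingHom.ker_eq_comap_bot, hk] at hc1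
    exact h1.ne (PrimeSpectrum.ext hc1)
  have e1 := Order.height_add_one_le hlt
  have e0 := Order.height_add_one_le hlt0
  have e2 : Order.height (⟨Q.asIdeal.map f, hpQ⟩ : PrimeSpectrum (R ⧸ P.asIdeal)) ≤ 1 := by
    rw [← PrimeSpectrum.height_eq_orderHeight]; exact h
  have e3 : (1 : ℕ∞) + 1 ≤ 1 := (add_le_add_left ((le_add_self).trans e0) 1).trans (e1.trans e2)
  exact absurd e3 (by decide)

lemma exists_min (P Q : PrimeSpectrum R) (h : P ≤ Q) (y : R) (hy : y ∈ Q.asIdeal) :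
    ∃ P' : PrimeSpectrum R, P'.asIdeal ∈ (P.asIdeal ⊔ Ideal.span {y}).minimalPrimes ∧ P' ≤ Q ∧
      P ≤ P' ∧ y ∈ P'.asIdeal := by
  have : P.asIdeal ⊔ Ideal.span {y} ≤ Q.asIdeal :=
    sup_le h ((Ideal.span_singleton_le_iff_mem _).2 hy)
  obtain ⟨p, hp, hle⟩ := Ideal.exists_minimalPrimes_le this
  exact ⟨⟨p, hp.1.1⟩, hp, hle, le_sup_left.trans hp.1.2,
    hp.1.2 (Ideal.mem_sup_right (Ideal.mem_span_singleton_self y))⟩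

lemma many {P : PrimeSpectrum R} (hP : P ≤ q) (e : ℕ) (hd : dl q P = e + 2)
    (S : Finset (PrimeSpectrum R)) (hS : ∀ Q ∈ S, P < Q ∧ Q ≤ q ∧ dl q Q = e + 1) :
    ∃ Q, Q ∉ S ∧ P < Q ∧ Q ≤ q ∧ dl q Q = e + 1 := by
  classical
  obtain ⟨P1, h1, h1q, hd1⟩ := dl_succ hP hd
  obtain ⟨Q2, h2, h2q, hd2⟩ := dl_succ h1q hd1
  obtain ⟨y, hy, hyS⟩ := avoid q Q2.asIdeal (insert P S) (by
    intro Q hQ hle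
    rcases Finset.mem_insert.1 hQ with rfl | hQ
    · exact absurd (h1.trans h2) (not_lt_of_ge hle)
    · obtain ⟨-, h3, h4⟩ := hS Q hQ
      have := dl_le (show Q2 ≤ Q from hle) h3
      omega)
  obtain ⟨P', hm, hle, hPP', hyP'⟩ := exists_min P Q2 (h1.trans h2).le y hy
  have hlt : P < P' := lt_of_le_of_ne hPP' (by
    rintro rfl; exact hyS _ (Finset.mem_insert_self _ _) hyP')
  refine ⟨P', fun hc => hyS _ (Finset.mem_insert_of_mem hc) hyP', hlt, hle.trans h2q, ?_⟩
  have hne : P' < Q2 := lt_of_le_of_ne hle (by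
    rintro rfl; exact krull_rel hm h1 h2)
  have := dl_lt hne h2q
  have := dl_lt hlt (hle.trans h2q)
  omega

lemma supp_sub_quot {P : PrimeSpectrum R} {X : Type} [AddCommGroup X] [Module R X] [Module.Finite R X]
    (a : R) (ha : a ∉ P.asIdeal) (h1 : ∀ p ∈ P.asIdeal, ∀ x : X, p • x = 0) (h2 : ∀ x : X, a • x = 0)
    (Q : PrimeSpectrum R) (hQ : Q ∈ Module.support R X) : P < Q := by
  rw [Module.mem_support_iff_of_finite] at hQ
  refine lt_of_le_of_ne (fun p hp => hQ (Module.mem_annihilator.2 (h1 p hp))) ?_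
  rintro rfl
  exact ha (hQ (Module.mem_annihilator.2 h2))

lemma quot_kill (J : Ideal R) (p : R) (hp : p ∈ J) (x : R ⧸ J) : p • x = 0 := by
  obtain ⟨x, rfl⟩ := Ideal.Quotient.mk_surjective x
  change Ideal.Quotient.mk _ (p * x) = 0
  rw [Ideal.Quotient.eq_zero_iff_mem]
  exact Ideal.mul_mem_right _ _ hp

variable (hq : q.asIdeal ∈ I.minimalPrimes)
include hq

lemma F_vanish_quot {P : PrimeSpectrum R} (d : ℕ) (hd : dl q P ≤ d)
    {X : Type} [AddCommGroup X] [Module R X] [Module.Finite R X]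
    (a : R) (ha : a ∉ P.asIdeal) (h1 : ∀ p ∈ P.asIdeal, ∀ x : X, p • x = 0)
    (h2 : ∀ x : X, a • x = 0) : Subsingleton (FF I q.asIdeal d X) := by
  apply F_vanish I q hq
  intro Q hQ hQq
  exact (dl_lt (supp_sub_quot a ha h1 h2 Q hQ) hQq).trans_le hd

/-- submodules of R/P -/
lemma ideal_sub {P : PrimeSpectrum R} (N : Submodule R (R ⧸ P.asIdeal)) (hN : N ≠ ⊥) :
    ∃ f : (R ⧸ P.asIdeal) →ₗ[R] N, Injective f ∧ ∃ a ∉ P.asIdeal,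
      (∀ x : N ⧸ LinearMap.range f, a • x = 0) := by
  obtain ⟨n, hn, hn0⟩ := Submodule.exists_mem_ne_zero_of_ne_bot hN
  obtain ⟨a, rfl⟩ := Ideal.Quotient.mk_surjective n
  have ha : a ∉ P.asIdeal := fun h => hn0 (Ideal.Quotient.eq_zero_iff_mem.2 h)
  refine ⟨LinearMap.codRestrict N (mulL (R ⧸ P.asIdeal) a) ?_, ?_, a, ha, ?_⟩
  · intro b
    obtain ⟨b, rfl⟩ := Ideal.Quotient.mk_surjective b
    have : mulL (R ⧸ P.asIdeal) a (Ideal.Quotient.mk _ b) = b • Ideal.Quotient.mk _ a := by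
      change Ideal.Quotient.mk _ (a * b) = Ideal.Quotient.mk _ (b * a)
      rw [mul_comm]
    rw [this]
    exact N.smul_mem _ hn
  · intro x y h
    exact mul_inj a (reg_quot P a ha) (congrArg Subtype.val h)
  · intro x
    obtain ⟨x, rfl⟩ := Submodule.mkQ_surjective _ x
    rw [← map_smul, Submodule.mkQ_apply, Submodule.Quotient.mk_eq_zero]
    exact ⟨x, rfl⟩

lemma F_sub_zero {P : PrimeSpectrum R} (d : ℕ) (hd : dl q P ≤ d)
    (h0 : Subsingleton (FF I q.asIdeal d (R ⧸ P.asIdeal))) (N : Submodule R (R ⧸ P.asIdeal)) :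
    Subsingleton (FF I q.asIdeal d N) := by
  by_cases hN : N = ⊥
  · subst hN
    exact F_zero_of I q.asIdeal _ 1 q.isPrime.one_notMem fun x => Subsingleton.elim _ _
  obtain ⟨f, hf, a, ha, hk⟩ := ideal_sub I q hq N hN
  refine F_mid I q.asIdeal d f (LinearMap.range f).mkQ hf (Submodule.mkQ_surjective _)
    (LinearMap.exact_map_mkQ_range f) h0 ?_
  refine F_vanish_quot I q hq d hd a ha ?_ hk
  intro p hp x
  obtain ⟨x, rfl⟩ := Submodule.mkQ_surjective _ x
  rw [← map_smul]
  have : p • x = 0 := Subtype.ext (quot_kill _ _ hp _)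
  rw [this, map_zero]

lemma F_factor_surj {P P1 : PrimeSpectrum R} (d : ℕ) (hd : dl q P ≤ d+1) (h : P ≤ P1)
    (h0 : Subsingleton (FF I q.asIdeal (d+1) (R ⧸ P.asIdeal))) :
    Surjective (Fm I q.asIdeal d (Submodule.factor (show P.asIdeal ≤ P1.asIdeal from h))) := by
  refine F_surj_of I q.asIdeal d (LinearMap.ker _).subtype
    (Submodule.factor (show P.asIdeal ≤ P1.asIdeal from h)) (Submodule.injective_subtype _)
    (Submodule.factor_surjective _) (LinearMap.exact_subtype_ker_map _) ?_
  exact F_sub_zero I q hq (d+1) hd h0 _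

lemma F_nonvan (d : ℕ) : ∀ P : PrimeSpectrum R, P ≤ q → dl q P = d →
    Nontrivial (FF I q.asIdeal d (R ⧸ P.asIdeal)) := by
  classical
  induction d with
  | zero =>
    intro P hP hd
    rw [dl_zero hP hd]
    exact F_q_nontriv I q hq.1.2
  | succ d ih =>
    intro P hP hd
    by_contra hnt
    rw [not_nontrivial_iff_subsingleton] at hnt
    have hsurj := fun (P1 : PrimeSpectrum R) (h : P ≤ P1) => F_factor_surj I q hq d hd.le h hnt
    cases d with
    | zero =>
      have hlt : P < q := lt_of_le_of_ne hP (by rintro rfl; rw [dl_self] at hd; omega)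
      obtain ⟨x, hx, hxP⟩ := exists_notMem I q hq hlt
      have h1 := F_zero_zero I q.asIdeal x hx (reg_quot P x hxP)
      have h2 := F_q_nontriv I q hq.1.2
      have h3 := (hsurj q hP).subsingleton
      exact not_subsingleton _ h3
    | succ e =>
      set A := Localization q.asIdeal.primeCompl
      have hart := F_art I q hq (e+1) (R ⧸ P.asIdeal)
      let K : PrimeSpectrum R → Submodule A (FF I q.asIdeal (e+1) (R ⧸ P.asIdeal)) := fun Q =>
        if h : P ≤ Q then
          LinearMap.ker (Fm I q.asIdeal (e+1) (Submodule.factor (show P.asIdeal ≤ Q.asIdeal from h)))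
        else ⊥
      let W : Set (Finset (PrimeSpectrum R)) :=
        {S | ∀ Q ∈ S, P < Q ∧ Q ≤ q ∧ dl q Q = e + 1}
      obtain ⟨K0, ⟨S, hS, hSK⟩, hmin⟩ := IsArtinian.set_has_minimal
        ((fun S : Finset (PrimeSpectrum R) => S.inf K) '' W) ⟨_, ∅, by simp [W], rfl⟩
      obtain ⟨Q, hQS, hPQ, hQq, hdQ⟩ := many q hP e hd S hS
      have hW : insert Q S ∈ W := by
        intro Q' hQ'
        rcases Finset.mem_insert.1 hQ' with rfl | h
        · exact ⟨hPQ, hQq, hdQ⟩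
        · exact hS Q' h
      have hK0 : K0 ≤ K Q := by
        have h1 : (insert Q S).inf K ≤ K0 := by
          rw [← hSK, Finset.inf_insert]; exact inf_le_right
        have h2 : (insert Q S).inf K = K0 := by
          by_contra hne
          exact hmin _ ⟨_, hW, rfl⟩ (lt_of_le_of_ne h1 hne)
        rw [← h2, Finset.inf_insert]; exact inf_le_left
      have hKQ : K Q = LinearMap.ker (Fm I q.asIdeal (e+1)
          (Submodule.factor (show P.asIdeal ≤ Q.asIdeal from hPQ.le))) := dif_pos hPQ.le
      obtain ⟨a, ha, haQ⟩ : ∃ a ∈ S.inf PrimeSpectrum.asIdeal, a ∉ Q.asIdeal := by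
        by_contra hc
        push Not at hc
        obtain ⟨P', hP', hle⟩ := (Ideal.IsPrime.inf_le' Q.isPrime).1 (show S.inf _ ≤ _ from hc)
        have hne : P' < Q := lt_of_le_of_ne hle (by rintro rfl; exact hQS hP')
        have h1 := dl_lt hne hQq
        have := (hS P' hP').2.2
        omega
      have hnt2 := ih Q hQq hdQ
      obtain ⟨w, hw⟩ := exists_ne (0 : FF I q.asIdeal (e+1) (R ⧸ Q.asIdeal))
      apply hw
      obtain ⟨v, rfl⟩ := F_zero_surj I q.asIdeal (e+1) a (reg_quot Q a haQ) (by
        refine F_vanish_quot I q hq (e+1) hdQ.le a haQ ?_ ?_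
        · intro p hp x
          obtain ⟨x, rfl⟩ := Submodule.mkQ_surjective _ x
          rw [← map_smul, quot_kill _ _ hp, map_zero]
        · intro x
          obtain ⟨x, rfl⟩ := Submodule.mkQ_surjective _ x
          rw [← map_smul, Submodule.mkQ_apply, Submodule.Quotient.mk_eq_zero]
          exact ⟨x, rfl⟩) w
      obtain ⟨t, rfl⟩ := hsurj Q hPQ.le v
      rw [← Fm_Rsmul]
      rw [← LinearMap.mem_ker, ← hKQ]
      apply hK0
      rw [← hSK]
      change a • t ∈ S.inf K
      rw [Submodule.mem_finsetInf]
      intro P' hP'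
      have hle := (hS P' hP').1.le
      have : K P' = LinearMap.ker (Fm I q.asIdeal (e+1)
          (Submodule.factor (show P.asIdeal ≤ P'.asIdeal from hle))) := dif_pos hle
      rw [this, LinearMap.mem_ker, Fm_Rsmul]
      apply F_kill I q.asIdeal (e+1) 1 a q.isPrime.one_notMem
      intro x
      rw [one_mul]
      exact quot_kill _ _ ((Finset.inf_le hP' : S.inf PrimeSpectrum.asIdeal ≤ _) ha) _

end nonvan
end OE


namespace OE
open Function

section cdb
variable [IsNoetherianRing R] (I : Ideal R) (q : PrimeSpectrum R)

lemma dl_bound : ∃ B : ℕ, ∀ P : PrimeSpectrum R, P ≤ q → dl q P ≤ B := by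
  have h1 : Order.height q < ⊤ := by
    have := Ideal.height_ne_top q.isPrime.ne_top
    rw [PrimeSpectrum.height_eq_orderHeight] at this
    exact lt_top_iff_ne_top.2 this
  refine ⟨(Order.height q).toNat, fun P hP => ?_⟩
  have h2 := Order.coheight_le_krullDim (⟨P, hP⟩ : Set.Iic q)
  rw [← Order.height_eq_krullDim_Iic, dl_coe] at h2
  have h3 : (dl q P : ℕ∞) ≤ Order.height q := by exact_mod_cast h2
  rw [← ENat.natCast_toNat h1.ne] at h3
  exact_mod_cast h3

lemma notMem_supp {P : PrimeSpectrum R} {X : Type} [AddCommGroup X] [Module R X]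
    [Module.Finite R X] (h : P ∉ Module.support R X) : ∃ s ∉ P.asIdeal, ∀ x : X, s • x = 0 := by
  rw [Module.mem_support_iff_of_finite] at h
  obtain ⟨s, hs, hs'⟩ := SetLike.not_le_iff_exists.1 h
  exact ⟨s, hs', Module.mem_annihilator.1 hs⟩

lemma supp_of_kill {P : PrimeSpectrum R} {X : Type} [AddCommGroup X] [Module R X]
    [Module.Finite R X] (h : P ∈ Module.support R X) (s : R) (hs : ∀ x : X, s • x = 0) :
    s ∈ P.asIdeal := by
  rw [Module.mem_support_iff_of_finite] at h
  exact h (Module.mem_annihilator.2 hs)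

lemma supp_QX_iff (x : R) (X : Type) [AddCommGroup X] [Module R X] [Module.Finite R X]
    (P : PrimeSpectrum R) (h : P ∈ Module.support R X) (hx : x ∈ P.asIdeal) :
    P ∈ Module.support R (QX x X) := by
  have h1 : P ∈ Module.support R (QuotSMulTop x X) := by
    rw [Module.support_quotSMulTop]
    exact ⟨h, by simpa [PrimeSpectrum.mem_zeroLocus] using hx⟩
  by_contra hc
  obtain ⟨s, hs, hk⟩ := notMem_supp hc
  refine hs (supp_of_kill h1 s fun y => ?_)
  obtain ⟨y, rfl⟩ := Submodule.mkQ_surjective _ y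
  rw [← map_smul, Submodule.mkQ_apply, Submodule.Quotient.mk_eq_zero]
  have h2 := hk (Submodule.Quotient.mk y)
  rw [← Submodule.Quotient.mk_smul, Submodule.Quotient.mk_eq_zero] at h2
  obtain ⟨z, hz⟩ := h2
  rw [← hz]
  exact Submodule.smul_mem_pointwise_smul _ _ _ Submodule.mem_top

lemma exists_func (P : PrimeSpectrum R) (X : Type) [AddCommGroup X] [Module R X] [Module.Finite R X]
    (h : P ∈ Module.support R X) :
    ∃ N : Submodule R X, ∃ (φ : (R ⧸ P.asIdeal) →ₗ[R] X ⧸ N) (ψ : (X ⧸ N) →ₗ[R] R ⧸ P.asIdeal),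
      ∃ a ∉ P.asIdeal, ∀ x, ψ (φ x) = a • x := by
  obtain ⟨N, hN, hmax⟩ := set_has_maximal_iff_noetherian.2 (inferInstance : IsNoetherian R X)
    {N : Submodule R X | P ∈ Module.support R (X ⧸ N)} ⟨⊥, by
      change P ∈ Module.support R (X ⧸ (⊥ : Submodule R X))
      rw [LinearEquiv.support_eq (Submodule.quotEquivOfEqBot _ rfl)]; exact h⟩
  have hN : P ∈ Module.support R (X ⧸ N) := hN
  have hinj : ∀ {Z : Type} [AddCommGroup Z] [Module R Z] (g : (X ⧸ N) →ₗ[R] Z), Surjective g →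
      P ∈ Module.support R Z → Injective g := by
    intro Z _ _ g hg hZ
    have e := (g ∘ₗ N.mkQ).quotKerEquivOfSurjective (hg.comp N.mkQ_surjective)
    have hle : N ≤ LinearMap.ker (g ∘ₗ N.mkQ) := by
      intro x hx
      rw [LinearMap.mem_ker, LinearMap.comp_apply, Submodule.mkQ_apply,
        (Submodule.Quotient.mk_eq_zero N).2 hx, map_zero]
    have := hmax (LinearMap.ker (g ∘ₗ N.mkQ)) (by
      change P ∈ Module.support R (X ⧸ _)
      rw [LinearEquiv.support_eq e]; exact hZ)
    have heq : N = LinearMap.ker (g ∘ₗ N.mkQ) := by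
      by_contra hne
      exact this (lt_of_le_of_ne hle hne)
    rw [injective_iff_map_eq_zero]
    intro y hy
    obtain ⟨y, rfl⟩ := N.mkQ_surjective y
    rw [Submodule.mkQ_apply, Submodule.Quotient.mk_eq_zero, heq]
    exact hy
  have h1 : ∀ a ∈ P.asIdeal, ∀ y : X ⧸ N, a • y = 0 := by
    intro a ha y
    apply hinj (LinearMap.range (mulL (X ⧸ N) a)).mkQ (Submodule.mkQ_surjective _)
      (supp_QX_iff a _ P hN ha)
    rw [map_zero, Submodule.mkQ_apply, Submodule.Quotient.mk_eq_zero]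
    exact ⟨y, rfl⟩
  have h2 : ∀ a ∉ P.asIdeal, ∀ y : X ⧸ N, a • y = 0 → y = 0 := by
    intro a ha y hy
    have := hinj (mulL (X ⧸ N) a).rangeRestrict (LinearMap.surjective_rangeRestrict _) (by
      by_contra hc
      obtain ⟨s, hs, hk⟩ := notMem_supp hc
      have : s * a ∈ P.asIdeal := supp_of_kill hN _ fun y => by
        rw [mul_smul]
        exact congrArg Subtype.val (hk ⟨a • y, y, rfl⟩)
      exact (P.isPrime.mem_or_mem this).elim hs ha)
    apply this
    rw [map_zero]
    exact Subtype.ext hy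
  have hnt : Nontrivial (X ⧸ N) := by
    by_contra hc
    rw [not_nontrivial_iff_subsingleton] at hc
    rw [Module.support_eq_empty] at hN
    exact hN
  obtain ⟨z, hz⟩ := exists_ne (0 : X ⧸ N)
  have hker : P.asIdeal ≤ LinearMap.ker (LinearMap.toSpanSingleton R _ z) := fun a ha => by
    rw [LinearMap.mem_ker, LinearMap.toSpanSingleton_apply]; exact h1 a ha z
  let φ : (R ⧸ P.asIdeal) →ₗ[R] X ⧸ N := Submodule.liftQ _ (LinearMap.toSpanSingleton R _ z) hker
  have hφ : Injective φ := by
    apply LinearMap.ker_eq_bot.1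
    apply Submodule.ker_liftQ_eq_bot
    intro a ha
    by_contra hc
    exact hz (h2 a hc z ha)
  obtain ⟨a, ha, hk⟩ : ∃ a ∉ P.asIdeal, ∀ y : (X ⧸ N) ⧸ LinearMap.range φ, a • y = 0 := by
    apply notMem_supp
    intro hc
    apply hz
    apply hinj _ (Submodule.mkQ_surjective _) hc
    rw [map_zero, Submodule.mkQ_apply, Submodule.Quotient.mk_eq_zero]
    refine ⟨Submodule.Quotient.mk 1, ?_⟩
    rw [Submodule.liftQ_apply, LinearMap.toSpanSingleton_apply, one_smul]
  have hmem : ∀ y, mulL (X ⧸ N) a y ∈ LinearMap.range φ := by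
    intro y
    rw [← Submodule.Quotient.mk_eq_zero]
    exact hk (Submodule.Quotient.mk y)
  let e := LinearEquiv.ofInjective φ hφ
  refine ⟨N, φ, e.symm.toLinearMap ∘ₗ LinearMap.codRestrict _ (mulL (X ⧸ N) a) hmem, a, ha, ?_⟩
  intro x
  rw [LinearMap.comp_apply, LinearEquiv.coe_coe, LinearEquiv.symm_apply_eq]
  apply Subtype.ext
  rw [LinearEquiv.ofInjective_apply, map_smul]
  rfl

variable (hq : q.asIdeal ∈ I.minimalPrimes)
include hq

lemma F_top_nonvan (X : Type) [AddCommGroup X] [Module R X] [Module.Finite R X] (d : ℕ)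
    (hd : ∀ Q ∈ Module.support R X, Q ≤ q → dl q Q ≤ d) (P : PrimeSpectrum R) (hPq : P ≤ q)
    (hP : P ∈ Module.support R X) (hdP : dl q P = d) : Nontrivial (FF I q.asIdeal d X) := by
  obtain ⟨N, φ, ψ, a, ha, hψ⟩ := exists_func P X hP
  by_contra hc
  rw [not_nontrivial_iff_subsingleton] at hc
  have h1 : Surjective (Fm I q.asIdeal d N.mkQ) := by
    refine F_surj_of I q.asIdeal d N.subtype N.mkQ (exact_sub N).1 (exact_sub N).2.1
      (exact_sub N).2.2 (F_vanish I q hq _ _ ?_)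
    intro Q hQ hQq
    exact Nat.lt_succ_of_le (hd Q (Module.support_subset_of_injective _ (exact_sub N).1 hQ) hQq)
  have h2 := h1.subsingleton
  have h3 := F_nonvan I q hq d P hPq hdP
  obtain ⟨w, hw⟩ := exists_ne (0 : FF I q.asIdeal d (R ⧸ P.asIdeal))
  apply hw
  obtain ⟨v, rfl⟩ := F_zero_surj I q.asIdeal d a (reg_quot P a ha) (by
    refine F_vanish_quot I q hq d hdP.le a ha ?_ ?_
    · intro p hp x
      obtain ⟨x, rfl⟩ := Submodule.mkQ_surjective _ x
      rw [← map_smul, quot_kill _ _ hp, map_zero]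
    · intro x
      obtain ⟨x, rfl⟩ := Submodule.mkQ_surjective _ x
      rw [← map_smul, Submodule.mkQ_apply, Submodule.Quotient.mk_eq_zero]
      exact ⟨x, rfl⟩) w
  have : a • (LinearMap.id : (R ⧸ P.asIdeal) →ₗ[R] R ⧸ P.asIdeal) = ψ ∘ₗ φ := by
    refine LinearMap.ext fun x => ?_
    rw [LinearMap.comp_apply, hψ]; rfl
  rw [← Fm_smul_id, this, Fm_comp, Subsingleton.elim (Fm I q.asIdeal d φ v) 0, map_zero]

lemma cd_bound (X : Type) [AddCommGroup X] [Module R X] [Module.Finite R X] (c : ℕ)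
    (h : ∀ i, c < i → Subsingleton (FF I q.asIdeal i X)) :
    ∀ Q ∈ Module.support R X, Q ≤ q → dl q Q ≤ c := by
  obtain ⟨B, hB⟩ := dl_bound q
  suffices hs : ∀ k, ∀ Q ∈ Module.support R X, Q ≤ q → dl q Q ≤ c + (B - k) by
    intro Q hQ hQq
    simpa using hs B Q hQ hQq
  intro k
  induction k with
  | zero => intro Q _ hQq; have := hB Q hQq; omega
  | succ k ih =>
    intro Q hQ hQq
    by_contra hc
    have h1 := ih Q hQ hQq
    have h2 : dl q Q = c + (B - k) := by omega
    have h3 := F_top_nonvan I q hq X _ ih Q hQq hQ h2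
    have h4 := h (c + (B - k)) (by omega)
    exact not_subsingleton _ h4

end cdb
end OE


namespace OE
open Function

section clA
variable [IsNoetherianRing R] (I : Ideal R) (q : PrimeSpectrum R)

/-- associated primes -/
def AssP (X : Type) [AddCommGroup X] [Module R X] (P : PrimeSpectrum R) : Prop :=
  ∃ z : X, ∀ r : R, r • z = 0 ↔ r ∈ P.asIdeal

lemma assP_iff (X : Type) [AddCommGroup X] [Module R X] (P : PrimeSpectrum R) :
    AssP X P ↔ P.asIdeal ∈ associatedPrimes R X := by
  rw [AssociatedPrimes.mem_iff, isAssociatedPrime_iff]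
  constructor
  · rintro ⟨z, hz⟩
    refine ⟨P.isPrime, z, ?_⟩
    ext r
    rw [Submodule.mem_colon_singleton, Submodule.mem_bot, hz]
  · rintro ⟨-, z, hz⟩
    refine ⟨z, fun r => ?_⟩
    rw [hz, Submodule.mem_colon_singleton, Submodule.mem_bot]

lemma assP_finite (X : Type) [AddCommGroup X] [Module R X] [Module.Finite R X] :
    {P : PrimeSpectrum R | AssP X P}.Finite := by
  have : {P : PrimeSpectrum R | AssP X P} = PrimeSpectrum.asIdeal ⁻¹' (associatedPrimes R X) := by
    ext P; exact assP_iff X P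
  rw [this]
  exact (associatedPrimes.finite R X).preimage fun P _ Q _ h => PrimeSpectrum.ext h

lemma assP_inj {X Y : Type} [AddCommGroup X] [Module R X] [AddCommGroup Y] [Module R Y]
    (f : X →ₗ[R] Y) (hf : Injective f) {P : PrimeSpectrum R} (h : AssP X P) : AssP Y P := by
  obtain ⟨z, hz⟩ := h
  refine ⟨f z, fun r => ?_⟩
  rw [← hz, ← map_smul, map_eq_zero_iff f hf]

lemma assP_min {X : Type} [AddCommGroup X] [Module R X] [Module.Finite R X] {P : PrimeSpectrum R}
    (h : P.asIdeal ∈ (Module.annihilator R X).minimalPrimes) : AssP X P := by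
  rw [assP_iff]
  exact Module.associatedPrimes.minimalPrimes_annihilator_subset_associatedPrimes R X h

lemma supp_min {X : Type} [AddCommGroup X] [Module R X] [Module.Finite R X] {Q : PrimeSpectrum R}
    (h : Q ∈ Module.support R X) : ∃ P ≤ Q, AssP X P := by
  rw [Module.mem_support_iff_of_finite] at h
  obtain ⟨p, hp, hle⟩ := Ideal.exists_minimalPrimes_le h
  exact ⟨⟨p, hp.1.1⟩, hle, assP_min hp⟩

lemma assP_supp {X : Type} [AddCommGroup X] [Module R X] [Module.Finite R X] {P : PrimeSpectrum R}
    (h : AssP X P) : P ∈ Module.support R X := by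
  obtain ⟨z, hz⟩ := h
  rw [Module.mem_support_iff_of_finite]
  intro a ha
  exact (hz a).1 (Module.mem_annihilator.1 ha z)

/-- bounded torsion -/
def Bd (I : Ideal R) (q : PrimeSpectrum R) (i : ℕ) (X : Type) [AddCommGroup X] [Module R X]
    (k : ℕ) : Prop := ∀ a ∈ I ^ k, ∀ t : FF I q.asIdeal i X, a • t = 0

lemma artin_rees (x : R) {X : Type} [AddCommGroup X] [Module R X] [Module.Finite R X] (z : X) :
    ∃ l : ℕ, ∀ (j : ℕ) (r : R) (m : X), r • z = x ^ (l + j) • m → ∃ r' : R, r • z = (x ^ j * r') • z := by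
  obtain ⟨l, hl⟩ := Ideal.exists_pow_inf_eq_pow_smul (Ideal.span {x}) (Submodule.span R {z})
  refine ⟨l, fun j r m h => ?_⟩
  have h1 : r • z ∈ (Ideal.span {x}) ^ (l + j) • (⊤ : Submodule R X) ⊓ Submodule.span R {z} := by
    refine ⟨?_, Submodule.smul_mem _ _ (Submodule.mem_span_singleton_self z)⟩
    rw [Ideal.span_singleton_pow, h]
    exact Submodule.smul_mem_smul (Ideal.mem_span_singleton_self _) Submodule.mem_top
  rw [hl _ (by omega), Nat.add_sub_cancel_left, Ideal.span_singleton_pow,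
    Submodule.ideal_span_singleton_smul, Submodule.mem_smul_pointwise_iff_exists] at h1
  obtain ⟨b, hb, hb'⟩ := h1
  obtain ⟨r', rfl⟩ := Submodule.mem_span_singleton.1 hb.2
  exact ⟨r', by rw [← hb', mul_smul]⟩

lemma assP_QX {X : Type} [AddCommGroup X] [Module R X] [Module.Finite R X] {P P' : PrimeSpectrum R}
    (x : R) (hP : AssP X P) (hP' : P'.asIdeal ∈ (P.asIdeal ⊔ Ideal.span {x}).minimalPrimes) :
    ∃ n, AssP (QX (x ^ (n+1)) X) P' := by
  obtain ⟨z, hz⟩ := hP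
  obtain ⟨l, hl⟩ := artin_rees x z
  refine ⟨l, ?_⟩
  let w : QX (x ^ (l+1)) X := Submodule.Quotient.mk z
  let D := Submodule.span R {w}
  apply assP_inj D.subtype D.injective_subtype
  apply assP_min
  have hann : ∀ r, r ∈ Module.annihilator R D ↔ ∃ m, r • z = x ^ (l+1) • m := by
    intro r
    have : r ∈ Module.annihilator R D ↔ r • w = 0 := Submodule.mem_annihilator_span_singleton w r
    rw [this]
    change r • (Submodule.Quotient.mk z : QX (x ^ (l+1)) X) = 0 ↔ _
    rw [← Submodule.Quotient.mk_smul, Submodule.Quotient.mk_eq_zero, LinearMap.mem_range]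
    constructor
    · rintro ⟨m, hm⟩; exact ⟨m, hm.symm⟩
    · rintro ⟨m, hm⟩; exact ⟨m, hm.symm⟩
  have hle : Module.annihilator R D ≤ P.asIdeal ⊔ Ideal.span {x} := by
    intro r hr
    obtain ⟨m, hm⟩ := (hann r).1 hr
    obtain ⟨r', hr'⟩ := hl 1 r m hm
    have : r - x ^ 1 * r' ∈ P.asIdeal := by rw [← hz, sub_smul, hr', sub_self]
    rw [show r = (r - x ^ 1 * r') + r' * x by ring]
    exact add_mem (Ideal.mem_sup_left this)
      (Ideal.mem_sup_right (Ideal.mul_mem_left _ _ (Ideal.mem_span_singleton_self x)))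
  refine ⟨⟨P'.isPrime, hle.trans hP'.1.2⟩, fun Q hQ hQP => hP'.2 ⟨hQ.1, ?_⟩ hQP⟩
  refine sup_le (fun r hr => hQ.2 ((hann r).2 ⟨0, ?_⟩)) ?_
  · rw [(hz r).2 hr, smul_zero]
  · rw [Ideal.span_singleton_le_iff_mem]
    exact hQ.1.mem_of_pow_mem (l+1) (hQ.2 ((hann _).2 ⟨z, rfl⟩))

lemma loc_tors : ∀ (X : Type) [AddCommGroup X] [Module R X] [Module.Finite R X],
    I ≤ q.asIdeal → (∀ Q ∈ Module.support R X, Q ≤ q → Q = q) →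
    ∃ s ∉ q.asIdeal, ∃ k : ℕ, ∀ a ∈ I ^ k, ∀ x : X, s • a • x = 0 := by
  intro X _ _ hX hI
  induction hX using IsNoetherianRing.induction_on_isQuotientEquivQuotientPrime R with
  | subsingleton N => exact fun _ => ⟨1, q.isPrime.one_notMem, 0, fun _ _ _ => Subsingleton.elim _ _⟩
  | quotient N P e =>
    intro h
    rw [LinearEquiv.support_eq e] at h
    by_cases hP : P ≤ q
    · have := h P ((supp_quot _ _).2 le_rfl) hP
      subst this
      refine ⟨1, P.isPrime.one_notMem, 1, fun a ha x => ?_⟩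
      rw [one_smul]
      apply e.injective
      rw [map_smul, map_zero]
      exact quot_kill _ _ (hI (by simpa using ha)) _
    · obtain ⟨s, hs, hs'⟩ := SetLike.not_le_iff_exists.1 (show ¬ P.asIdeal ≤ q.asIdeal from hP)
      refine ⟨s, hs', 0, fun a ha x => ?_⟩
      apply e.injective
      rw [map_smul, map_zero]
      exact quot_kill _ _ hs _
  | exact N₁ N₂ N₃ f g hf hg hfg h₁ h₃ =>
    intro h
    rw [Module.support_of_exact hfg hf hg] at h
    obtain ⟨s, hs, k, hk⟩ := h₁ fun Q hQ => h Q (Or.inl hQ)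
    obtain ⟨s', hs', k', hk'⟩ := h₃ fun Q hQ => h Q (Or.inr hQ)
    refine ⟨s * s', fun hc => (q.isPrime.mem_or_mem hc).elim hs hs', k + k', fun a ha x => ?_⟩
    rw [pow_add] at ha
    refine Submodule.mul_induction_on ha ?_ ?_
    · intro b hb c hc
      obtain ⟨y, hy⟩ := (hfg (s' • c • x)).1 (by rw [map_smul, map_smul]; exact hk' c hc _)
      have : (s * s') • (b * c) • x = s • b • s' • c • x := by
        simp only [← mul_smul]; ring_nf
      rw [this, ← hy, ← map_smul, ← map_smul, hk b hb, map_zero]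
    · intro a b ha hb
      rw [add_smul, smul_add, ha, hb, add_zero]

lemma Bd_quot {X Y : Type} [AddCommGroup X] [Module R X] [AddCommGroup Y] [Module R Y] (i : ℕ)
    (f : X →ₗ[R] Y) (h : Surjective (Fm I q.asIdeal i f)) {k : ℕ} (hk : Bd I q i X k) : Bd I q i Y k := by
  intro a ha t
  obtain ⟨t, rfl⟩ := h t
  rw [← Fm_Rsmul, hk a ha, map_zero]

variable (hq : q.asIdeal ∈ I.minimalPrimes)
include hq

/-- X/yX inherits bounds -/
lemma Bd_QX {X : Type} [AddCommGroup X] [Module R X] [Module.Finite R X] (y : R)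
    (hy : ∀ Q, AssP X Q → Q < q → y ∉ Q.asIdeal) (i k k' : ℕ) (h0 : Bd I q i X k)
    (h1 : Bd I q (i+1) X k') : Bd I q i (QX y X) (k + k') := by
  set f := mulL X y
  have hker : ∀ j, Subsingleton (FF I q.asIdeal (j+1) (LinearMap.ker f)) := by
    intro j
    apply F_vanish I q hq
    intro Q hQ hQq
    obtain ⟨P, hPQ, hP⟩ := supp_min hQ
    have hyP : y ∈ P.asIdeal := supp_of_kill (assP_supp hP) y fun x => Subtype.ext x.2
    have hPX := assP_inj (LinearMap.ker f).subtype (Submodule.injective_subtype _) hP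
    have : P = q := by
      by_contra hne
      exact hy P hPX (lt_of_le_of_ne (hPQ.trans hQq) hne) hyP
    rw [this] at hPQ
    rw [le_antisymm hQq hPQ, dl_self]
    omega
  have hr : Bd I q (i+1) (LinearMap.range f) k' := by
    refine Bd_quot I q (i+1) f.rangeRestrict ?_ h1
    refine F_surj_of I q.asIdeal (i+1) (LinearMap.ker f).subtype f.rangeRestrict
      (Submodule.injective_subtype _) (LinearMap.surjective_rangeRestrict _) ?_ (hker _)
    have := LinearMap.exact_subtype_ker_map f.rangeRestrict
    intro x
    have h2 := this x
    rw [h2]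
    simp
  obtain ⟨-, δ, h2, h3⟩ := F_les I q.asIdeal i (LinearMap.range f).subtype (LinearMap.range f).mkQ
    (exact_sub _).1 (exact_sub _).2.1 (exact_sub _).2.2
  intro a ha t
  rw [pow_add] at ha
  refine Submodule.mul_induction_on ha ?_ ?_
  · intro b hb c hc
    obtain ⟨u, hu⟩ := (h2 (c • t)).1 (by rw [LinearMap.map_smul_of_tower]; exact hr c hc _)
    rw [mul_smul, ← hu, ← Fm_Rsmul, h0 b hb, map_zero]
  · intro a b ha hb
    rw [add_smul, ha, hb, add_zero]

lemma claimA (c : ℕ) : ∀ (X : Type) [AddCommGroup X] [Module R X] [Module.Finite R X],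
    (∀ i < c, ∃ k, Bd I q i X k) → ∀ P, AssP X P → P < q → c ≤ dl q P := by
  classical
  induction c with
  | zero => intros; omega
  | succ c ih =>
    intro X _ _ _ hb P hP hlt
    have hd1 := dl_lt hlt le_rfl
    rw [dl_self] at hd1
    cases c with
    | zero => omega
    | succ c =>
    obtain ⟨x, hxI, hx⟩ := avoid q I ((assP_finite X).toFinset.filter (fun Q => Q < q)) (by
      intro Q hQ hle
      rw [Finset.mem_filter] at hQ
      exact not_le_of_gt hQ.2 (hq.2 ⟨Q.isPrime, hle⟩ hQ.2.le))
    replace hx : ∀ Q, AssP X Q → Q < q → x ∉ Q.asIdeal := fun Q h1 h2 => hx Q (by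
      rw [Finset.mem_filter, Set.Finite.mem_toFinset]; exact ⟨h1, h2⟩)
    have hxn : ∀ n Q, AssP X Q → Q < q → x ^ n ∉ Q.asIdeal := fun n Q h1 h2 h3 =>
      hx Q h1 h2 (Q.isPrime.mem_of_pow_mem n h3)
    have hxq : x ∈ q.asIdeal := hq.1.2 hxI
    by_cases hbet : ∃ P1, P < P1 ∧ P1 < q
    · obtain ⟨P1, h1, h2⟩ := hbet
      obtain ⟨P', hm, hle, hPP', hxP'⟩ := exists_min P q hlt.le x hxq
      have hlt' : P < P' := lt_of_le_of_ne hPP' (by rintro rfl; exact hx _ hP hlt hxP')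
      have hne : P' < q := lt_of_le_of_ne hle (by rintro rfl; exact krull_rel hm h1 h2)
      obtain ⟨n, hn⟩ := assP_QX x hP hm
      have := ih (QX (x ^ (n+1)) X) (fun i hi => by
        obtain ⟨k, hk⟩ := hb i (by omega)
        obtain ⟨k', hk'⟩ := hb (i+1) (by omega)
        exact ⟨_, Bd_QX I q hq _ (hxn _) i k k' hk hk'⟩) P' hn hne
      have := dl_lt hlt' hle
      omega
    · exfalso
      push Not at hbet
      obtain ⟨k, hk⟩ := hb 0 (by omega)
      obtain ⟨k', hk'⟩ := hb 1 (by omega)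
      have hxP := hx P hP hlt
      obtain ⟨z, hz⟩ := hP
      obtain ⟨l, hl⟩ := artin_rees x z
      set n := l + (k + k' + 1) with hn
      have hbd := Bd_QX I q hq _ (hxn n) 0 k k' hk hk'
      let w : QX (x ^ n) X := Submodule.Quotient.mk z
      obtain ⟨s, hs, m, hm⟩ := loc_tors I q (Submodule.span R {w}) hq.1.2 (by
        intro Q hQ hQq
        have hw : ∀ r : R, r • w = 0 → ∀ v : Submodule.span R {w}, r • v = 0 := by
          rintro r hr ⟨v, hv⟩
          obtain ⟨r', rfl⟩ := Submodule.mem_span_singleton.1 hv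
          apply Subtype.ext
          change r • r' • w = 0
          rw [smul_comm, hr, smul_zero]
        have hPQ : P ≤ Q := fun r hr => supp_of_kill hQ r (hw r (by
          change Submodule.Quotient.mk (r • z) = _
          rw [(hz r).2 hr]; rfl))
        have hxQ : x ∈ Q.asIdeal := Q.isPrime.mem_of_pow_mem n (supp_of_kill hQ _ (hw _ (by
          change Submodule.Quotient.mk (x ^ n • z) = _
          rw [Submodule.Quotient.mk_eq_zero]
          exact ⟨z, rfl⟩)))
        have hPQ' : P < Q := lt_of_le_of_ne hPQ (by rintro rfl; exact hxP hxQ)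
        by_contra hne
        exact hbet Q hPQ' (lt_of_le_of_ne hQq hne))
      obtain ⟨e, he⟩ := theta_range I (s • w) m (fun a ha => by
        have := congrArg Subtype.val (hm a ha ⟨w, Submodule.mem_span_singleton_self w⟩)
        rw [smul_comm]; exact this)
      have h0 := hbd (x ^ (k + k')) (Ideal.pow_mem_pow hxI _) (LocalizedModule.mk e 1)
      rw [LocalizedModule.smul'_mk, mk_zero_iff] at h0
      obtain ⟨s', hs'⟩ := h0
      have h1 : (s' : R) • x ^ (k + k') • e = 0 := hs'
      have h2 := congrArg (theta I _) h1
      rw [map_smul, map_smul, he, map_zero] at h2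
      have h3 : (s' * (x ^ (k + k') * s)) • w = 0 := by rw [mul_smul, mul_smul]; exact h2
      change Submodule.Quotient.mk ((s' * (x ^ (k + k') * s)) • z) = (0 : QX (x ^ n) X) at h3
      rw [Submodule.Quotient.mk_eq_zero] at h3
      obtain ⟨y, hy⟩ := h3
      obtain ⟨r, hr⟩ := hl (k + k' + 1) _ y hy.symm
      have h4 : x ^ (k + k') * (s' * s - x * r) ∈ P.asIdeal := by
        rw [← hz, show x ^ (k + k') * (s' * s - x * r) = s' * (x ^ (k + k') * s) -
          x ^ (k + k' + 1) * r by ring, sub_smul, hr, sub_self]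
      have h5 := (P.isPrime.mem_or_mem h4).resolve_left fun h => hxP (P.isPrime.mem_of_pow_mem _ h)
      have h6 : (s' : R) * s ∈ q.asIdeal := by
        rw [show (s' : R) * s = (s' * s - x * r) + r * x by ring]
        exact add_mem (hlt.le h5) (Ideal.mul_mem_left _ _ hxq)
      exact (q.isPrime.mem_or_mem h6).elim s'.2 hs

end clA
end OE


namespace OE
open Function RingTheory.Sequence

/-- a maximal regular sequence of length equal to the dimension -/
def HasReg (A : Type) [CommRing A] [IsLocalRing A] (N : Type) [AddCommGroup N] [Module A N] : Prop :=
  ∃ rs : List A, (∀ r ∈ rs, r ∈ IsLocalRing.maximalIdeal A) ∧ IsRegular N rs ∧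
    Module.supportDim A N = (rs.length : WithBot ℕ∞)

lemma HasReg.equiv {A : Type} [CommRing A] [IsLocalRing A] {N N' : Type} [AddCommGroup N]
    [Module A N] [AddCommGroup N'] [Module A N'] (e : N ≃ₗ[A] N') (h : HasReg A N) : HasReg A N' := by
  obtain ⟨rs, h1, h2, h3⟩ := h
  exact ⟨rs, h1, (e.isRegular_congr rs).1 h2, by rw [← h3, Module.supportDim_eq_of_equiv e]⟩

lemma HasReg.cons {A : Type} [CommRing A] [IsLocalRing A] [IsNoetherianRing A] {N : Type}
    [AddCommGroup N] [Module A N] [Module.Finite A N] (x : A) (hx : x ∈ IsLocalRing.maximalIdeal A)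
    (hr : IsSMulRegular N x) (h : HasReg A (QuotSMulTop x N)) : HasReg A N := by
  obtain ⟨rs, h1, h2, h3⟩ := h
  refine ⟨x :: rs, ?_, (isRegular_cons_iff _ _ _).2 ⟨hr, h2⟩, ?_⟩
  · intro r hr
    rcases List.mem_cons.1 hr with rfl | hr
    · exact hx
    · exact h1 r hr
  · rw [← Module.supportDim_quotSMulTop_succ_eq_supportDim hr hx, h3, List.length_cons]
    push_cast
    rfl

lemma HasReg.isCM {A : Type} [CommRing A] [IsLocalRing A] [IsNoetherianRing A] {N : Type}
    [AddCommGroup N] [Module A N] [Module.Finite A N] [Nontrivial N] (h : HasReg A N) :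
    IsCMMod A N := by
  obtain ⟨rs, h1, h2, h3⟩ := h
  have hlt : IsLocalRing.maximalIdeal A • (⊤ : Submodule A (ModuleCat.of A N)) < ⊤ := by
    apply lt_top_iff_ne_top.2
    exact (Submodule.top_ne_ideal_smul_of_le_jacobson_annihilator
      (IsLocalRing.maximalIdeal_le_jacobson _)).symm
  have hsupp : Module.support A (ModuleCat.of A (A ⧸ IsLocalRing.maximalIdeal A)) =
      PrimeSpectrum.zeroLocus (IsLocalRing.maximalIdeal A) := by
    change Module.support A (A ⧸ IsLocalRing.maximalIdeal A) = _
    rw [Module.support_eq_zeroLocus, Ideal.annihilator_quotient]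
  have e : ∀ i, Subsingleton (extH (IsLocalRing.maximalIdeal A) i N) ↔
      Subsingleton (Abelian.Ext (ModuleCat.of A (A ⧸ IsLocalRing.maximalIdeal A))
        (ModuleCat.of A N) i) := fun i => (oldnew _ _ i).toEquiv.subsingleton_congr
  have hfin : Module.Finite A (ModuleCat.of A (A ⧸ IsLocalRing.maximalIdeal A)) :=
    inferInstanceAs (Module.Finite A (A ⧸ IsLocalRing.maximalIdeal A))
  have hfinN : Module.Finite A (ModuleCat.of A N) := inferInstanceAs (Module.Finite A N)
  have k1 : ∀ i < rs.length, Subsingleton (extH (IsLocalRing.maximalIdeal A) i N) := fun i hi =>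
    (e i).2 (ModuleCat.subsingleton_ext_of_exists_isRegular _ _ hsupp.le _ hlt rs h1 h2 i hi)
  have k2 : Nontrivial (extH (IsLocalRing.maximalIdeal A) rs.length N) := by
    by_contra hc
    rw [not_nontrivial_iff_subsingleton] at hc
    obtain ⟨rs', l1, l2, l3⟩ := ModuleCat.exists_isRegular_of_exists_subsingleton_ext
      (IsLocalRing.maximalIdeal A) (rs.length + 1) (ModuleCat.of A N) hlt
      (ModuleCat.of A (A ⧸ IsLocalRing.maximalIdeal A)) hsupp (fun i hi => (e i).1 (by
        rcases Nat.lt_succ_iff_lt_or_eq.1 hi with hi | rfl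
        · exact k1 i hi
        · exact hc))
    have l4 : IsRegular N rs' := l3
    have l5 := Module.supportDim_add_length_eq_supportDim_of_isRegular rs' l4
    rw [h3, l1] at l5
    generalize Module.supportDim A (N ⧸ Ideal.ofList rs' • (⊤ : Submodule A N)) = d at l5
    induction d with
    | bot => simp at l5
    | coe d =>
      have l6 : d + ((rs.length + 1 : ℕ) : ℕ∞) = (rs.length : ℕ∞) := by exact_mod_cast l5
      have l7 : ((rs.length + 1 : ℕ) : ℕ∞) ≤ (rs.length : ℕ∞) := l6 ▸ le_add_self
      have l8 : rs.length + 1 ≤ rs.length := by exact_mod_cast l7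
      omega
  have hd : depthE A N = (rs.length : ℕ∞) := by
    apply le_antisymm
    · exact sInf_le ⟨_, rfl, k2⟩
    · apply le_sInf
      rintro _ ⟨k, rfl, hk⟩
      by_contra hlt
      have : k < rs.length := by
        rw [not_le] at hlt
        exact_mod_cast hlt
      exact not_subsingleton_iff_nontrivial.2 hk (k1 k this)
  unfold IsCMMod dimE
  rw [← Module.supportDim_eq_ringKrullDim_quotient_annihilator, h3, hd]
  rfl

section locz
variable (p : PrimeSpectrum R) (M : Type) [AddCommGroup M] [Module R M]

/-- localized module -/
abbrev LM := LocalizedModule p.asIdeal.primeCompl M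

lemma LM_quot (x : R) : Nonempty (QuotSMulTop (algebraMap R (Localization.AtPrime p.asIdeal) x) (LM p M)
    ≃ₗ[Localization.AtPrime p.asIdeal] LM p (QX x M)) := by
  let S := p.asIdeal.primeCompl
  let f : LM p M →ₗ[Localization.AtPrime p.asIdeal] LM p M := LocalizedModule.map S (mulL M x)
  let g : LM p M →ₗ[Localization.AtPrime p.asIdeal] LM p (QX x M) :=
    LocalizedModule.map S (LinearMap.range (mulL M x)).mkQ
  have hex : Exact f g := LocalizedModule.map_exact S _ _ (LinearMap.exact_map_mkQ_range _)
  have hsurj : Surjective g := LocalizedModule.map_surjective S _ (Submodule.mkQ_surjective _)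
  refine ⟨(Submodule.quotEquivOfEq _ _ ?_).trans (hex.linearEquivOfSurjective hsurj)⟩
  ext t
  rw [Submodule.mem_smul_pointwise_iff_exists, LinearMap.mem_range]
  have hf : ∀ t, f t = algebraMap R (Localization.AtPrime p.asIdeal) x • t := by
    intro t
    induction t using LocalizedModule.induction_on with
    | h m s =>
      rw [algebraMap_smul, LocalizedModule.smul'_mk]
      exact LocalizedModule.map_mk _ _ _ _
  constructor
  · rintro ⟨y, -, rfl⟩; exact ⟨y, hf y⟩
  · rintro ⟨y, rfl⟩; exact ⟨y, trivial, (hf y).symm⟩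

variable [IsNoetherianRing R] [Module.Finite R M]

lemma LM_reg (x : R) (h : ∀ P, AssP M P → P ≤ p → x ∉ P.asIdeal) :
    IsSMulRegular (LM p M) (algebraMap R (Localization.AtPrime p.asIdeal) x) := by
  have hK : p ∉ Module.support R (LinearMap.ker (mulL M x)) := by
    intro hp
    obtain ⟨P, hP, hA⟩ := supp_min hp
    exact h P (assP_inj _ (Submodule.injective_subtype _) hA) hP
      (supp_of_kill (assP_supp hA) x fun y => Subtype.ext y.2)
  obtain ⟨s, hs, hk⟩ := notMem_supp hK
  rw [isSMulRegular_iff_right_eq_zero_of_smul]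
  intro t ht
  induction t using LocalizedModule.induction_on with
  | h m u =>
    rw [algebraMap_smul, LocalizedModule.smul'_mk, mk_zero_iff] at ht
    obtain ⟨c, hc⟩ := ht
    have hc' : x • (c : R) • m = 0 := by rw [smul_comm]; exact hc
    rw [mk_zero_iff]
    refine ⟨⟨s, hs⟩ * c, ?_⟩
    have := congrArg Subtype.val (hk ⟨(c : R) • m, hc'⟩)
    rw [mul_smul]
    exact this

lemma LM_dim0 (hp : p ∈ Module.support R M) (hmin : ∀ Q ∈ Module.support R M, Q ≤ p → Q = p) :
    HasReg (Localization.AtPrime p.asIdeal) (LM p M) := by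
  have hnt : Nontrivial (LM p M) := hp
  refine ⟨[], by simp, ?_, ?_⟩
  · exact IsRegular.nil _ _
  · have hne : Nonempty (Module.support (Localization.AtPrime p.asIdeal) (LM p M)) :=
      (Module.nonempty_support_of_nontrivial).to_subtype
    have hss : Subsingleton (Module.support (Localization.AtPrime p.asIdeal) (LM p M)) := by
      have key : ∀ Q ∈ Module.support (Localization.AtPrime p.asIdeal) (LM p M),
          PrimeSpectrum.comap (algebraMap R (Localization.AtPrime p.asIdeal)) Q = p := by
        intro Q hQ
        apply hmin
        · rw [Module.mem_support_iff_of_finite] at hQ ⊢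
          intro a ha
          apply hQ
          rw [Module.mem_annihilator] at ha ⊢
          intro t
          induction t using LocalizedModule.induction_on with
          | h m u => rw [algebraMap_smul, LocalizedModule.smul'_mk, ha, LocalizedModule.zero_mk]
        · intro a ha
          by_contra hap
          exact Q.isPrime.ne_top (Ideal.eq_top_of_isUnit_mem _ ha
            (IsLocalization.map_units (Localization.AtPrime p.asIdeal)
              (⟨a, hap⟩ : p.asIdeal.primeCompl)))
      refine ⟨fun a b => Subtype.ext ?_⟩
      exact PrimeSpectrum.localization_comap_injective _ p.asIdeal.primeCompl
        ((key _ a.2).trans (key _ b.2).symm)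
    simpa [Module.supportDim] using Order.krullDim_eq_zero
end locz

section main
variable [IsNoetherianRing R] (I : Ideal R) (q : PrimeSpectrum R) (hq : q.asIdeal ∈ I.minimalPrimes)
include hq

lemma main_ind (p : PrimeSpectrum R) (hpq : p < q) (c : ℕ) :
    ∀ (M : Type) [AddCommGroup M] [Module R M] [Module.Finite R M],
    (∀ Q ∈ Module.support R M, Q ≤ q → dl q Q ≤ c) → (∀ i < c, ∃ k, Bd I q i M k) →
    p ∈ Module.support R M → HasReg (Localization.AtPrime p.asIdeal) (LM p M) := by
  classical
  induction c with
  | zero =>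
    intro M _ _ _ h1 _ hp
    have := h1 p hp hpq.le
    have := dl_lt hpq le_rfl
    omega
  | succ c ih =>
    intro M _ _ _ h1 hb hp
    by_cases hmin : ∀ Q ∈ Module.support R M, Q ≤ p → Q = p
    · exact LM_dim0 p M hp hmin
    push Not at hmin
    obtain ⟨p', hp', hle, hne⟩ := hmin
    have hlt : p' < p := lt_of_le_of_ne hle hne
    have hA := claimA I q hq (c+1) M hb
    obtain ⟨x, hxp, hx⟩ := avoid q p.asIdeal ((assP_finite M).toFinset.filter (fun Q => Q < q)) (by
      intro Q hQ hpQ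
      rw [Finset.mem_filter, Set.Finite.mem_toFinset] at hQ
      have e1 := hA Q hQ.1 hQ.2
      have e2 := dl_lt (lt_of_lt_of_le hlt hpQ) hQ.2.le
      have e3 := h1 p' hp' (hle.trans hpq.le)
      omega)
    replace hx : ∀ Q, AssP M Q → Q < q → x ∉ Q.asIdeal := fun Q h1 h2 => hx Q (by
      rw [Finset.mem_filter, Set.Finite.mem_toFinset]; exact ⟨h1, h2⟩)
    refine HasReg.cons (algebraMap R (Localization.AtPrime p.asIdeal) x) ?_
      (LM_reg p M x fun P hP hPp => hx P hP (lt_of_le_of_lt hPp hpq)) ?_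
    · rw [IsLocalization.AtPrime.to_map_mem_maximal_iff _ p.asIdeal]; exact hxp
    obtain ⟨e⟩ := LM_quot p M x
    refine HasReg.equiv e.symm (ih (QX x M) ?_ ?_ ?_)
    · intro Q hQ hQq
      obtain ⟨hQM, hxQ⟩ := supp_QX x M Q hQ
      obtain ⟨Q0, hQ0, hass⟩ := supp_min hQM
      by_cases hQ0q : Q0 < q
      · have hl : Q0 < Q := lt_of_le_of_ne hQ0 (by rintro rfl; exact hx _ hass hQ0q hxQ)
        have := dl_lt hl hQq
        have := h1 Q0 (assP_supp hass) hQ0q.le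
        omega
      · have hQ0' : Q0 = q := by
          by_contra hc
          exact hQ0q (lt_of_le_of_ne (hQ0.trans hQq) hc)
        rw [le_antisymm hQq (hQ0' ▸ hQ0), dl_self]
        omega
    · intro i hi
      obtain ⟨k, hk⟩ := hb i (by omega)
      obtain ⟨k', hk'⟩ := hb (i+1) (by omega)
      exact ⟨_, Bd_QX I q hq x hx i k k' hk hk'⟩
    · exact supp_QX_iff x M p hp hxp
end main
end OE


namespace OE
lemma F_zero_of_sub (I : Ideal R) (q : PrimeSpectrum R) (i : ℕ) (M : Type) [AddCommGroup M] [Module R M]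
    [Subsingleton (locH I i M)] : Subsingleton (FF I q.asIdeal i M) := by
  refine ⟨fun a b => ?_⟩
  have h : ∀ t : FF I q.asIdeal i M, t = 0 := by
    intro t
    induction t using LocalizedModule.induction_on with
    | h m s => rw [Subsingleton.elim m 0, LocalizedModule.zero_mk]
  rw [h a, h b]
end OE

end helpers

/-- **Proposition 3.6.** Let `M` be an `I`-relative generalized Cohen-Macaulay module with
`cd(I,M) > 0`. Then for every prime `p ∈ Supp M` properly contained in `I`, the localization
`M_p` is a Cohen-Macaulay `R_p`-module. -/
theorem proposition_3_6 [IsNoetherianRing R] (I : Ideal R)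
    (M : Type) [AddCommGroup M] [Module R M] [Module.Finite R M]
    (hgcm : IsRelGCM I M) (hpos : ∃ i : ℕ, 0 < i ∧ Nontrivial (locH I i M)) :
    ∀ p : PrimeSpectrum R, p.asIdeal < I →
      Nontrivial (LocalizedModule p.asIdeal.primeCompl M) →
      IsCMMod (Localization.AtPrime p.asIdeal) (LocalizedModule p.asIdeal.primeCompl M) := by
  intro p hpI hnt
  obtain ⟨i, hi, hni⟩ := hpos
  rcases hgcm with h | ⟨c, hcd, hfd⟩
  · exact absurd (h i hi) (not_subsingleton_iff_nontrivial.2 hni)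
  have hI : I ≠ ⊤ := by
    rintro rfl
    obtain ⟨x, hx⟩ := exists_ne (0 : locH (⊤ : Ideal R) i M)
    obtain ⟨n, hn⟩ := OE.lc_torsion (⊤ : Ideal R) i x
    refine hx ?_
    have := hn 1 (by simp [Ideal.top_pow])
    rwa [one_smul] at this
  obtain ⟨q, hq⟩ := Ideal.nonempty_minimalPrimes hI
  let q' : PrimeSpectrum R := ⟨q, hq.1.1⟩
  have hpq' : p.asIdeal < q := lt_of_lt_of_le hpI hq.1.2
  have hpq : p < q' := hpq'
  have hb : ∀ i < c, ∃ k, OE.Bd I q' i M k := by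
    intro i hi
    have := hfd.1 i hi
    obtain ⟨k, hk⟩ := OE.tors_unif I (X := locH I i M) (fun x => OE.lc_torsion I i x)
    refine ⟨k, fun a ha t => ?_⟩
    induction t using LocalizedModule.induction_on with
    | h m s => rw [LocalizedModule.smul'_mk, hk a ha, LocalizedModule.zero_mk]
  have hd := OE.cd_bound I q' hq M c (fun i hi => by
    have := hcd.2 i hi
    exact OE.F_zero_of_sub I q' i M)
  have hN : Module.Finite (Localization.AtPrime p.asIdeal)
    (LocalizedModule p.asIdeal.primeCompl M) := inferInstance
  exact (OE.main_ind I q' hq p hpq c M hd hb hnt).isCM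
end
end

section
/- Suppose cd(a,M) = ara(a,M). If there exists an a-relative system of parameters of M contained in a² which is an a-weak sequence on M, then a · H^i_a(M) = 0 for all 0 ≤ i < cd(a,M). -/
/-!
Formalization of a statement from "A theory of relative generalized Cohen-Macaulay modules"
by Divaani-Aazar, Ghanbari Doust, Tousi and Zakeri.

Throughout, `R` is a commutative Noetherian ring and `M` a finitely generated `R`-module.
Conventions used below:
* `locH I i M` is the local cohomology module `H^i_I(M)` (Mathlib's `localCohomology`).
* Conditions `cd(I,M) = c`, `ara(I,M) = n`, `f_I(M) = f`, `grade(I,M) = r` are expressed by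
  the predicates `IsCd`, `IsAra`, `IsFinDim`, `IsGrade`.
* Sequences are given as functions `Fin r → R`; `pSpan M x i = ⟨x_0,…,x_{i-1}⟩M`.
* Koszul (co)homology is defined via the explicit (co)chain complex on the `p`-element
  subsets of `{0,…,n-1}`, and the canonical map `λ^i` into local cohomology is the structure
  map (at exponent 1) into the direct limit of Koszul cohomologies of powers of the sequence,
  which is the realization of `H^i_{⟨x⟩}(M)` used in the paper (2.1(iv)).
-/

open CategoryTheory

noncomputable section

variable {R : Type} [CommRing R]

/-! ### Sequences: prefix spans, weak sequences, filter regular sequences, d-sequences -/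

/-- `pSpan M x i` is the submodule `⟨x_0, …, x_{i-1}⟩M` of `M`. -/
def pSpan (M : Type) [AddCommGroup M] [Module R M] {r : ℕ} (x : Fin r → R) (i : Fin r) :
    Submodule R M :=
  Ideal.span (x '' {j | j < i}) • (⊤ : Submodule R M)

/-- `x_1, …, x_r` is an `I`-weak sequence on `M`:
`(⟨x_1,…,x_{i-1}⟩M :_M x_i) ⊆ (⟨x_1,…,x_{i-1}⟩M :_M I)` for all `i`. -/
def IsWeakSeq (I : Ideal R) (M : Type) [AddCommGroup M] [Module R M] {r : ℕ}
    (x : Fin r → R) : Prop :=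
  ∀ i : Fin r, ∀ m : M, x i • m ∈ pSpan M x i → ∀ a ∈ I, a • m ∈ pSpan M x i

/-- `x_1, …, x_r` is an `I`-filter regular sequence on `M`:
`(⟨x_1,…,x_{i-1}⟩M :_M x_i) ⊆ ⋃ₜ (⟨x_1,…,x_{i-1}⟩M :_M I^t)` for all `i`. -/
def IsFilterRegSeq (I : Ideal R) (M : Type) [AddCommGroup M] [Module R M] {r : ℕ}
    (x : Fin r → R) : Prop :=
  ∀ i : Fin r, ∀ m : M, x i • m ∈ pSpan M x i →
    ∃ t : ℕ, ∀ a ∈ I ^ t, a • m ∈ pSpan M x i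

/-- An unconditioned `I`-filter regular sequence: filter regular in any order. -/
def IsUncondFilterRegSeq (I : Ideal R) (M : Type) [AddCommGroup M] [Module R M] {r : ℕ}
    (x : Fin r → R) : Prop :=
  ∀ σ : Equiv.Perm (Fin r), IsFilterRegSeq I M (x ∘ σ)

/-- An unconditioned `I`-weak sequence: all positive powers, in any order, form an
`I`-weak sequence. -/
def IsUncondWeakSeq (I : Ideal R) (M : Type) [AddCommGroup M] [Module R M] {r : ℕ}
    (x : Fin r → R) : Prop :=
  ∀ σ : Equiv.Perm (Fin r), ∀ α : Fin r → ℕ, (∀ k, 0 < α k) →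
    IsWeakSeq I M fun k => x (σ k) ^ α k

/-- `x_1, …, x_r` is a d-sequence on `M`:
`(⟨x_1,…,x_{i-1}⟩M :_M x_i x_j) = (⟨x_1,…,x_{i-1}⟩M :_M x_j)` for all `i ≤ j`. -/
def IsDSeq (M : Type) [AddCommGroup M] [Module R M] {r : ℕ} (x : Fin r → R) : Prop :=
  ∀ i j : Fin r, i ≤ j → ∀ m : M,
    ((x i * x j) • m ∈ pSpan M x i ↔ x j • m ∈ pSpan M x i)

/-- An u.s.d-sequence on `M`: all positive powers, in any order, form a d-sequence. -/
def IsUSDSeq (M : Type) [AddCommGroup M] [Module R M] {r : ℕ} (x : Fin r → R) : Prop :=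
  ∀ σ : Equiv.Perm (Fin r), ∀ α : Fin r → ℕ, (∀ k, 0 < α k) →
    IsDSeq M fun k => x (σ k) ^ α k

section ExtLevel

/-- pull-back map of Hom complexes induced by a chain map -/
def lyMap {P Q : ChainComplex (ModuleCat.{0} R) ℕ} (φ : P ⟶ Q) (Y : ModuleCat.{0} R) :
    Q.linearYonedaObj R Y ⟶ P.linearYonedaObj R Y :=
  (HomologicalComplex.unopFunctor (ModuleCat R) (ComplexShape.down ℕ)).map
    ((((linearYoneda R (ModuleCat R)).obj Y).rightOp.mapHomologicalComplex _).map φ).op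

lemma cat_aux {C : Type*} [Category C] {A A' B B' D D' : C} (m : A ⟶ A') (i : A ⟶ B)
    (i' : A' ⟶ B') (h : B ⟶ B') (j : D ≅ B) (j' : D' ≅ B') (k : D ⟶ D')
    (h1 : m ≫ i' = i ≫ h) (h2 : j.hom ≫ h = k ≫ j'.hom) :
    m ≫ i' ≫ j'.inv = (i ≫ j.inv) ≫ k := by
  have : h = j.inv ≫ k ≫ j'.hom := by rw [← h2]; simp
  rw [reassoc_of% h1, this]; simp

lemma isoExt_nat {X X' : ModuleCat.{0} R} (f : X ⟶ X') (P : ProjectiveResolution X)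
    (Q : ProjectiveResolution X') (φ : P.complex ⟶ Q.complex)
    (w : φ.f 0 ≫ Q.π.f 0 = P.π.f 0 ≫ f) (n : ℕ) (Y : ModuleCat.{0} R) :
    ((Ext R (ModuleCat.{0} R) n).map f.op).app Y ≫ (P.isoExt n Y).hom =
      (Q.isoExt n Y).hom ≫ HomologicalComplex.homologyMap (lyMap φ Y) n := by
  have h1 := ProjectiveResolution.isoLeftDerivedObj_inv_naturality f P Q φ w
    ((linearYoneda R (ModuleCat.{0} R)).obj Y).rightOp n
  have h2 := congrArg Quiver.Hom.unop h1
  have h3 := HomologicalComplex.homologyOp_hom_naturality (lyMap φ Y) n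
  have h4 := congrArg Quiver.Hom.unop h3
  have h5 : (P.isoExt (R := R) n Y).hom = (P.isoLeftDerivedObj ((linearYoneda R (ModuleCat.{0} R)).obj Y).rightOp n).inv.unop ≫ ((P.complex.linearYonedaObj R Y).homologyOp n).inv.unop := rfl
  have h6 : (Q.isoExt (R := R) n Y).hom = (Q.isoLeftDerivedObj ((linearYoneda R (ModuleCat.{0} R)).obj Y).rightOp n).inv.unop ≫ ((Q.complex.linearYonedaObj R Y).homologyOp n).inv.unop := rfl
  have h7 : ((Ext R (ModuleCat.{0} R) n).map f.op).app Y = ((((linearYoneda R (ModuleCat.{0} R)).obj Y).rightOp.leftDerived n).map f).unop := rfl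
  rw [h5, h6, h7]
  exact cat_aux _ _ _ _ ((Q.complex.linearYonedaObj R Y).homologyOp n).unop
    ((P.complex.linearYonedaObj R Y).homologyOp n).unop _ h2 h4

/-- cocycles -/
def cocyc (P : ChainComplex (ModuleCat.{0} R) ℕ) (i : ℕ) (Y : ModuleCat.{0} R) :
    Submodule R (P.X i ⟶ Y) where
  carrier := {f | P.d (i+1) i ≫ f = 0}
  add_mem' := by
    intro a b ha hb
    simp only [Set.mem_ofPred_eq] at *
    rw [Preadditive.comp_add, ha, hb, add_zero]
  zero_mem' := by simp
  smul_mem' := by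
    intro r a ha
    simp only [Set.mem_ofPred_eq] at *
    rw [Linear.comp_smul, ha, smul_zero]

lemma mem_cocyc {P : ChainComplex (ModuleCat.{0} R) ℕ} {i : ℕ} {Y : ModuleCat.{0} R}
  {f : P.X i ⟶ Y} : f ∈ cocyc P i Y ↔ P.d (i+1) i ≫ f = 0 := Iff.rfl

/-- coboundary predicate -/
def IsCob (P : ChainComplex (ModuleCat.{0} R) ℕ) (i : ℕ) (Y : ModuleCat.{0} R)
    (f : P.X i ⟶ Y) : Prop := ∃ (j : ℕ) (g : P.X j ⟶ Y), P.d i j ≫ g = f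

lemma cocyc_comp {P Q : ChainComplex (ModuleCat.{0} R) ℕ} (φ : P ⟶ Q) {i : ℕ}
    {Y : ModuleCat.{0} R} {f : Q.X i ⟶ Y} (hf : f ∈ cocyc Q i Y) : φ.f i ≫ f ∈ cocyc P i Y := by
  rw [mem_cocyc] at *
  rw [← φ.comm_assoc, hf, Limits.comp_zero]

lemma ker_aux (P : ChainComplex (ModuleCat.{0} R) ℕ) (i : ℕ) (Y : ModuleCat.{0} R)
    (f : P.X i ⟶ Y) : P.d ((ComplexShape.up ℕ).next i) i ≫ f = 0 ↔ P.d (i+1) i ≫ f = 0 := by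
  have : (ComplexShape.up ℕ).next i = i + 1 := by simp
  rw [this]

/-- elementary description of homology of the Hom complex -/
lemma exists_hcls (P : ChainComplex (ModuleCat.{0} R) ℕ) (i : ℕ) (Y : ModuleCat.{0} R) :
    ∃ c : cocyc P i Y →ₗ[R] (P.linearYonedaObj R Y).homology i,
      Function.Surjective c ∧ (∀ f, c f = 0 ↔ IsCob P i Y f.1) ∧
      ∀ (f : cocyc P i Y) (z : (P.linearYonedaObj R Y).cycles i),
        (P.linearYonedaObj R Y).iCycles i z = f.1 → c f = (P.linearYonedaObj R Y).homologyπ i z := by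
  let K := P.linearYonedaObj R Y
  let S := K.sc i
  have hker : ∀ f : P.X i ⟶ Y, f ∈ cocyc P i Y ↔ (show S.X₂ from f) ∈ LinearMap.ker S.g.hom := by
    intro f
    exact (ker_aux P i Y f).symm
  let c0 : cocyc P i Y →ₗ[R] LinearMap.ker S.g.hom :=
    { toFun := fun f => ⟨f.1, (hker f.1).1 f.2⟩
      map_add' := fun _ _ => rfl
      map_smul' := fun _ _ => rfl }
  let c : cocyc P i Y →ₗ[R] S.homology :=
    S.moduleCatHomologyIso.inv.hom ∘ₗ S.moduleCatLeftHomologyData.π.hom ∘ₗ c0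
  have hinj : Function.Injective S.moduleCatHomologyIso.inv.hom :=
    (ModuleCat.mono_iff_injective _).1 inferInstance
  have hsurj : Function.Surjective S.moduleCatHomologyIso.inv.hom :=
    (ModuleCat.epi_iff_surjective _).1 inferInstance
  refine ⟨c, ?_, ?_, ?_⟩
  · intro y
    obtain ⟨y1, rfl⟩ := hsurj y
    obtain ⟨y2, rfl⟩ := Submodule.mkQ_surjective _ y1
    exact ⟨⟨y2.1, (hker _).2 y2.2⟩, rfl⟩
  · intro f
    have : c f = 0 ↔ c0 f ∈ LinearMap.range S.moduleCatToCycles := by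
      rw [← Submodule.Quotient.mk_eq_zero]
      constructor
      · intro h
        exact hinj (h.trans (map_zero _).symm)
      · intro h
        exact (congrArg S.moduleCatHomologyIso.inv.hom h).trans (map_zero _)
    refine this.trans ?_
    constructor
    · rintro ⟨g, hg⟩
      exact ⟨_, g, congrArg Subtype.val hg⟩
    · rintro ⟨j, g, hg⟩
      by_cases hj : (ComplexShape.up ℕ).Rel j i
      · have := (ComplexShape.up ℕ).prev_eq' hj
        subst this
        exact ⟨g, Subtype.ext hg⟩
      · refine ⟨0, ?_⟩
        rw [map_zero]
        apply Subtype.ext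
        change 0 = f.1
        rw [← hg, P.shape _ _ hj, Limits.zero_comp]
  · intro f z hz
    have h1 := ConcreteCategory.congr_hom S.π_moduleCatCyclesIso_hom z
    have h2 := ConcreteCategory.congr_hom S.moduleCatCyclesIso_hom_i z
    have h3 : S.moduleCatCyclesIso.hom z = c0 f := Subtype.ext (h2.trans hz)
    have h4 : S.moduleCatHomologyIso.hom (S.homologyπ z) = S.moduleCatLeftHomologyData.π (c0 f) := by
      rw [← h3]; exact h1
    change S.moduleCatHomologyIso.inv (S.moduleCatLeftHomologyData.π (c0 f)) = S.homologyπ z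
    rw [← h4]
    exact ConcreteCategory.congr_hom S.moduleCatHomologyIso.hom_inv_id _

lemma exists_cyc {P : ChainComplex (ModuleCat.{0} R) ℕ} {i : ℕ} {Y : ModuleCat.{0} R}
    (f : cocyc P i Y) : ∃ z : (P.linearYonedaObj R Y).cycles i,
        (P.linearYonedaObj R Y).iCycles i z = f.1 := by
  let K := P.linearYonedaObj R Y
  let S := K.sc i
  have hker : (show S.X₂ from f.1) ∈ LinearMap.ker S.g.hom := by
    exact (ker_aux P i Y f.1).2 f.2
  exact ⟨S.moduleCatCyclesIso.inv ⟨f.1, hker⟩,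
    ConcreteCategory.congr_hom S.moduleCatCyclesIso_inv_iCycles _⟩

/-- class in `Ext`. -/
def ecls {X : ModuleCat.{0} R} (P : ProjectiveResolution X) (i : ℕ) (Y : ModuleCat.{0} R) :
    cocyc P.complex i Y →ₗ[R] ((Ext R (ModuleCat.{0} R) i).obj (Opposite.op X)).obj Y :=
  (P.isoExt i Y).inv.hom ∘ₗ (exists_hcls P.complex i Y).choose

lemma ecls_surj {X : ModuleCat.{0} R} (P : ProjectiveResolution X) (i : ℕ) (Y : ModuleCat.{0} R) :
    Function.Surjective (ecls P i Y) :=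
  Function.Surjective.comp (g := (P.isoExt (R := R) i Y).inv.hom)
    ((ModuleCat.epi_iff_surjective (P.isoExt (R := R) i Y).inv).1 inferInstance)
    (exists_hcls P.complex i Y).choose_spec.1

lemma ecls_zero {X : ModuleCat.{0} R} (P : ProjectiveResolution X) (i : ℕ) (Y : ModuleCat.{0} R)
    (f : cocyc P.complex i Y) : ecls P i Y f = 0 ↔ IsCob P.complex i Y f.1 := by
  rw [← (exists_hcls P.complex i Y).choose_spec.2.1 f]
  have hinj : Function.Injective (P.isoExt (R := R) i Y).inv.hom :=
    (ModuleCat.mono_iff_injective _).1 inferInstance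
  exact map_eq_zero_iff _ hinj

lemma ecls_map {X X' : ModuleCat.{0} R} (f : X ⟶ X') (P : ProjectiveResolution X)
    (Q : ProjectiveResolution X') (φ : P.complex ⟶ Q.complex)
    (w : φ.f 0 ≫ Q.π.f 0 = P.π.f 0 ≫ f) (i : ℕ) (Y : ModuleCat.{0} R)
    (g : cocyc Q.complex i Y) :
    ((Ext R (ModuleCat.{0} R) i).map f.op).app Y (ecls Q i Y g) =
      ecls P i Y ⟨φ.f i ≫ g.1, cocyc_comp φ g.2⟩ := by
  obtain ⟨z, hz⟩ := exists_cyc g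
  have hQ := (exists_hcls Q.complex i Y).choose_spec.2.2 g z hz
  have hz' : (P.complex.linearYonedaObj R Y).iCycles i
      (HomologicalComplex.cyclesMap (lyMap φ Y) i z) = φ.f i ≫ g.1 := by
    have := ConcreteCategory.congr_hom (HomologicalComplex.cyclesMap_i (lyMap φ Y) i) z
    refine this.trans ?_
    change (lyMap φ Y).f i ((Q.complex.linearYonedaObj R Y).iCycles i z) = _
    rw [hz]
    rfl
  have hP := (exists_hcls P.complex i Y).choose_spec.2.2 ⟨φ.f i ≫ g.1, cocyc_comp φ g.2⟩ _ hz'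
  have hn := isoExt_nat f P Q φ w i Y
  have hinj : Function.Injective (P.isoExt (R := R) i Y).hom.hom :=
    (ModuleCat.mono_iff_injective _).1 inferInstance
  apply hinj
  have e1 := ConcreteCategory.congr_hom hn (ecls Q i Y g)
  refine e1.trans ?_
  change HomologicalComplex.homologyMap (lyMap φ Y) i ((Q.isoExt (R := R) i Y).hom ((Q.isoExt i Y).inv _)) =
    (P.isoExt (R := R) i Y).hom ((P.isoExt i Y).inv _)
  rw [Iso.inv_hom_id_apply, Iso.inv_hom_id_apply, hQ, hP]
  exact (ConcreteCategory.congr_hom (HomologicalComplex.homologyπ_naturality (lyMap φ Y) i) z)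

end ExtLevel

section LC
open Opposite Limits

/-- the module `R/I^t`, in the form used by the local cohomology diagram -/
abbrev RQ (I : Ideal R) (t : ℕ) : ModuleCat.{0} R := ModuleCat.of R (R ⧸ I ^ t)

/-- its projective resolution -/
abbrev PR (I : Ideal R) (t : ℕ) : ProjectiveResolution (RQ I t) := projectiveResolution (RQ I t)

/-- projection `R/I^s → R/I^t` -/
def rq (I : Ideal R) {t s : ℕ} (h : t ≤ s) : RQ I s ⟶ RQ I t :=
  (localCohomology.ringModIdeals (localCohomology.idealPowersDiagram I)).map (homOfLE h).op

lemma rq_mk (I : Ideal R) {t s : ℕ} (h : t ≤ s) (a : R) :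
    rq I h (Ideal.Quotient.mk (I^s) a) = Ideal.Quotient.mk (I^t) a := rfl

/-- chain map lifting `rq` -/
def tr (I : Ideal R) {t s : ℕ} (h : t ≤ s) : (PR I s).complex ⟶ (PR I t).complex :=
  ProjectiveResolution.lift (rq I h) _ _

lemma tr_comm (I : Ideal R) {t s : ℕ} (h : t ≤ s) :
    (tr I h).f 0 ≫ (PR I t).π.f 0 = (PR I s).π.f 0 ≫ rq I h :=
  ProjectiveResolution.lift_commutes_zero _ _ _

/-- colimit presentation -/
def lcCocone (I : Ideal R) (i : ℕ) (Y : ModuleCat.{0} R) :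
    Cocone (localCohomology.diagram (localCohomology.idealPowersDiagram I) i ⋙
      (evaluation _ _).obj Y) :=
  have := localCohomology.hasColimitDiagram.{0, 0} (localCohomology.idealPowersDiagram I) i
  ((evaluation _ _).obj Y).mapCocone
    (colimit.cocone (localCohomology.diagram (localCohomology.idealPowersDiagram I) i))

def lcIsColimit (I : Ideal R) (i : ℕ) (Y : ModuleCat.{0} R) : IsColimit (lcCocone I i Y) :=
  have := localCohomology.hasColimitDiagram.{0, 0} (localCohomology.idealPowersDiagram I) i
  isColimitOfPreserves ((evaluation _ _).obj Y) (colimit.isColimit _)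

/-- class in local cohomology -/
def lcmk (I : Ideal R) (i : ℕ) (Y : ModuleCat.{0} R) (t : ℕ) :
    cocyc (PR I t).complex i Y →ₗ[R] (localCohomology I i).obj Y :=
  ((lcCocone I i Y).ι.app (op (op t))).hom ∘ₗ ecls (PR I t) i Y

lemma lcmk_surj (I : Ideal R) (i : ℕ) (Y : ModuleCat.{0} R) (z : (localCohomology I i).obj Y) :
    ∃ t f, lcmk I i Y t f = z := by
  obtain ⟨j, y, hy⟩ := Concrete.isColimit_exists_rep _ (lcIsColimit I i Y) z
  obtain ⟨f, hf⟩ := ecls_surj (PR I j.unop.unop) i Y y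
  refine ⟨j.unop.unop, f, ?_⟩
  rw [← hy, ← hf]
  rfl

lemma lcmk_tr (I : Ideal R) (i : ℕ) (Y : ModuleCat.{0} R) {t s : ℕ} (h : t ≤ s)
    (f : cocyc (PR I t).complex i Y) :
    lcmk I i Y s ⟨(tr I h).f i ≫ f.1, cocyc_comp _ f.2⟩ = lcmk I i Y t f := by
  have h1 := ecls_map (rq I h) (PR I s) (PR I t) (tr I h) (tr_comm I h) i Y f
  have h2 := ConcreteCategory.congr_hom
    ((lcCocone I i Y).w ((homOfLE h).op.op : op (op t) ⟶ op (op s))) (ecls (PR I t) i Y f)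
  refine Eq.trans ?_ h2
  exact congrArg ((lcCocone I i Y).ι.app (op (op s))).hom h1.symm

lemma lcmk_zero (I : Ideal R) (i : ℕ) (Y : ModuleCat.{0} R) {t : ℕ} 
    (f : cocyc (PR I t).complex i Y) :
    lcmk I i Y t f = 0 ↔ ∃ (s : ℕ) (h : t ≤ s), 
      IsCob (PR I s).complex i Y ((tr I h).f i ≫ f.1) := by
  constructor
  · intro hz
    have hz' : (lcCocone I i Y).ι.app (op (op t)) (ecls (PR I t) i Y f) = 
      (lcCocone I i Y).ι.app (op (op t)) 0 := by
      rw [map_zero]; exact hz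
    obtain ⟨k, p, q, hk⟩ := (Concrete.isColimit_rep_eq_iff_exists _ (lcIsColimit I i Y) _ _).1 hz'
    have h : t ≤ k.unop.unop := leOfHom p.unop.unop
    refine ⟨k.unop.unop, h, ?_⟩
    have h1 := ecls_map (rq I h) (PR I k.unop.unop) (PR I t) (tr I h) (tr_comm I h) i Y f
    refine (ecls_zero (PR I k.unop.unop) i Y ⟨(tr I h).f i ≫ f.1, cocyc_comp _ f.2⟩).1 ?_
    rw [← h1]
    rw [map_zero] at hk
    exact hk
  · rintro ⟨s, h, hs⟩
    rw [← lcmk_tr I i Y h]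
    have := (ecls_zero (PR I s) i Y ⟨(tr I h).f i ≫ f.1, cocyc_comp _ f.2⟩).2 hs
    exact (congrArg ((lcCocone I i Y).ι.app (op (op s))).hom this).trans (map_zero _)

end LC

section Alg

/-- `I`-power torsion modules. -/
def IsTors (I : Ideal R) (N : Type) [AddCommGroup N] [Module R N] : Prop :=
  ∀ n : N, ∃ t : ℕ, ∀ r ∈ I ^ t, r • n = 0

/-- the `I`-power torsion submodule. -/
def gam (I : Ideal R) (E : Type) [AddCommGroup E] [Module R E] : Submodule R E where
  carrier := {e | ∃ t : ℕ, ∀ r ∈ I ^ t, r • e = 0}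
  zero_mem' := ⟨0, fun r _ => smul_zero r⟩
  add_mem' := by
    rintro a b ⟨t, ht⟩ ⟨s, hs⟩
    refine ⟨t + s, fun r hr => ?_⟩
    rw [smul_add, ht r (Ideal.pow_le_pow_right (Nat.le_add_right t s) hr),
      hs r (Ideal.pow_le_pow_right (Nat.le_add_left s t) hr), add_zero]
  smul_mem' := by
    rintro c a ⟨t, ht⟩
    refine ⟨t, fun r hr => ?_⟩
    rw [smul_comm, ht r hr, smul_zero]

lemma gam_tors (I : Ideal R) (E : Type) [AddCommGroup E] [Module R E] : IsTors I (gam I E) := by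
  rintro ⟨e, t, ht⟩
  exact ⟨t, fun r hr => Subtype.ext (ht r hr)⟩

lemma ext_inj (E J Q : Type) [AddCommGroup E] [Module R E] [AddCommGroup J] [Module R J]
    [AddCommGroup Q] [Module R Q] (hE : Injective (ModuleCat.of R E)) (f : J →ₗ[R] Q)
    (g : J →ₗ[R] E) (h : LinearMap.ker f ≤ LinearMap.ker g) :
    ∃ k : Q →ₗ[R] E, ∀ j, k (f j) = g j := by
  let f' : (J ⧸ LinearMap.ker f) →ₗ[R] Q := (LinearMap.ker f).liftQ f le_rfl
  let g' : (J ⧸ LinearMap.ker f) →ₗ[R] E := (LinearMap.ker f).liftQ g h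
  have hf' : Function.Injective f' := by
    rw [← LinearMap.ker_eq_bot]
    exact Submodule.ker_liftQ_eq_bot _ _ _ le_rfl
  have : Mono (ModuleCat.ofHom f') := (ModuleCat.mono_iff_injective _).2 hf'
  refine ⟨(Injective.factorThru (ModuleCat.ofHom g') (ModuleCat.ofHom f')).hom, fun j => ?_⟩
  exact ConcreteCategory.congr_hom
    (Injective.comp_factorThru (ModuleCat.ofHom g') (ModuleCat.ofHom f')) (Submodule.Quotient.mk j)

lemma gam_baer [IsNoetherianRing R] (I : Ideal R) (E : Type) [AddCommGroup E] [Module R E]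
    (hE : Injective (ModuleCat.of R E)) : Module.Baer R (gam I E) := by
  intro J g
  -- uniform torsion bound
  obtain ⟨t, ht⟩ : ∃ t : ℕ, ∀ j : J, ∀ r ∈ I ^ t, r • g j = 0 := by
    let F : ℕ →o Submodule R J :=
      { toFun := fun t =>
          { carrier := {j | ∀ r ∈ I ^ t, r • g j = 0}
            zero_mem' := fun r _ => by simp
            add_mem' := fun {a b} ha hb r hr => by
              rw [map_add, smul_add, ha r hr, hb r hr, add_zero]
            smul_mem' := fun c a ha r hr => by
              rw [map_smul, smul_comm, ha r hr, smul_zero] }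
        monotone' := fun a b hab j hj r hr => hj r (Ideal.pow_le_pow_right hab hr) }
    obtain ⟨n, hn⟩ := monotone_stabilizes_iff_noetherian.2 (inferInstance : IsNoetherian R J) F
    refine ⟨n, fun j => ?_⟩
    obtain ⟨s, hs⟩ := gam_tors I E (g j)
    have h1 : j ∈ F (max n s) := fun r hr => hs r (Ideal.pow_le_pow_right (le_max_right n s) hr)
    rw [← hn _ (le_max_left n s)] at h1
    exact h1
  obtain ⟨k, hk⟩ := Ideal.exists_pow_inf_eq_pow_smul (M := R) I J
  have hk' := hk (k + t) (Nat.le_add_right k t)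
  let f : J →ₗ[R] R ⧸ I ^ (k + t) := (Submodule.mkQ (I ^ (k+t))) ∘ₗ J.subtype
  have hker : LinearMap.ker f ≤ LinearMap.ker ((gam I E).subtype ∘ₗ g) := by
    intro j hj
    have hj1 : j.1 ∈ I ^ (k + t) := by
      have : Submodule.Quotient.mk (p := I ^ (k+t)) j.1 = 0 := hj
      rwa [Submodule.Quotient.mk_eq_zero] at this
    have hj2 : j.1 ∈ I ^ t • J := by
      have : j.1 ∈ I ^ (k + t) • (⊤ : Submodule R R) ⊓ J := by
        refine ⟨?_, j.2⟩
        simpa using hj1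
      rw [hk', Nat.add_sub_cancel_left] at this
      exact Submodule.smul_mono le_rfl inf_le_right this
    have key : ∀ y ∈ I ^ t • J, ∀ hy : y ∈ J, g ⟨y, hy⟩ = 0 := by
      intro y hy
      induction hy using Submodule.smul_induction_on' with
      | smul r hr n hn =>
        intro hy
        have := ht ⟨n, hn⟩ r hr
        rw [← map_smul] at this
        exact this
      | add a ha b hb iha ihb =>
        intro hy
        have ha' := Submodule.smul_le_right (I := I ^ t) ha
        have hb' := Submodule.smul_le_right (I := I ^ t) hb
        have := congrArg₂ (· + ·) (iha ha') (ihb hb')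
        simp only [← map_add, add_zero] at this
        exact this
    rw [LinearMap.mem_ker]
    simp only [LinearMap.comp_apply]
    rw [key j.1 hj2 j.2, map_zero]
  obtain ⟨h, hh⟩ := ext_inj E J (R ⧸ I ^ (k + t)) hE f _ hker
  refine ⟨LinearMap.codRestrict (gam I E) (h ∘ₗ Submodule.mkQ (I ^ (k+t))) ?_, ?_⟩
  · intro c
    refine ⟨k + t, fun r hr => ?_⟩
    rw [← map_smul, LinearMap.comp_apply, Submodule.mkQ_apply,
      (Submodule.Quotient.mk_eq_zero _).2, map_zero]
    exact Ideal.mul_mem_right _ _ hr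
  · intro x mem
    exact Subtype.ext (hh ⟨x, mem⟩)

lemma exists_emb [IsNoetherianRing R] (I : Ideal R) (N : Type) [AddCommGroup N] [Module R N]
    (hN : IsTors I N) : ∃ (E : Type) (_ : AddCommGroup E) (_ : Module R E) (ι : N →ₗ[R] E),
      Function.Injective ι ∧ IsTors I E ∧ Injective (ModuleCat.of R E) := by
  let E0 := Injective.under (ModuleCat.of R N)
  let ι0 : N →ₗ[R] E0 := (Injective.ι (ModuleCat.of R N)).hom
  have hι0 : Function.Injective ι0 :=
    (ModuleCat.mono_iff_injective (Injective.ι (ModuleCat.of R N))).1 inferInstance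
  have hE0 : Injective (ModuleCat.of R E0) := inferInstanceAs (Injective E0)
  have hm : ∀ n, ι0 n ∈ gam I E0 := by
    intro n
    obtain ⟨t, ht⟩ := hN n
    exact ⟨t, fun r hr => by rw [← map_smul, ht r hr, map_zero]⟩
  refine ⟨gam I E0, inferInstance, inferInstance, ι0.codRestrict _ hm, ?_, gam_tors I E0, ?_⟩
  · intro a b hab
    exact hι0 (congrArg Subtype.val hab)
  · have := (gam_baer I E0 hE0).injective
    exact Module.injective_object_of_injective_module R _

lemma lift_of_range {P : ModuleCat.{0} R} [Projective P] {N E : Type} [AddCommGroup N] [Module R N]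
    [AddCommGroup E] [Module R E] (ι : N →ₗ[R] E) (k : P ⟶ ModuleCat.of R E)
    (hk : ∀ p, k p ∈ LinearMap.range ι) :
    ∃ k' : P ⟶ ModuleCat.of R N, k' ≫ ModuleCat.ofHom ι = k := by
  let e : ModuleCat.of R N ⟶ ModuleCat.of R (LinearMap.range ι) := ModuleCat.ofHom ι.rangeRestrict
  have : Epi e := (ModuleCat.epi_iff_surjective _).2 ι.surjective_rangeRestrict
  let k1 : P ⟶ ModuleCat.of R (LinearMap.range ι) := ModuleCat.ofHom (k.hom.codRestrict _ hk)
  refine ⟨Projective.factorThru k1 e, ?_⟩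
  ext p
  exact congrArg Subtype.val (ConcreteCategory.congr_hom (Projective.factorThru_comp k1 e) p)

lemma tors_cob {X : ModuleCat.{0} R} (P : ProjectiveResolution X) (r : R) (hr : ∀ x : X, r • x = 0)
    {i : ℕ} {Y : ModuleCat.{0} R} {f : P.complex.X i ⟶ Y} (hf : f ∈ cocyc P.complex i Y) :
    IsCob P.complex i Y (r • f) := by
  have hz : (r • 𝟙 P.complex) ≫ P.π = 0 := by
    rw [Linear.smul_comp, Category.id_comp]
    apply HomologicalComplex.to_single_hom_ext
    ext p
    exact hr (P.π.f 0 p)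
  let H := ProjectiveResolution.liftHomotopyZero _ hz
  have hc := H.comm i
  refine ⟨_, H.hom ((ComplexShape.down ℕ).next i) i ≫ f, ?_⟩
  have h1 : r • f = (r • 𝟙 P.complex : P.complex ⟶ P.complex).f i ≫ f := by
    simp
  rw [h1, hc]
  rw [Homotopy.prevD_chainComplex]
  simp only [HomologicalComplex.zero_f, add_zero, Preadditive.add_comp, Category.assoc]
  rw [mem_cocyc.1 hf, Limits.comp_zero, add_zero]
  rw [← Category.assoc]
  rfl

lemma inj_cob {X : ModuleCat.{0} R} (P : ProjectiveResolution X) {i : ℕ} {Y : ModuleCat.{0} R}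
    [Injective Y] {f : P.complex.X (i+1) ⟶ Y} (hf : f ∈ cocyc P.complex (i+1) Y) :
    ∃ g : P.complex.X i ⟶ Y, P.complex.d (i+1) i ≫ g = f :=
  ⟨(P.exact_succ i).descToInjective f hf, (P.exact_succ i).comp_descToInjective f hf⟩

lemma zero_cocyc {X : ModuleCat.{0} R} (P : ProjectiveResolution X) {Y : ModuleCat.{0} R}
    {f : P.complex.X 0 ⟶ Y} (hf : f ∈ cocyc P.complex 0 Y) :
    ∃ u : X ⟶ Y, P.π.f 0 ≫ u = f := by
  have : Epi (ShortComplex.mk _ _ P.complex_d_comp_π_f_zero).g := inferInstanceAs (Epi (P.π.f 0))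
  exact ⟨P.exact₀.desc f hf, P.exact₀.g_desc f hf⟩

end Alg

section Main

lemma IsCob.precomp {P Q : ChainComplex (ModuleCat.{0} R) ℕ} (φ : P ⟶ Q) {i : ℕ}
    {Y : ModuleCat.{0} R} {f : Q.X i ⟶ Y} (h : IsCob Q i Y f) : IsCob P i Y (φ.f i ≫ f) := by
  obtain ⟨j, g, rfl⟩ := h
  exact ⟨j, φ.f j ≫ g, by rw [← Category.assoc, ← Category.assoc, φ.comm]⟩

lemma IsCob.postcomp {P : ChainComplex (ModuleCat.{0} R) ℕ} {i : ℕ}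
    {Y Z : ModuleCat.{0} R} {f : P.X i ⟶ Y} (h : IsCob P i Y f) (u : Y ⟶ Z) :
    IsCob P i Z (f ≫ u) := by
  obtain ⟨j, g, rfl⟩ := h
  exact ⟨j, g ≫ u, by rw [Category.assoc]⟩

lemma IsCob.succ {P : ChainComplex (ModuleCat.{0} R) ℕ} {i : ℕ}
    {Y : ModuleCat.{0} R} {f : P.X (i+1) ⟶ Y} (h : IsCob P (i+1) Y f) :
    ∃ g : P.X i ⟶ Y, P.d (i+1) i ≫ g = f := by
  obtain ⟨j, g, rfl⟩ := h
  by_cases hj : j = i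
  · subst hj
    exact ⟨g, rfl⟩
  · refine ⟨0, ?_⟩
    rw [P.shape (i+1) j, Limits.zero_comp, Limits.comp_zero]
    simp only [ComplexShape.down_Rel]
    omega

lemma IsCob.zero {P : ChainComplex (ModuleCat.{0} R) ℕ}
    {Y : ModuleCat.{0} R} {f : P.X 0 ⟶ Y} (h : IsCob P 0 Y f) : f = 0 := by
  obtain ⟨j, g, rfl⟩ := h
  rw [P.shape 0 j, Limits.zero_comp]
  simp

lemma lc_tors (I : Ideal R) (i : ℕ) (Y : ModuleCat.{0} R) (z : (localCohomology I i).obj Y) :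
    ∃ t : ℕ, ∀ r ∈ I ^ t, r • z = 0 := by
  obtain ⟨t, f, rfl⟩ := lcmk_surj I i Y z
  refine ⟨t, fun r hr => ?_⟩
  rw [← map_smul, lcmk_zero]
  refine ⟨t, le_rfl, IsCob.precomp _ (tors_cob (PR I t) r ?_ f.2)⟩
  intro x
  obtain ⟨a, rfl⟩ := Ideal.Quotient.mk_surjective x
  exact Ideal.Quotient.eq_zero_iff_mem.2 (Ideal.mul_mem_right _ _ hr)

/-- augmentation -/
def aug (I : Ideal R) (s : ℕ) : (PR I s).complex.X 0 ⟶ RQ I s := (PR I s).π.f 0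

lemma d_aug (I : Ideal R) (s : ℕ) : (PR I s).complex.d (0+1) 0 ≫ aug I s = 0 :=
  (PR I s).complex_d_comp_π_f_zero

lemma tr_aug (I : Ideal R) {t s : ℕ} (h : t ≤ s) :
    (tr I h).f 0 ≫ aug I t = aug I s ≫ rq I h := tr_comm I h

lemma zero_cocyc_aug (I : Ideal R) (s : ℕ) {Y : ModuleCat.{0} R}
    {f : (PR I s).complex.X 0 ⟶ Y} (hf : f ∈ cocyc (PR I s).complex 0 Y) :
    ∃ u : RQ I s ⟶ Y, aug I s ≫ u = f := zero_cocyc _ hf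

/-- the core of the diagram chase in `vanish` -/
lemma vanish_core {P Q : ChainComplex (ModuleCat.{0} R) ℕ} (φ : P ⟶ Q) (j : ℕ) [Projective (P.X j)]
    {N E : Type} [AddCommGroup N] [Module R N] [AddCommGroup E] [Module R E] (ι : N →ₗ[R] E)
    (hι : Function.Injective ι) (f : Q.X (j+1) ⟶ ModuleCat.of R N)
    (g : Q.X j ⟶ ModuleCat.of R E) (hg : Q.d (j+1) j ≫ g = f ≫ ModuleCat.ofHom ι)
    (e : P.X j ⟶ ModuleCat.of R E) (he : e ∈ cocyc P j _)
    (h : φ.f j ≫ g ≫ ModuleCat.ofHom (LinearMap.range ι).mkQ =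
      e ≫ ModuleCat.ofHom (LinearMap.range ι).mkQ) :
    IsCob P (j+1) _ (φ.f (j+1) ≫ f) := by
  obtain ⟨k, hk⟩ := lift_of_range ι (φ.f j ≫ g - e) (by
    intro p
    rw [← Submodule.Quotient.mk_eq_zero]
    have := ConcreteCategory.congr_hom h p
    have h2 : (LinearMap.range ι).mkQ ((φ.f j ≫ g) p) = (LinearMap.range ι).mkQ (e p) := this
    change (LinearMap.range ι).mkQ ((φ.f j ≫ g) p - e p) = 0
    rw [map_sub, h2, sub_self])
  refine ⟨j, k, ?_⟩
  have : Mono (ModuleCat.ofHom ι) := (ModuleCat.mono_iff_injective _).2 hι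
  rw [← cancel_mono (ModuleCat.ofHom ι), Category.assoc, hk, Preadditive.comp_sub,
    mem_cocyc.1 he, sub_zero, ← Category.assoc, ← φ.comm, Category.assoc, hg, Category.assoc]

lemma vanish [IsNoetherianRing R] (I : Ideal R) (j : ℕ) :
    ∀ (N : Type) [AddCommGroup N] [Module R N] (_ : IsTors I N) (t : ℕ)
      (f : (PR I t).complex.X (j+1) ⟶ ModuleCat.of R N) (_ : f ∈ cocyc (PR I t).complex (j+1) _),
      ∃ (s : ℕ) (h : t ≤ s), IsCob (PR I s).complex (j+1) _ ((tr I h).f (j+1) ≫ f) := by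
  induction j with
  | zero =>
    intro N _ _ hN t f hf
    obtain ⟨E, _, _, ι, hι, hE, hE'⟩ := exists_emb I N hN
    obtain ⟨g, hg⟩ := inj_cob (PR I t) (f := f ≫ ModuleCat.ofHom ι)
      (mem_cocyc.2 (by rw [← Category.assoc, mem_cocyc.1 hf, Limits.zero_comp]))
    have hgc : g ≫ ModuleCat.ofHom (LinearMap.range ι).mkQ ∈ cocyc (PR I t).complex 0 _ := by
      rw [mem_cocyc, ← Category.assoc, hg]
      ext p
      exact (Submodule.Quotient.mk_eq_zero _).2 ⟨f p, rfl⟩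
    obtain ⟨u, hu⟩ := zero_cocyc_aug _ _ hgc
    obtain ⟨e0, he0⟩ := Submodule.mkQ_surjective (LinearMap.range ι)
      (u (Ideal.Quotient.mk (I^t) 1))
    obtain ⟨s0, hs0⟩ := hE e0
    have hts : t ≤ max t s0 := le_max_left _ _
    let v : RQ I (max t s0) ⟶ ModuleCat.of R E := ModuleCat.ofHom
      ((I ^ (max t s0)).liftQ (LinearMap.toSpanSingleton R E e0) (fun r hr => by
        rw [LinearMap.mem_ker, LinearMap.toSpanSingleton_apply]
        exact hs0 r (Ideal.pow_le_pow_right (le_max_right _ _) hr)))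
    have hv : v ≫ ModuleCat.ofHom (LinearMap.range ι).mkQ = rq I hts ≫ u := by
      refine ModuleCat.hom_ext (LinearMap.ext fun y => ?_)
      obtain ⟨a, rfl⟩ := Ideal.Quotient.mk_surjective y
      change (LinearMap.range ι).mkQ (a • e0) = u (Ideal.Quotient.mk (I^t) a)
      rw [map_smul, he0, ← map_smul]
      congr 1
      change Ideal.Quotient.mk (I^t) (a * 1) = _
      rw [mul_one]
    refine ⟨max t s0, hts, vanish_core (tr I hts) 0 ι hι f g hg (aug I _ ≫ v) ?_ ?_⟩
    · rw [mem_cocyc, ← Category.assoc, d_aug, Limits.zero_comp]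
    · rw [← hu, Category.assoc, hv, ← Category.assoc, tr_aug, Category.assoc]
  | succ j ih =>
    intro N _ _ hN t f hf
    obtain ⟨E, _, _, ι, hι, hE, hE'⟩ := exists_emb I N hN
    obtain ⟨g, hg⟩ := inj_cob (PR I t) (f := f ≫ ModuleCat.ofHom ι)
      (mem_cocyc.2 (by rw [← Category.assoc, mem_cocyc.1 hf, Limits.zero_comp]))
    have hgc : g ≫ ModuleCat.ofHom (LinearMap.range ι).mkQ ∈ cocyc (PR I t).complex (j+1) _ := by
      rw [mem_cocyc, ← Category.assoc, hg]
      ext p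
      exact (Submodule.Quotient.mk_eq_zero _).2 ⟨f p, rfl⟩
    have hC : IsTors I (E ⧸ LinearMap.range ι) := by
      intro y
      obtain ⟨e, rfl⟩ := Submodule.mkQ_surjective _ y
      obtain ⟨t, ht⟩ := hE e
      exact ⟨t, fun r hr => by rw [← map_smul, ht r hr, map_zero]⟩
    obtain ⟨s, hts, hs⟩ := ih _ hC t _ hgc
    obtain ⟨h, hh⟩ := hs.succ
    obtain ⟨h', hh'⟩ := lift_of_range (LinearMap.range ι).mkQ h (fun p => by
      rw [Submodule.range_mkQ]; trivial)
    refine ⟨s, hts, vanish_core (tr I hts) (j+1) ι hι f g hg ((PR I s).complex.d (j+1) j ≫ h') ?_ ?_⟩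
    · rw [mem_cocyc, ← Category.assoc, HomologicalComplex.d_comp_d, Limits.zero_comp]
    · rw [← hh, Category.assoc, hh']

lemma trick (I : Ideal R) (H : Type) [AddCommGroup H] [Module R H] (hH : IsTors I H) (x : R)
    (hx : x ∈ I ^ 2) (h : ∀ z : H, x • z = 0 → ∀ r ∈ I, r • z = 0) :
    ∀ r ∈ I, ∀ z : H, r • z = 0 := by
  have h2 : ∀ z : H, x • x • z = 0 → x • z = 0 := by
    intro z hz
    have h3 : ∀ r ∈ I, ∀ s ∈ I, s • r • z = 0 := by
      intro r hr s hs
      refine h _ ?_ s hs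
      rw [smul_comm]
      exact h _ hz r hr
    have h4 : I ^ 2 ≤ LinearMap.ker (LinearMap.toSpanSingleton R H z) := by
      rw [pow_two, Ideal.mul_le]
      intro r hr s hs
      rw [LinearMap.mem_ker, LinearMap.toSpanSingleton_apply, mul_smul]
      exact h3 s hs r hr
    exact h4 hx
  have h5 : ∀ t : ℕ, ∀ z : H, x ^ t • z = 0 → x • z = 0 := by
    intro t
    induction t with
    | zero => intro z hz; rw [pow_zero, one_smul] at hz; rw [hz, smul_zero]
    | succ t ih =>
      intro z hz
      rw [pow_succ, mul_smul] at hz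
      exact h2 z (ih _ hz)
  intro r hr z
  obtain ⟨t, ht⟩ := hH z
  refine h z (h5 t z (ht _ (Ideal.pow_mem_pow ?_ t))) r hr
  exact Ideal.pow_le_self two_ne_zero hx


lemma lcmk_cob (I : Ideal R) (i : ℕ) (Y : ModuleCat.{0} R) {t : ℕ}
    (f : cocyc (PR I t).complex i Y) (h : IsCob (PR I t).complex i Y f.1) :
    lcmk I i Y t f = 0 :=
  (lcmk_zero I i Y f).2 ⟨t, le_rfl, IsCob.precomp _ h⟩

lemma step_succ [IsNoetherianRing R] (I : Ideal R) (j : ℕ) (M : Type) [AddCommGroup M] [Module R M]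
    (x : R) (hker : ∀ m : M, x • m = 0 → ∀ r ∈ I, r • m = 0)
    (ih : ∀ r ∈ I, ∀ z : locH I j (M ⧸ LinearMap.range (LinearMap.lsmul R M x)), r • z = 0)
    (z : locH I (j+1) M) (hz : x • z = 0) (r : R) (hr : r ∈ I) : r • z = 0 := by
  obtain ⟨t0, f0, rfl⟩ := lcmk_surj I (j+1) _ z
  rw [← map_smul, lcmk_zero] at hz
  obtain ⟨t, ht, hcob⟩ := hz
  rw [← lcmk_tr I (j+1) _ ht]
  obtain ⟨g, hg⟩ := hcob.succ
  generalize hf : (⟨(tr I ht).f (j+1) ≫ f0.1, cocyc_comp _ f0.2⟩ :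
    cocyc (PR I t).complex (j+1) (ModuleCat.of R M)) = f
  have hg' : (PR I t).complex.d (j+1) j ≫ g = x • f.1 := by
    rw [hg, ← hf]
    exact Linear.comp_smul _ _ _ ((tr I ht).f (j+1)) x f0.1
  clear hg hcob hf
  let X : M →ₗ[R] M := LinearMap.lsmul R M x
  let π : ModuleCat.of R M ⟶ ModuleCat.of R (M ⧸ LinearMap.range X) :=
    ModuleCat.ofHom (LinearMap.range X).mkQ
  have hgc : g ≫ π ∈ cocyc (PR I t).complex j _ := by
    rw [mem_cocyc, ← Category.assoc, hg']
    ext p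
    exact (Submodule.Quotient.mk_eq_zero _).2 ⟨f.1 p, rfl⟩
  have h1 := ih r hr (lcmk I j _ t ⟨g ≫ π, hgc⟩)
  rw [← map_smul, lcmk_zero] at h1
  obtain ⟨s, hs, j', h, hh⟩ := h1
  replace hh : (PR I s).complex.d j j' ≫ h = (tr I hs).f j ≫ (r • (g ≫ π)) := hh
  obtain ⟨h', hh'⟩ := lift_of_range (LinearMap.range X).mkQ h (fun p => by
      rw [Submodule.range_mkQ]; trivial)
  obtain ⟨k, hk⟩ := lift_of_range X
    (r • ((tr I hs).f j ≫ g) - (PR I s).complex.d j j' ≫ h') (by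
      intro p
      rw [← Submodule.Quotient.mk_eq_zero]
      have h2 : (r • ((tr I hs).f j ≫ g) - (PR I s).complex.d j j' ≫ h') ≫ π = 0 := by
        rw [Preadditive.sub_comp, Category.assoc, hh', hh]
        simp
      exact ConcreteCategory.congr_hom h2 p)
  have he0X : (r • ((tr I hs).f (j+1) ≫ f.1) - (PR I s).complex.d (j+1) j ≫ k) ≫
      ModuleCat.ofHom X = 0 := by
    have hX : ∀ {W : ModuleCat.{0} R} (u : W ⟶ ModuleCat.of R M), u ≫ ModuleCat.ofHom X = x • u := by
      intro W u
      ext p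
      rfl
    rw [Preadditive.sub_comp, Category.assoc, hk, hX, Preadditive.comp_sub,
      HomologicalComplex.d_comp_d_assoc, Limits.zero_comp, sub_zero, Linear.comp_smul,
      ← Category.assoc, ← (tr I hs).comm, Category.assoc, hg', Linear.comp_smul, smul_comm, sub_self]
  obtain ⟨e, he⟩ := lift_of_range (LinearMap.ker X).subtype
    (r • ((tr I hs).f (j+1) ≫ f.1) - (PR I s).complex.d (j+1) j ≫ k) (by
      intro p
      rw [Submodule.range_subtype]
      exact ConcreteCategory.congr_hom he0X p)
  have hdk : (PR I s).complex.d (j+1) j ≫ k ∈ cocyc (PR I s).complex (j+1) _ := by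
    rw [mem_cocyc, HomologicalComplex.d_comp_d_assoc, Limits.zero_comp]
  have htf := cocyc_comp (tr I hs) f.2
  have hec : e ∈ cocyc (PR I s).complex (j+1) _ := by
    have : Mono (ModuleCat.ofHom (LinearMap.ker X).subtype) :=
      (ModuleCat.mono_iff_injective _).2 (Submodule.injective_subtype _)
    rw [mem_cocyc, ← cancel_mono (ModuleCat.ofHom (LinearMap.ker X).subtype), Category.assoc, he,
      Limits.zero_comp]
    exact mem_cocyc.1 (Submodule.sub_mem _ (Submodule.smul_mem _ r htf) hdk)
  have htors : IsTors I (LinearMap.ker X) := by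
    rintro ⟨n, hn⟩
    refine ⟨1, fun r hr => Subtype.ext (hker n hn r ?_)⟩
    rwa [pow_one] at hr
  obtain ⟨u, hu, hucob⟩ := vanish I j _ htors s e hec
  have h3 : lcmk I (j+1) (ModuleCat.of R M) s
      ((r • ⟨_, htf⟩ : cocyc (PR I s).complex (j+1) _) - ⟨_, hdk⟩) = 0 := by
    rw [lcmk_zero]
    refine ⟨u, hu, ?_⟩
    have h4 := hucob.postcomp (ModuleCat.ofHom (LinearMap.ker X).subtype)
    rw [Category.assoc, he] at h4
    exact h4
  rw [map_sub, map_smul, lcmk_tr I (j+1) _ hs, lcmk_cob I _ _ ⟨_, hdk⟩ ⟨j, k, rfl⟩, sub_zero] at h3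
  exact h3

lemma step_zero (I : Ideal R) (M : Type) [AddCommGroup M] [Module R M]
    (x : R) (hker : ∀ m : M, x • m = 0 → ∀ r ∈ I, r • m = 0)
    (z : locH I 0 M) (hz : x • z = 0) (r : R) (hr : r ∈ I) : r • z = 0 := by
  obtain ⟨t0, f0, rfl⟩ := lcmk_surj I 0 _ z
  rw [← map_smul, lcmk_zero] at hz
  obtain ⟨t, ht, hcob⟩ := hz
  rw [← map_smul, lcmk_zero]
  refine ⟨t, ht, 0, 0, ?_⟩
  rw [Limits.comp_zero]
  ext p
  exact (hker (f0.1 ((tr I ht).f 0 p)) (ConcreteCategory.congr_hom hcob.zero p) r hr).symm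

lemma pSpan_zero (M : Type) [AddCommGroup M] [Module R M] {n : ℕ} (x : Fin (n+1) → R) :
    pSpan M x 0 = ⊥ := by
  simp [pSpan]

lemma pSpan_tail (M : Type) [AddCommGroup M] [Module R M] {n : ℕ} (x : Fin (n+1) → R) (k : Fin n)
    (m : M) :
    (LinearMap.range (LinearMap.lsmul R M (x 0))).mkQ m ∈
      pSpan (M ⧸ LinearMap.range (LinearMap.lsmul R M (x 0))) (fun i => x i.succ) k ↔
    m ∈ pSpan M x k.succ := by
  set L := LinearMap.range (LinearMap.lsmul R M (x 0)) with hL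
  have hset : x '' {j | j < k.succ} = insert (x 0) ((fun i : Fin n => x i.succ) '' {j | j < k}) := by
    ext y
    simp only [Set.mem_image, Set.mem_ofPred_eq, Set.mem_insert_iff]
    constructor
    · rintro ⟨j, hj, rfl⟩
      induction j using Fin.cases with
      | zero => exact Or.inl rfl
      | succ j => exact Or.inr ⟨j, Fin.succ_lt_succ_iff.1 hj, rfl⟩
    · rintro (rfl | ⟨j, hj, rfl⟩)
      · exact ⟨0, Fin.succ_pos k, rfl⟩
      · exact ⟨j.succ, Fin.succ_lt_succ_iff.2 hj, rfl⟩
  have hL' : L = Ideal.span {x 0} • (⊤ : Submodule R M) := by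
    rw [Submodule.ideal_span_singleton_smul]
    ext y
    simp [hL, Submodule.mem_smul_pointwise_iff_exists]
  have h1 : pSpan M x k.succ =
      L ⊔ Ideal.span ((fun i : Fin n => x i.succ) '' {j | j < k}) • (⊤ : Submodule R M) := by
    rw [pSpan, hset, Ideal.span_insert, Submodule.sup_smul, ← hL']
  have h2 : pSpan (M ⧸ L) (fun i => x i.succ) k = Submodule.map L.mkQ
      (Ideal.span ((fun i : Fin n => x i.succ) '' {j | j < k}) • (⊤ : Submodule R M)) := by
    rw [pSpan, Submodule.map_smul'', Submodule.map_top, Submodule.range_mkQ]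
  rw [h1, h2, ← Submodule.comap_map_mkQ]
  rfl

lemma main_aux [IsNoetherianRing R] (I : Ideal R) (i : ℕ) :
    ∀ (n : ℕ) (M : Type) [AddCommGroup M] [Module R M] (x : Fin n → R)
      (_ : ∀ j, x j ∈ I ^ 2) (_ : IsWeakSeq I M x) (_ : i < n),
      ∀ r ∈ I, ∀ z : locH I i M, r • z = 0 := by
  induction i with
  | zero =>
    intro n M _ _ x hx hw hn
    obtain ⟨n, rfl⟩ : ∃ m, n = m + 1 := ⟨n - 1, by omega⟩
    refine trick I _ (lc_tors I 0 _) (x 0) (hx 0) (step_zero I M (x 0) ?_)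
    intro m hm r hr
    have := hw 0 m
    rw [pSpan_zero] at this
    exact this hm r hr
  | succ i ih =>
    intro n M _ _ x hx hw hn
    obtain ⟨n, rfl⟩ : ∃ m, n = m + 1 := ⟨n - 1, by omega⟩
    refine trick I _ (lc_tors I (i+1) _) (x 0) (hx 0) (step_succ I i M (x 0) ?_ ?_)
    · intro m hm r hr
      have := hw 0 m
      rw [pSpan_zero] at this
      exact this hm r hr
    · refine ih n _ (fun k => x k.succ) (fun k => hx _) ?_ (by omega)
      intro k c hc a ha
      obtain ⟨m, rfl⟩ := Submodule.mkQ_surjective _ c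
      rw [← map_smul, pSpan_tail] at hc ⊢
      exact hw k.succ m hc a ha

end Main

/-- **Theorem 4.1, (ii) ⟹ (iii).** Suppose `cd(I,M) = ara(I,M)`. If there exists an
`I`-relative system of parameters of `M` contained in `I²` which is an `I`-weak sequence on
`M`, then `I • H^i_I(M) = 0` for all `0 ≤ i < cd(I,M)`. -/
theorem theorem_4_1_ii_iii [IsNoetherianRing R] (I : Ideal R)
    (M : Type) [AddCommGroup M] [Module R M] [Module.Finite R M]
    (c : ℕ) (hc : IsCd I M c) (ha : IsAra I M c)
    (x : Fin c → R) (hx : IsRsop I M x) (hx2 : ∀ j, x j ∈ I ^ 2)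
    (hw : IsWeakSeq I M x) :
    ∀ i : ℕ, i < c → ∀ r ∈ I, ∀ m : locH I i M, r • m = 0 := by
  intro i hi
  exact main_aux I i c M x hx2 hw hi
end
end
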